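/- Let μ ∈ (0,1] and let 2 < q ≤ ∞ and 2 ≤ r ≤ ∞ satisfy 2/q = 2(1/2 − 1/r). There is a constant C = C(q,r), independent of μ and λ, such that for every λ > 0 and every Schwartz function f on ℝ², (∫_ℝ ‖S_{μ,2}(t) P_λ f‖_{L^r(ℝ²)}^q dt)^{1/q} ≤ C ( μ^{-1/2} ⟨√μ λ⟩^{3/2} )^{1/2 − 1/r} ‖P_λ f‖_{L^2(ℝ²)} (with the usual modification of the time norm when q = ∞). -/

import Mathlib

noncomputable section

open MeasureTheory SchwartzMap
open scoped FourierTransform ENNReal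

/-- The plane `ℝ²` as a Euclidean space. -/
abbrev E2 := EuclideanSpace ℝ (Fin 2)

/-- The Japanese bracket `⟨x⟩ = (1 + x²)^{1/2}`. -/
def jap (x : ℝ) : ℝ := (1 + x ^ 2) ^ ((1 : ℝ) / 2)

/-- The symbol `m₂(ξ) = |ξ| (tanh|ξ|/|ξ|)^{1/2}`, with `m₂(0) = 0`. -/
def m2 (ξ : E2) : ℝ :=
  if ‖ξ‖ = 0 then 0 else ‖ξ‖ * Real.sqrt (Real.tanh ‖ξ‖ / ‖ξ‖)

/-- The propagator `S_{μ,2}(t) f = (e^{i(t/√μ) m₂(√μ ξ)} f̂(ξ))^∨`. -/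
def prop2 (μ t : ℝ) (f : E2 → ℂ) : E2 → ℂ :=
  𝓕⁻ (fun ξ : E2 =>
    Complex.exp (Complex.I * ((t / Real.sqrt μ) * m2 (Real.sqrt μ • ξ) : ℝ)) * 𝓕 f ξ)

/-- Littlewood–Paley projection `P_λ` on `ℝ²`, `(P_λ f)^(ξ) = β(|ξ|/λ) f̂(ξ)`,
`β(s)=χ(s)-χ(2s)`. -/
def proj2 (χ : ℝ → ℝ) (lam : ℝ) (f : E2 → ℂ) : E2 → ℂ :=
  𝓕⁻ (fun ξ : E2 => ((χ (‖ξ‖ / lam) - χ (2 * ‖ξ‖ / lam) : ℝ) : ℂ) * 𝓕 f ξ)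

/-- The `L^q(ℝ)`-norm in time of an `ℝ≥0∞`-valued quantity, with the usual modification
(essential supremum) when `q = ∞`. -/
def timeNorm (q : ℝ≥0∞) (g : ℝ → ℝ≥0∞) : ℝ≥0∞ :=
  if q = ∞ then essSup g volume
  else (∫⁻ t : ℝ, g t ^ q.toReal) ^ (1 / q.toReal)


section part1
open Set in
lemma vdc1 {φ φ' φ'' : ℝ → ℝ} {A A' : ℝ → ℂ} {a b κ M M' : ℝ} (hab : a ≤ b) (hκ : 0 < κ)
    (hφ : ∀ x ∈ Icc a b, HasDerivAt φ (φ' x) x)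
    (hφ' : ∀ x ∈ Icc a b, HasDerivAt φ' (φ'' x) x)
    (hφ''c : ContinuousOn φ'' (Icc a b))
    (hnn : ∀ x ∈ Icc a b, 0 ≤ φ'' x)
    (hlow : ∀ x ∈ Icc a b, κ ≤ |φ' x|)
    (hA : ∀ x ∈ Icc a b, HasDerivAt A (A' x) x)
    (hA'c : ContinuousOn A' (Icc a b))
    (hM : ∀ x ∈ Icc a b, ‖A x‖ ≤ M) (hM' : ∀ x ∈ Icc a b, ‖A' x‖ ≤ M') :
    ‖∫ x in a..b, Complex.exp (Complex.I * (φ x : ℝ)) * A x‖ ≤ (4 * M + M' * (b - a)) / κ := by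
  have hM0 : 0 ≤ M := (norm_nonneg _).trans (hM a (left_mem_Icc.2 hab))
  have hφc : ContinuousOn φ (Icc a b) := fun x hx => (hφ x hx).continuousAt.continuousWithinAt
  have hφ'c : ContinuousOn φ' (Icc a b) := fun x hx => (hφ' x hx).continuousAt.continuousWithinAt
  have hAc : ContinuousOn A (Icc a b) := fun x hx => (hA x hx).continuousAt.continuousWithinAt
  have hne : ∀ x ∈ Icc a b, φ' x ≠ 0 := fun x hx h => by
    have := hlow x hx; rw [h] at this; simp at this; linarith
  have hneC : ∀ x ∈ Icc a b, Complex.I * (φ' x : ℂ) ≠ 0 := fun x hx => by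
    simpa using hne x hx
  set e : ℝ → ℂ := fun x => Complex.exp (Complex.I * (φ x : ℝ)) with he
  have hen : ∀ x, ‖e x‖ = 1 := fun x => by
    simp only [he]; rw [mul_comm]; exact Complex.norm_exp_ofReal_mul_I _
  have hec : ContinuousOn e (Icc a b) := by
    simp only [he]; fun_prop
  set B : ℝ → ℂ := fun x => A x / (Complex.I * (φ' x : ℂ)) with hB
  set B' : ℝ → ℂ := fun x => (A' x * (Complex.I * (φ' x : ℂ)) - A x * (Complex.I * (φ'' x : ℂ))) /
    (Complex.I * (φ' x : ℂ))^2 with hB'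
  have hBd : ∀ x ∈ Icc a b, HasDerivAt B (B' x) x := fun x hx => by
    have h1 : HasDerivAt (fun x => Complex.I * (φ' x : ℂ)) (Complex.I * (φ'' x : ℂ)) x :=
      ((hφ' x hx).ofReal_comp).const_mul _
    exact (hA x hx).div h1 (hneC x hx)
  have hed : ∀ x ∈ Icc a b, HasDerivAt e (e x * (Complex.I * (φ' x : ℂ))) x := fun x hx => by
    exact (((hφ x hx).ofReal_comp).const_mul Complex.I).cexp
  have hB'c : ContinuousOn B' (Icc a b) := by
    simp only [hB']
    apply ContinuousOn.div
    · fun_prop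
    · fun_prop
    · intro x hx; exact pow_ne_zero 2 (hneC x hx)
  have key : ∫ x in a..b, e x * A x + e x * B' x = e b * B b - e a * B a := by
    apply intervalIntegral.integral_eq_sub_of_hasDerivAt
    · intro x hx
      rw [uIcc_of_le hab] at hx
      have := (hed x hx).mul (hBd x hx)
      have h1 : e x * (Complex.I * (φ' x : ℂ)) * B x = e x * A x := by
        rw [mul_assoc, show B x = A x / (Complex.I * (φ' x : ℂ)) from rfl,
          mul_div_cancel₀ _ (hneC x hx)]
      rw [h1] at this
      exact this
    · apply ContinuousOn.intervalIntegrable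
      rw [uIcc_of_le hab]; fun_prop
  have hi1 : IntervalIntegrable (fun x => e x * A x) volume a b := by
    apply ContinuousOn.intervalIntegrable
    rw [uIcc_of_le hab]; fun_prop
  have hi2 : IntervalIntegrable (fun x => e x * B' x) volume a b := by
    apply ContinuousOn.intervalIntegrable
    rw [uIcc_of_le hab]; fun_prop
  rw [intervalIntegral.integral_add hi1 hi2] at key
  have key2 : ∫ x in a..b, e x * A x = e b * B b - e a * B a - ∫ x in a..b, e x * B' x := by
    rw [← key]; ring
  have hBn : ∀ x ∈ Icc a b, ‖B x‖ ≤ M / κ := fun x hx => by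
    simp only [hB, norm_div, norm_mul, Complex.norm_I, one_mul, Complex.norm_real, Real.norm_eq_abs]
    exact div_le_div₀ hM0 (hM x hx) hκ (hlow x hx)
  have hgd : ∀ x ∈ Icc a b, HasDerivAt (fun x => M' / κ * x - M * (φ' x)⁻¹)
      (M' / κ * 1 - M * (-(φ'' x) / (φ' x)^2)) x := fun x hx =>
    ((hasDerivAt_id x).const_mul _).sub (((hφ' x hx).inv (hne x hx)).const_mul M)
  have hgc : ContinuousOn (fun x => M' / κ * 1 - M * (-(φ'' x) / (φ' x)^2)) (Icc a b) := by
    apply ContinuousOn.sub continuousOn_const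
    apply ContinuousOn.mul continuousOn_const
    apply ContinuousOn.div
    · fun_prop
    · fun_prop
    · intro x hx; exact pow_ne_zero 2 (hne x hx)
  have hgi : IntervalIntegrable (fun x => M' / κ * 1 - M * (-(φ'' x) / (φ' x)^2)) volume a b := by
    apply ContinuousOn.intervalIntegrable
    rw [uIcc_of_le hab]; exact hgc
  have hintg : ‖∫ x in a..b, e x * B' x‖ ≤ ∫ x in a..b, (M' / κ * 1 - M * (-(φ'' x) / (φ' x)^2)) := by
    apply intervalIntegral.norm_integral_le_of_norm_le hab _ hgi
    refine Filter.Eventually.of_forall fun x hx => ?_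
    have hx : x ∈ Icc a b := Ioc_subset_Icc_self hx
    rw [norm_mul, hen, one_mul]
    have hp : 0 < |φ' x| := abs_pos.2 (hne x hx)
    have : B' x = A' x / (Complex.I * (φ' x : ℂ)) -
        A x * (Complex.I * (φ'' x : ℂ)) / (Complex.I * (φ' x : ℂ))^2 := by
      simp only [hB']
      have := hneC x hx
      rw [sub_div, sq, mul_div_mul_right _ _ this]
    rw [this]
    refine (norm_sub_le _ _).trans ?_
    simp only [norm_div, norm_mul, Complex.norm_I, one_mul, Complex.norm_real, Real.norm_eq_abs,
      norm_pow, mul_one, abs_of_nonneg (hnn x hx), sq_abs]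
    have h1 : ‖A' x‖ / |φ' x| ≤ M' / κ :=
      div_le_div₀ ((norm_nonneg _).trans (hM' x hx)) (hM' x hx) hκ (hlow x hx)
    have h2 : ‖A x‖ * φ'' x / φ' x ^ 2 ≤ M * φ'' x / φ' x ^ 2 := by
      have := hM x hx
      have := hnn x hx
      gcongr
    have h3 : M * (-φ'' x / φ' x ^ 2) = - (M * φ'' x / φ' x ^ 2) := by ring
    linarith
  rw [intervalIntegral.integral_eq_sub_of_hasDerivAt (fun x hx => hgd x (by rwa [uIcc_of_le hab] at hx)) hgi] at hintg
  have hinv : ∀ x ∈ Icc a b, |(φ' x)⁻¹| ≤ 1 / κ := fun x hx => by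
    rw [abs_inv, ← one_div]; exact one_div_le_one_div_of_le hκ (hlow x hx)
  have ha := hBn a (left_mem_Icc.2 hab)
  have hb := hBn b (right_mem_Icc.2 hab)
  have ia := abs_le.1 (hinv a (left_mem_Icc.2 hab))
  have ib := abs_le.1 (hinv b (right_mem_Icc.2 hab))
  rw [key2]
  have t1 := norm_sub_le (e b * B b - e a * B a) (∫ x in a..b, e x * B' x)
  have t2 := norm_sub_le (e b * B b) (e a * B a)
  rw [norm_mul, norm_mul, hen, hen] at t2
  have i1 : M * (φ' a)⁻¹ ≤ M * (1/κ) := mul_le_mul_of_nonneg_left ia.2 hM0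
  have i2 : M * (-(1/κ)) ≤ M * (φ' b)⁻¹ := mul_le_mul_of_nonneg_left ib.1 hM0
  have e1 : (4 * M + M' * (b - a)) / κ = 4 * (M/κ) + M'/κ * b - M'/κ * a := by ring
  have e2 : M * (1/κ) = M/κ := by ring
  have e3 : M * (-(1/κ)) = -(M/κ) := by ring
  rw [e1]; rw [e2] at i1; rw [e3] at i2
  linarith

open Set in
lemma vdc2 {φ φ' φ'' : ℝ → ℝ} {A A' : ℝ → ℂ} {a b ρ M M' : ℝ} (hab : a ≤ b) (hρ : 0 < ρ)
    (hφ : ∀ x ∈ Icc a b, HasDerivAt φ (φ' x) x)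
    (hφ' : ∀ x ∈ Icc a b, HasDerivAt φ' (φ'' x) x)
    (hφ''c : ContinuousOn φ'' (Icc a b))
    (hlow : ∀ x ∈ Icc a b, ρ ≤ φ'' x)
    (hA : ∀ x ∈ Icc a b, HasDerivAt A (A' x) x)
    (hA'c : ContinuousOn A' (Icc a b))
    (hM : ∀ x ∈ Icc a b, ‖A x‖ ≤ M) (hM' : ∀ x ∈ Icc a b, ‖A' x‖ ≤ M') :
    ‖∫ x in a..b, Complex.exp (Complex.I * (φ x : ℝ)) * A x‖ ≤
      (18 * M + 4 * M' * (b - a)) / √ρ := by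
  have hM0 : 0 ≤ M := (norm_nonneg _).trans (hM a (left_mem_Icc.2 hab))
  have hM'0 : 0 ≤ M' := (norm_nonneg _).trans (hM' a (left_mem_Icc.2 hab))
  have hφc : ContinuousOn φ (Icc a b) := fun x hx => (hφ x hx).continuousAt.continuousWithinAt
  have hφ'c : ContinuousOn φ' (Icc a b) := fun x hx => (hφ' x hx).continuousAt.continuousWithinAt
  have hAc : ContinuousOn A (Icc a b) := fun x hx => (hA x hx).continuousAt.continuousWithinAt
  have hs : 0 < √ρ := Real.sqrt_pos.2 hρ
  have hss : √ρ * √ρ = ρ := Real.mul_self_sqrt hρ.le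
  have hgrow : ∀ x ∈ Icc a b, ∀ y ∈ Icc a b, x ≤ y → ρ * (y - x) ≤ φ' y - φ' x := by
    intro x hx y hy hxy
    have hmono : MonotoneOn (fun z => φ' z - ρ * z) (Icc a b) := by
      apply monotoneOn_of_deriv_nonneg (convex_Icc a b)
      · fun_prop
      · intro z hz
        rw [interior_Icc] at hz
        exact ((hφ' z (Ioo_subset_Icc_self hz)).sub ((hasDerivAt_id z).const_mul ρ)).differentiableAt.differentiableWithinAt
      · intro z hz
        rw [interior_Icc] at hz
        have h := ((hφ' z (Ioo_subset_Icc_self hz)).sub ((hasDerivAt_id z).const_mul ρ)).deriv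
        have h2 : deriv (fun z => φ' z - ρ * z) z = φ'' z - ρ * 1 := h
        rw [h2]
        have := hlow z (Ioo_subset_Icc_self hz)
        linarith
    have := hmono hx hy hxy
    simp only at this
    linarith
  obtain ⟨c, hc, hcmin⟩ := isCompact_Icc.exists_isMinOn (nonempty_Icc.2 hab) (hφ'c.abs)
  have hbig : ∀ x ∈ Icc a b, ρ * |x - c| ≤ 2 * |φ' x| := by
    intro x hx
    have h1 : |φ' c| ≤ |φ' x| := hcmin hx
    rcases le_total c x with h | h
    · have := hgrow c hc x hx h
      rw [abs_of_nonneg (by linarith)]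
      have := le_abs_self (φ' x)
      have := neg_abs_le (φ' c)
      linarith
    · have := hgrow x hx c hc h
      rw [abs_of_nonpos (by linarith)]
      have := neg_abs_le (φ' x)
      have := le_abs_self (φ' c)
      linarith
  set δ := 1 / √ρ with hδ
  have hδ0 : 0 < δ := by positivity
  have hρδ : ρ * δ = √ρ := by rw [hδ, ← hss]; field_simp; simp
  set F : ℝ → ℂ := fun x => Complex.exp (Complex.I * (φ x : ℝ)) * A x with hF
  have hFc : ContinuousOn F (Icc a b) := by simp only [hF]; fun_prop
  have hFn : ∀ x ∈ Icc a b, ‖F x‖ ≤ M := fun x hx => by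
    simp only [hF, norm_mul]
    rw [mul_comm Complex.I, Complex.norm_exp_ofReal_mul_I, one_mul]
    exact hM x hx
  have hsub : ∀ u v, a ≤ u → u ≤ v → v ≤ b → (∀ x ∈ Icc u v, δ ≤ |x - c|) →
      ‖∫ x in u..v, F x‖ ≤ (8 * M + 2 * M' * (b - a)) / √ρ := by
    intro u v hu huv hv hd
    have hs2 : Icc u v ⊆ Icc a b := Icc_subset_Icc hu hv
    have := vdc1 (κ := √ρ / 2) huv (by positivity) (fun x hx => hφ x (hs2 hx))
      (fun x hx => hφ' x (hs2 hx)) (hφ''c.mono hs2)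
      (fun x hx => hρ.le.trans (hlow x (hs2 hx)))
      (fun x hx => by
        have h1 := hbig x (hs2 hx)
        have h2 := mul_le_mul_of_nonneg_left (hd x hx) hρ.le
        rw [hρδ] at h2
        linarith)
      (fun x hx => hA x (hs2 hx)) (hA'c.mono hs2) (fun x hx => hM x (hs2 hx))
      (fun x hx => hM' x (hs2 hx))
    refine this.trans ?_
    rw [div_div_eq_mul_div]
    have : M' * (v - u) ≤ M' * (b - a) := by gcongr
    gcongr
    linarith
  have hK0 : 0 ≤ (8 * M + 2 * M' * (b - a)) / √ρ := by
    have : 0 ≤ b - a := by linarith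
    positivity
  set c1 := max a (c - δ)
  set c2 := min b (c + δ)
  have h1 : a ≤ c1 := le_max_left _ _
  have h2 : c1 ≤ c := max_le hc.1 (by linarith)
  have h3 : c ≤ c2 := le_min hc.2 (by linarith)
  have h4 : c2 ≤ b := min_le_left _ _
  have hI : ∀ u v, a ≤ u → u ≤ v → v ≤ b → IntervalIntegrable F volume u v := by
    intro u v hu huv hv
    apply ContinuousOn.intervalIntegrable
    rw [uIcc_of_le huv]
    exact hFc.mono (Icc_subset_Icc hu hv)
  have b1 : ‖∫ x in a..c1, F x‖ ≤ (8 * M + 2 * M' * (b - a)) / √ρ := by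
    rcases le_total (c - δ) a with h | h
    · have : c1 = a := max_eq_left h
      rw [this]; simpa using hK0
    · have hc1 : c1 = c - δ := max_eq_right h
      apply hsub _ _ le_rfl h1 (by linarith)
      intro x hx
      have := hx.2
      rw [abs_of_nonpos (by linarith)]; linarith
  have b3 : ‖∫ x in c2..b, F x‖ ≤ (8 * M + 2 * M' * (b - a)) / √ρ := by
    rcases le_total b (c + δ) with h | h
    · have : c2 = b := min_eq_left h
      rw [this]; simpa using hK0
    · have hc1 : c2 = c + δ := min_eq_right h
      apply hsub _ _ (by linarith [hc.1]) h4 le_rfl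
      intro x hx
      have := hx.1
      rw [abs_of_nonneg (by linarith)]; linarith
  have b2 : ‖∫ x in c1..c2, F x‖ ≤ 2 * M / √ρ := by
    have := intervalIntegral.norm_integral_le_of_norm_le_const (a := c1) (b := c2) (f := F) (C := M) (by
      intro x hx
      rw [uIoc_of_le (by linarith)] at hx
      exact hFn x ⟨by linarith [hx.1], by linarith [hx.2]⟩)
    refine this.trans ?_
    rw [abs_of_nonneg (by linarith)]
    have h5 : c2 ≤ c + δ := min_le_right _ _
    have h6 : c - δ ≤ c1 := le_max_right _ _
    have : M * (c2 - c1) ≤ M * (2 * δ) := by gcongr; linarith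
    refine this.trans (le_of_eq ?_)
    rw [hδ]; ring
  have hsum : ∫ x in a..b, F x = (∫ x in a..c1, F x) + (∫ x in c1..c2, F x) + ∫ x in c2..b, F x := by
    rw [intervalIntegral.integral_add_adjacent_intervals, intervalIntegral.integral_add_adjacent_intervals]
    · exact hI _ _ le_rfl (by linarith) (by linarith)
    · exact hI _ _ (by linarith) (by linarith) (by linarith)
    · exact hI _ _ (by linarith) (by linarith) (by linarith)
    · exact hI _ _ (by linarith) (by linarith) (by linarith)
  rw [hsum]
  refine (norm_add₃_le).trans ?_
  have : (18 * M + 4 * M' * (b - a)) / √ρ = (8 * M + 2 * M' * (b - a)) / √ρ + 2 * M / √ρ + (8 * M + 2 * M' * (b - a)) / √ρ := by ring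
  rw [this]
  gcongr

lemma conj_osc {φ : ℝ → ℝ} {A : ℝ → ℂ} {a b : ℝ} :
    ‖∫ x in a..b, Complex.exp (Complex.I * (φ x : ℝ)) * A x‖ =
    ‖∫ x in a..b, Complex.exp (Complex.I * ((-φ x : ℝ) : ℂ)) * (starRingEnd ℂ) (A x)‖ := by
  rw [← RCLike.norm_conj, ← intervalIntegral.intervalIntegral_conj]
  congr 2
  ext x
  rw [map_mul, ← Complex.exp_conj]
  simp

open Set in
lemma vdc1' {φ φ' φ'' : ℝ → ℝ} {A A' : ℝ → ℂ} {a b κ M M' : ℝ} (hab : a ≤ b) (hκ : 0 < κ)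
    (hφ : ∀ x ∈ Icc a b, HasDerivAt φ (φ' x) x)
    (hφ' : ∀ x ∈ Icc a b, HasDerivAt φ' (φ'' x) x)
    (hφ''c : ContinuousOn φ'' (Icc a b))
    (hnn : (∀ x ∈ Icc a b, 0 ≤ φ'' x) ∨ (∀ x ∈ Icc a b, φ'' x ≤ 0))
    (hlow : ∀ x ∈ Icc a b, κ ≤ |φ' x|)
    (hA : ∀ x ∈ Icc a b, HasDerivAt A (A' x) x)
    (hA'c : ContinuousOn A' (Icc a b))
    (hM : ∀ x ∈ Icc a b, ‖A x‖ ≤ M) (hM' : ∀ x ∈ Icc a b, ‖A' x‖ ≤ M') :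
    ‖∫ x in a..b, Complex.exp (Complex.I * (φ x : ℝ)) * A x‖ ≤ (4 * M + M' * (b - a)) / κ := by
  rcases hnn with h | h
  · exact vdc1 hab hκ hφ hφ' hφ''c h hlow hA hA'c hM hM'
  · rw [conj_osc]
    exact vdc1 (φ := fun x => -φ x) (φ' := fun x => -φ' x) (φ'' := fun x => -φ'' x)
      (A := fun x => (starRingEnd ℂ) (A x)) (A' := fun x => (starRingEnd ℂ) (A' x))
      hab hκ (fun x hx => (hφ x hx).neg) (fun x hx => (hφ' x hx).neg) hφ''c.neg
      (fun x hx => by have := h x hx; linarith) (fun x hx => by simpa using hlow x hx)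
      (fun x hx => (hA x hx).star) (Complex.continuous_conj.comp_continuousOn hA'c)
      (fun x hx => by simpa using hM x hx) (fun x hx => by simpa using hM' x hx)

open Set in
lemma vdc2' {φ φ' φ'' : ℝ → ℝ} {A A' : ℝ → ℂ} {a b ρ M M' : ℝ} (hab : a ≤ b) (hρ : 0 < ρ)
    (hφ : ∀ x ∈ Icc a b, HasDerivAt φ (φ' x) x)
    (hφ' : ∀ x ∈ Icc a b, HasDerivAt φ' (φ'' x) x)
    (hφ''c : ContinuousOn φ'' (Icc a b))
    (hlow : (∀ x ∈ Icc a b, ρ ≤ φ'' x) ∨ (∀ x ∈ Icc a b, φ'' x ≤ -ρ))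
    (hA : ∀ x ∈ Icc a b, HasDerivAt A (A' x) x)
    (hA'c : ContinuousOn A' (Icc a b))
    (hM : ∀ x ∈ Icc a b, ‖A x‖ ≤ M) (hM' : ∀ x ∈ Icc a b, ‖A' x‖ ≤ M') :
    ‖∫ x in a..b, Complex.exp (Complex.I * (φ x : ℝ)) * A x‖ ≤
      (18 * M + 4 * M' * (b - a)) / √ρ := by
  rcases hlow with h | h
  · exact vdc2 hab hρ hφ hφ' hφ''c h hA hA'c hM hM'
  · rw [conj_osc]
    exact vdc2 (φ := fun x => -φ x) (φ' := fun x => -φ' x) (φ'' := fun x => -φ'' x)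
      (A := fun x => (starRingEnd ℂ) (A x)) (A' := fun x => (starRingEnd ℂ) (A' x))
      hab hρ (fun x hx => (hφ x hx).neg) (fun x hx => (hφ' x hx).neg) hφ''c.neg
      (fun x hx => by have := h x hx; linarith) 
      (fun x hx => (hA x hx).star) (Complex.continuous_conj.comp_continuousOn hA'c)
      (fun x hx => by simpa using hM x hx) (fun x hx => by simpa using hM' x hx)

end part1

section part2
def bJ (s : ℝ) : ℝ := ∫ θ in (-Real.pi)..Real.pi, Real.cos (s * Real.cos θ)
def bJ1 (s : ℝ) : ℝ := ∫ θ in (-Real.pi)..Real.pi, -(Real.sin (s * Real.cos θ) * Real.cos θ)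
def bJ2 (s : ℝ) : ℝ :=
  ∫ θ in (-Real.pi)..Real.pi, -(Real.cos (s * Real.cos θ) * Real.cos θ * Real.cos θ)

lemma bJ_hasDeriv (s : ℝ) : HasDerivAt bJ (bJ1 s) s := by
  refine (intervalIntegral.hasDerivAt_integral_of_dominated_loc_of_deriv_le (bound := fun _ => 1)
    (F := fun s θ => Real.cos (s * Real.cos θ))
    (F' := fun s θ => -(Real.sin (s * Real.cos θ) * Real.cos θ)) (s := Set.univ) Filter.univ_mem
    ?_ ?_ ?_ ?_ ?_ ?_).2
  · exact Filter.Eventually.of_forall fun x => by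
      apply Continuous.aestronglyMeasurable; fun_prop
  · apply Continuous.intervalIntegrable; fun_prop
  · apply Continuous.aestronglyMeasurable; fun_prop
  · refine Filter.Eventually.of_forall fun θ _ x _ => ?_
    rw [norm_neg, norm_mul]
    exact mul_le_one₀ (Real.abs_sin_le_one _) (norm_nonneg _) (Real.abs_cos_le_one _)
  · simp
  · refine Filter.Eventually.of_forall fun θ _ x _ => ?_
    have := ((hasDerivAt_id x).mul_const (Real.cos θ)).cos
    simpa using this

lemma bJ1_hasDeriv (s : ℝ) : HasDerivAt bJ1 (bJ2 s) s := by
  refine (intervalIntegral.hasDerivAt_integral_of_dominated_loc_of_deriv_le (bound := fun _ => 1)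
    (F := fun s θ => -(Real.sin (s * Real.cos θ) * Real.cos θ))
    (F' := fun s θ => -(Real.cos (s * Real.cos θ) * Real.cos θ * Real.cos θ))
    (s := Set.univ) Filter.univ_mem
    ?_ ?_ ?_ ?_ ?_ ?_).2
  · exact Filter.Eventually.of_forall fun x => by
      apply Continuous.aestronglyMeasurable; fun_prop
  · apply Continuous.intervalIntegrable; fun_prop
  · apply Continuous.aestronglyMeasurable; fun_prop
  · refine Filter.Eventually.of_forall fun θ _ x _ => ?_
    rw [norm_neg, norm_mul, norm_mul]
    exact mul_le_one₀ (mul_le_one₀ (Real.abs_cos_le_one _) (norm_nonneg _) (Real.abs_cos_le_one _))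
      (norm_nonneg _) (Real.abs_cos_le_one _)
  · simp
  · refine Filter.Eventually.of_forall fun θ _ x _ => ?_
    have := ((((hasDerivAt_id x).mul_const (Real.cos θ)).sin).mul_const (Real.cos θ)).neg
    simp only [one_mul, id] at this
    exact this

lemma bJ_ode (s : ℝ) : s * bJ2 s = - s * bJ s - bJ1 s := by
  have h : ∫ θ in (-Real.pi)..Real.pi, (s * Real.cos (s * Real.cos θ)
      + s * -(Real.cos (s * Real.cos θ) * Real.cos θ * Real.cos θ)
      + -(Real.sin (s * Real.cos θ) * Real.cos θ)) = 0 := by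
    have := intervalIntegral.integral_eq_sub_of_hasDerivAt (a := -Real.pi) (b := Real.pi)
      (f := fun θ => -(Real.sin θ * Real.sin (s * Real.cos θ)))
      (f' := fun θ => (s * Real.cos (s * Real.cos θ)
      + s * -(Real.cos (s * Real.cos θ) * Real.cos θ * Real.cos θ)
      + -(Real.sin (s * Real.cos θ) * Real.cos θ)))
      (fun θ _ => by
        have h1 := ((Real.hasDerivAt_sin θ).mul (((Real.hasDerivAt_cos θ).const_mul s).sin)).neg
        have h2 : -(Real.cos θ * Real.sin (s * Real.cos θ) + Real.sin θ * (Real.cos (s * Real.cos θ) * (s * -Real.sin θ)))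
          = (s * Real.cos (s * Real.cos θ)
      + s * -(Real.cos (s * Real.cos θ) * Real.cos θ * Real.cos θ)
      + -(Real.sin (s * Real.cos θ) * Real.cos θ)) := by
          have := Real.sin_sq_add_cos_sq θ
          linear_combination (s * Real.cos (s * Real.cos θ)) * this
        rw [← h2]
        exact h1)
      (by apply Continuous.intervalIntegrable; fun_prop)
    rw [this]; simp
  rw [intervalIntegral.integral_add, intervalIntegral.integral_add, intervalIntegral.integral_const_mul,
    intervalIntegral.integral_const_mul] at h
  · unfold bJ2 bJ bJ1
    linarith
  all_goals (apply Continuous.intervalIntegrable; fun_prop)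

lemma bJ_bd (s : ℝ) : |bJ s| ≤ 7 := by
  have := intervalIntegral.norm_integral_le_of_norm_le_const (a := -Real.pi) (b := Real.pi)
    (f := fun θ => Real.cos (s * Real.cos θ)) (C := 1) (fun x _ => Real.abs_cos_le_one _)
  refine this.trans ?_
  rw [abs_of_nonneg (by linarith [Real.pi_pos])]
  linarith [Real.pi_lt_d2]

lemma bJ1_bd (s : ℝ) : |bJ1 s| ≤ 7 := by
  have := intervalIntegral.norm_integral_le_of_norm_le_const (a := -Real.pi) (b := Real.pi)
    (f := fun θ => -(Real.sin (s * Real.cos θ) * Real.cos θ)) (C := 1) (fun x _ => by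
      rw [norm_neg, norm_mul]
      exact mul_le_one₀ (Real.abs_sin_le_one _) (norm_nonneg _) (Real.abs_cos_le_one _))
  refine this.trans ?_
  rw [abs_of_nonneg (by linarith [Real.pi_pos])]
  linarith [Real.pi_lt_d2]

lemma bJ_energy {s : ℝ} (hs : 1 ≤ s) : s * (bJ s ^ 2 + bJ1 s ^ 2) ≤ 400 := by
  set En : ℝ → ℝ := fun s => s * (bJ s)^2 + s * (bJ1 s)^2 + bJ s * bJ1 s + (bJ s)^2 * (2 * s)⁻¹ with hE
  have hd : ∀ x ∈ Set.Ici (1:ℝ), HasDerivAt En (-(bJ x)^2 / (2 * x^2)) x := by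
    intro x hx
    have hx0 : (0:ℝ) < x := lt_of_lt_of_le one_pos hx
    have h0 := bJ_hasDeriv x
    have h1 := bJ1_hasDeriv x
    have hi : HasDerivAt (fun x : ℝ => (2 * x)⁻¹) (-(2 * 1) / (2 * x)^2) x :=
      ((hasDerivAt_id x).const_mul 2).fun_inv (by positivity)
    have := ((((hasDerivAt_id x).mul (h0.pow 2)).add ((hasDerivAt_id x).mul (h1.pow 2))).add (h0.mul h1)).add
      ((h0.pow 2).mul hi)
    refine HasDerivAt.congr_deriv this ?_
    have ode : bJ2 x = - bJ x - bJ1 x / x := by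
      have := bJ_ode x
      field_simp; linarith
    simp only [id, Pi.pow_apply]
    rw [ode]
    field_simp
    push_cast
    ring
  have hanti : AntitoneOn En (Set.Ici 1) := by
    apply antitoneOn_of_deriv_nonpos (convex_Ici 1)
    · exact fun x hx => (hd x hx).continuousAt.continuousWithinAt
    · intro x hx
      exact (hd x (interior_subset hx)).differentiableAt.differentiableWithinAt
    · intro x hx
      rw [(hd x (interior_subset hx)).deriv]
      apply div_nonpos_of_nonpos_of_nonneg
      · have := sq_nonneg (bJ x); linarith
      · positivity
  have h := hanti (Set.mem_Ici.2 le_rfl) (Set.mem_Ici.2 hs) hs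
  simp only [hE] at h
  have a0 := abs_le.1 (bJ_bd 1)
  have a1 := abs_le.1 (bJ1_bd 1)
  have q0 : bJ 1 ^ 2 ≤ 49 := by nlinarith
  have q1 : bJ1 1 ^ 2 ≤ 49 := by nlinarith
  have q2 : bJ 1 * bJ1 1 ≤ 49 := by nlinarith [sq_nonneg (bJ 1 - bJ1 1)]
  have q3 : 0 ≤ bJ s ^ 2 * (2 * s)⁻¹ := by positivity
  have q4 : 0 ≤ (s - 1) * (bJ s ^ 2 + bJ1 s ^ 2) := mul_nonneg (by linarith) (by positivity)
  norm_num at h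
  have q5 : 0 ≤ (bJ s + bJ1 s)^2 := sq_nonneg _
  norm_num at q3
  nlinarith

lemma bJ_decay {s : ℝ} (hs : 1 ≤ s) : |bJ s| ≤ 20 / √s ∧ |bJ1 s| ≤ 20 / √s := by
  have h0 : 0 < s := by linarith
  have hss := Real.mul_self_sqrt h0.le
  have hp := Real.sqrt_pos.2 h0
  have h := bJ_energy hs
  constructor
  · rw [le_div_iff₀ hp]
    apply abs_le_of_sq_le_sq' _ (by norm_num : (0:ℝ) ≤ 20) |>.2
    rw [mul_pow, sq_abs, sq (√s), hss]
    nlinarith [sq_nonneg (bJ1 s)]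
  · rw [le_div_iff₀ hp]
    apply abs_le_of_sq_le_sq' _ (by norm_num : (0:ℝ) ≤ 20) |>.2
    rw [mul_pow, sq_abs, sq (√s), hss]
    nlinarith [sq_nonneg (bJ s)]

def bB (s : ℝ) : ℂ := Complex.exp (-(Complex.I * s)) * ((bJ s : ℂ) - Complex.I * bJ1 s - Complex.I * bJ s * (2 * (s : ℂ))⁻¹) / 2
def bB' (s : ℝ) : ℂ := Complex.exp (-(Complex.I * s)) * (-(bJ s : ℂ) + Complex.I * bJ1 s + Complex.I * bJ s * (s : ℂ)⁻¹) * (4 * (s : ℂ))⁻¹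

lemma bB_hasDeriv {s : ℝ} (hs : 0 < s) : HasDerivAt bB (bB' s) s := by
  have hC : (s : ℂ) ≠ 0 := by exact_mod_cast hs.ne'
  have hid : HasDerivAt (fun x : ℝ => (x : ℂ)) 1 s := Complex.ofRealCLM.hasDerivAt
  have he : HasDerivAt (fun x : ℝ => Complex.exp (-(Complex.I * x)))
     (Complex.exp (-(Complex.I * s)) * (-(Complex.I * 1))) s := ((hid.const_mul Complex.I).neg).cexp
  have h0 := (bJ_hasDeriv s).ofReal_comp
  have h1 := (bJ1_hasDeriv s).ofReal_comp
  have hi : HasDerivAt (fun x : ℝ => (2 * (x : ℂ))⁻¹) (-(2 * 1) / (2 * (s : ℂ))^2) s :=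
      (hid.const_mul 2).fun_inv (by simpa using hC)
  have := (he.mul ((h0.sub (h1.const_mul Complex.I)).sub ((h0.const_mul Complex.I).mul hi))).div_const 2
  refine HasDerivAt.congr_deriv (f := bB) this ?_
  have ode : (bJ2 s : ℂ) = - bJ s - bJ1 s / s := by
      have := bJ_ode s
      have h2 : bJ2 s = - bJ s - bJ1 s / s := by
        field_simp; linarith
      rw [h2]; push_cast; ring
  simp only [bB']
  dsimp
  rw [ode]
  field_simp
  ring_nf
  simp only [Complex.I_sq]
  ring

lemma bB'_cont : ContinuousOn bB' (Set.Ioi 0) := by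
  unfold bB'
  have h0 : Continuous bJ := continuous_iff_continuousAt.2 fun x => (bJ_hasDeriv x).continuousAt
  have h1 : Continuous bJ1 := continuous_iff_continuousAt.2 fun x => (bJ1_hasDeriv x).continuousAt
  have h2 : ContinuousOn (fun s : ℝ => ((s : ℂ))⁻¹) (Set.Ioi 0) := by
    apply ContinuousOn.inv₀
    · exact Complex.continuous_ofReal.continuousOn
    · intro x hx; exact_mod_cast (ne_of_gt hx)
  have h3 : ContinuousOn (fun s : ℝ => (4 * (s : ℂ))⁻¹) (Set.Ioi 0) := by
    apply ContinuousOn.inv₀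
    · exact Complex.continuous_ofReal.continuousOn.const_mul 4
    · intro x hx
      have : x ≠ 0 := ne_of_gt hx
      simpa using this
  have h4 : Continuous fun s => (bJ s : ℂ) := Complex.continuous_ofReal.comp h0
  have h5 : Continuous fun s => (bJ1 s : ℂ) := Complex.continuous_ofReal.comp h1
  have h6 : Continuous fun s : ℝ => Complex.exp (-(Complex.I * s)) := by
    have := Complex.continuous_ofReal
    fun_prop
  exact (h6.continuousOn.mul ((h4.neg.continuousOn.add (h5.continuousOn.const_mul _)).add
    ((h4.continuousOn.const_mul _).mul h2))).mul h3

lemma bB_bd {s : ℝ} (hs : 1 ≤ s) : ‖bB s‖ ≤ 25 / √s ∧ ‖bB' s‖ ≤ 15 / (s * √s) := by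
  have h0 : 0 < s := by linarith
  have hp := Real.sqrt_pos.2 h0
  obtain ⟨d0, d1⟩ := bJ_decay hs
  have hen : ‖Complex.exp (-(Complex.I * s))‖ = 1 := by
    have := Complex.norm_exp_ofReal_mul_I (-s)
    rwa [show ((-s : ℝ) : ℂ) * Complex.I = -(Complex.I * s) by push_cast; ring] at this
  constructor
  · unfold bB
    rw [norm_div, norm_mul, hen, one_mul]
    have t1 := norm_sub_le ((bJ s : ℂ) - Complex.I * bJ1 s) (Complex.I * bJ s * (2 * (s : ℂ))⁻¹)
    have t2 := norm_sub_le (bJ s : ℂ) (Complex.I * bJ1 s)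
    simp only [norm_mul, Complex.norm_I, Complex.norm_real, one_mul, norm_inv, Complex.norm_ofNat, Real.norm_eq_abs, abs_of_pos h0] at t1 t2 ⊢
    have t3 : |bJ s| * (2 * s)⁻¹ ≤ (20 / √s) * (1/2) := by
      gcongr
      rw [inv_le_comm₀ (by positivity) (by norm_num)]; linarith
    have : 25 / √s = (20/√s + 20/√s + (20 / √s) * (1/2))/2 := by ring
    rw [this]
    linarith
  · unfold bB'
    rw [norm_mul, norm_mul, hen, one_mul]
    have t1 := norm_add_le (-(bJ s : ℂ) + Complex.I * bJ1 s) (Complex.I * bJ s * (s : ℂ)⁻¹)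
    have t2 := norm_add_le (-bJ s : ℂ) (Complex.I * bJ1 s)
    simp only [norm_neg, norm_mul, Complex.norm_I, Complex.norm_real, one_mul, norm_inv, Complex.norm_ofNat, Real.norm_eq_abs, abs_of_pos h0] at t1 t2 ⊢
    have t3 : |bJ s| * (s)⁻¹ ≤ (20 / √s) * 1 := by
      gcongr
      exact inv_le_one_of_one_le₀ hs
    have : 15 / (s * √s) = (20/√s + 20/√s + (20 / √s) * 1) * (4 * s)⁻¹ := by field_simp; norm_num
    rw [this]
    gcongr
    linarith

lemma bJ_eq (s : ℝ) : (bJ s : ℂ) = Complex.exp (Complex.I * s) * bB s +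
    Complex.exp (-(Complex.I * s)) * (starRingEnd ℂ) (bB s) := by
  unfold bB
  rw [map_div₀, map_mul, ← Complex.exp_conj]
  simp only [map_sub, map_mul, map_neg, Complex.conj_I, Complex.conj_ofReal, map_inv₀, map_ofNat]
  have h1 : Complex.exp (Complex.I * s) * Complex.exp (-(Complex.I * s)) = 1 := by
    rw [← Complex.exp_add]; simp
  rw [show -(-Complex.I * (s:ℂ)) = Complex.I * s by ring]
  linear_combination (-(bJ s : ℂ)) * h1

lemma bJ_cexp (s : ℝ) : ∫ θ in (-Real.pi)..Real.pi, Complex.exp (Complex.I * ((s * Real.cos θ : ℝ) : ℂ)) = bJ s := by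
  have hs : ∫ θ in (-Real.pi)..Real.pi, Real.sin (s * Real.cos θ) = 0 := by
    have hper : Function.Periodic (fun θ => Real.sin (s * Real.cos θ)) (2 * Real.pi) := by
      intro θ; simp
    have h1 := hper.intervalIntegral_add_eq (-Real.pi) 0
    have h2 := intervalIntegral.integral_comp_add_right (a := -Real.pi) (b := Real.pi) (fun θ => Real.sin (s * Real.cos θ)) Real.pi
    simp only [Real.cos_add_pi, mul_neg, Real.sin_neg, intervalIntegral.integral_neg] at h2
    rw [show -Real.pi + 2 * Real.pi = Real.pi by ring] at h1
    rw [show -Real.pi + Real.pi = 0 by ring, show Real.pi + Real.pi = 0 + 2 * Real.pi by ring, ← h1] at h2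
    linarith
  have : ∀ θ : ℝ, Complex.exp (Complex.I * ((s * Real.cos θ : ℝ) : ℂ)) =
      ((Real.cos (s * Real.cos θ) : ℝ) : ℂ) + ((Real.sin (s * Real.cos θ) : ℝ) : ℂ) * Complex.I := by
    intro θ
    rw [mul_comm, Complex.exp_mul_I, Complex.ofReal_cos, Complex.ofReal_sin]
  simp_rw [this]
  rw [intervalIntegral.integral_add, intervalIntegral.integral_mul_const, intervalIntegral.integral_ofReal, intervalIntegral.integral_ofReal, hs]
  · simp [bJ]
  all_goals (apply Continuous.intervalIntegrable; fun_prop)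

end part2

section part3
def mr (r : ℝ) : ℝ := √(r * Real.tanh r)
def mp (r : ℝ) : ℝ := (Real.tanh r + r * (1 - Real.tanh r ^ 2)) / (2 * √(r * Real.tanh r))
def mpp (r : ℝ) : ℝ := -((Real.tanh r - r * (1 - Real.tanh r ^ 2)) ^ 2
  + 4 * r ^ 2 * Real.tanh r ^ 2 * (1 - Real.tanh r ^ 2)) / (4 * (r * Real.tanh r) * √(r * Real.tanh r))

lemma one_le_jap (x : ℝ) : 1 ≤ jap x := by
  unfold jap
  rw [← Real.sqrt_eq_rpow]
  exact Real.one_le_sqrt.2 (by nlinarith [sq_nonneg x])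

lemma le_jap {x : ℝ} (_hx : 0 ≤ x) : x ≤ jap x := by
  unfold jap
  rw [← Real.sqrt_eq_rpow]
  exact Real.le_sqrt_of_sq_le (by linarith)

lemma m2_eq (ξ : E2) : m2 ξ = mr ‖ξ‖ := by
  unfold m2 mr
  split_ifs with h
  · rw [h]; simp
  · have hp : 0 < ‖ξ‖ := lt_of_le_of_ne (norm_nonneg _) (Ne.symm h)
    rw [show ‖ξ‖ * Real.tanh ‖ξ‖ = ‖ξ‖ ^ 2 * (Real.tanh ‖ξ‖ / ‖ξ‖) by field_simp,
      Real.sqrt_mul (by positivity), Real.sqrt_sq hp.le]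

lemma tanh_deriv' (r : ℝ) : HasDerivAt Real.tanh (1 - Real.tanh r ^ 2) r := by
  have h : Real.tanh = fun x => Real.sinh x / Real.cosh x := by
    ext x; exact Real.tanh_eq_sinh_div_cosh x
  have hc := (Real.cosh_pos r).ne'
  rw [h]
  refine ((Real.hasDerivAt_sinh r).div (Real.hasDerivAt_cosh r) hc).congr_deriv ?_
  dsimp
  field_simp

lemma one_sub_tanh_sq (r : ℝ) : 1 - Real.tanh r ^ 2 = 1 / Real.cosh r ^ 2 := by
  have hc := (Real.cosh_pos r).ne'
  rw [Real.tanh_eq_sinh_div_cosh]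
  have := Real.cosh_sq r
  field_simp
  linarith

lemma tanh_lower {r : ℝ} (hr : 0 < r) : r / (1 + r) ≤ Real.tanh r := by
  rw [Real.tanh_eq_sinh_div_cosh, div_le_div_iff₀ (by linarith) (Real.cosh_pos r),
    Real.sinh_eq, Real.cosh_eq]
  have h := Real.add_one_le_exp (2 * r)
  have h1 : Real.exp (2 * r) = Real.exp r * Real.exp r := by rw [← Real.exp_add]; ring_nf
  have h2 : Real.exp r * Real.exp (-r) = 1 := by rw [← Real.exp_add]; simp
  have hp := Real.exp_pos (-r)
  have h3 : (2 * r + 1) * Real.exp (-r) ≤ Real.exp r := by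
    calc (2 * r + 1) * Real.exp (-r) ≤ Real.exp (2 * r) * Real.exp (-r) := by gcongr
      _ = Real.exp r := by rw [h1, mul_assoc, h2, mul_one]
  nlinarith

lemma tanh_pos' {r : ℝ} (hr : 0 < r) : 0 < Real.tanh r :=
  lt_of_lt_of_le (by positivity) (tanh_lower hr)

lemma tanh_le_one' (r : ℝ) : Real.tanh r ≤ 1 := by
  have h := one_sub_tanh_sq r
  have : 0 < 1 / Real.cosh r ^ 2 := by have := Real.cosh_pos r; positivity
  nlinarith [sq_nonneg (Real.tanh r)]

lemma mr_hasDeriv {r : ℝ} (hr : 0 < r) : HasDerivAt mr (mp r) r := by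
  have ht := tanh_pos' hr
  have h := ((hasDerivAt_id r).mul (tanh_deriv' r)).sqrt (by simpa using ⟨hr.ne', ht.ne'⟩)
  refine HasDerivAt.congr_deriv (f := mr) h ?_
  simp [mp]

lemma mp_hasDeriv {r : ℝ} (hr : 0 < r) : HasDerivAt mp (mpp r) r := by
  have ht := tanh_pos' hr
  have hp : 0 < r * Real.tanh r := by positivity
  have hs := Real.sqrt_pos.2 hp
  have hss := Real.mul_self_sqrt hp.le
  have h1 := (mr_hasDeriv hr).const_mul 2
  have h2 := (tanh_deriv' r).add ((hasDerivAt_id r).mul (((tanh_deriv' r).pow 2).const_sub 1))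
  have h := h2.div h1 (by unfold mr; positivity)
  refine HasDerivAt.congr_deriv (f := mp) h ?_
  simp only [mpp, mp, mr]
  dsimp
  set S := √(r * Real.tanh r)
  set t := Real.tanh r
  push_cast
  rw [show (4 * (r * t) * S) = 4 * S ^ 3 by rw [← hss]; ring]
  have hS0 : S ≠ 0 := hs.ne'
  field_simp
  have e2 : S ^ 2 = r * t := by rw [sq, hss]
  rw [e2]
  ring

lemma mpp_cont : ContinuousOn mpp (Set.Ioi 0) := by
  have h0 : Continuous Real.tanh := continuous_iff_continuousAt.2 fun x => (tanh_deriv' x).continuousAt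
  unfold mpp
  apply ContinuousOn.div
  · fun_prop
  · fun_prop
  · intro r hr
    have hr : 0 < r := hr
    have ht := tanh_pos' hr
    positivity

lemma mr_cont : Continuous mr := by
  have h0 : Continuous Real.tanh := continuous_iff_continuousAt.2 fun x => (tanh_deriv' x).continuousAt
  unfold mr
  fun_prop

lemma mp_lower {r : ℝ} (hr : 0 < r) : 1 / (2 * √(1 + r)) ≤ mp r := by
  have ht := tanh_pos' hr
  have ht1 := tanh_le_one' r
  have hl := tanh_lower hr
  unfold mp
  have hp : 0 < r * Real.tanh r := by positivity
  have hs := Real.sqrt_pos.2 hp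
  have h1r : 0 < √(1 + r) := Real.sqrt_pos.2 (by linarith)
  rw [div_le_div_iff₀ (by positivity) (by positivity), one_mul]
  have h2 : √(r * Real.tanh r) ≤ Real.tanh r * √(1 + r) := by
    apply Real.sqrt_le_iff.2 ⟨by positivity, ?_⟩
    rw [mul_pow, Real.sq_sqrt (by linarith)]
    rw [div_le_iff₀ (by linarith)] at hl
    nlinarith
  have h3 : 0 ≤ r * (1 - Real.tanh r ^ 2) * √(1 + r) := by
    have : 0 ≤ 1 - Real.tanh r ^ 2 := by nlinarith
    positivity
  nlinarith

lemma mpp_lower {r : ℝ} (hr : 0 < r) : r / (1600 * ((1 + r) ^ 2 * √(1 + r))) ≤ - mpp r := by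
  have ht := tanh_pos' hr
  have ht1 := tanh_le_one' r
  have hl := tanh_lower hr
  have hp : 0 < r * Real.tanh r := by positivity
  have hs := Real.sqrt_pos.2 hp
  have hss := Real.mul_self_sqrt hp.le
  have h1r : 1 ≤ √(1 + r) := Real.one_le_sqrt.2 (by linarith)
  have hch := Real.cosh_pos r
  have ha0 : 0 < 1 - Real.tanh r ^ 2 := by rw [one_sub_tanh_sq]; positivity
  have e : - mpp r = ((Real.tanh r - r * (1 - Real.tanh r ^ 2)) ^ 2
    + 4 * r ^ 2 * Real.tanh r ^ 2 * (1 - Real.tanh r ^ 2)) / (4 * (r * Real.tanh r) * √(r * Real.tanh r)) := by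
    unfold mpp; ring
  rw [e]
  rcases le_total r 1 with h | h
  · have ha : 1 / 9 ≤ 1 - Real.tanh r ^ 2 := by
      rw [one_sub_tanh_sq]
      apply one_div_le_one_div_of_le (by positivity)
      have : Real.cosh r ≤ 3 := by
        rw [Real.cosh_eq]
        have h1 : Real.exp r ≤ Real.exp 1 := Real.exp_le_exp.2 h
        have h2 : Real.exp (-r) ≤ Real.exp 0 := Real.exp_le_exp.2 (by linarith)
        have := Real.exp_one_lt_d9
        rw [Real.exp_zero] at h2
        linarith
      nlinarith
    have hsl : r / 2 ≤ √(r * Real.tanh r) := by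
      apply Real.le_sqrt_of_sq_le
      have : r / 2 ≤ r / (1 + r) := by gcongr; linarith
      nlinarith
    have : r / 18 ≤ ((Real.tanh r - r * (1 - Real.tanh r ^ 2)) ^ 2
    + 4 * r ^ 2 * Real.tanh r ^ 2 * (1 - Real.tanh r ^ 2)) / (4 * (r * Real.tanh r) * √(r * Real.tanh r)) := by
      calc r / 18 = r / 2 * (1 / 9) := by ring
        _ ≤ √(r * Real.tanh r) * (1 - Real.tanh r ^ 2) := by gcongr
        _ = (4 * r ^ 2 * Real.tanh r ^ 2 * (1 - Real.tanh r ^ 2)) / (4 * (r * Real.tanh r) * √(r * Real.tanh r)) := by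
            rw [eq_div_iff (by positivity)]
            linear_combination (4 * (r * Real.tanh r) * (1 - Real.tanh r ^ 2)) * hss
        _ ≤ _ := by
            gcongr
            nlinarith [sq_nonneg (Real.tanh r - r * (1 - Real.tanh r ^ 2))]
    refine le_trans ?_ this
    have h3 : 1 ≤ (1 + r) ^ 2 * √(1 + r) := by nlinarith
    gcongr
    linarith
  · have hc1 : 1 + r ^ 2 / 2 ≤ Real.cosh r := by
      have e1 := Real.cosh_two_mul (r / 2)
      have e2 := Real.cosh_sq (r / 2)
      have e3 : r / 2 ≤ Real.sinh (r / 2) := Real.self_le_sinh_iff.2 (by linarith)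
      rw [show 2 * (r / 2) = r by ring] at e1
      nlinarith
    have hra : r * (1 - Real.tanh r ^ 2) ≤ 9 / 20 := by
      rw [one_sub_tanh_sq, mul_one_div, div_le_iff₀ (by positivity)]
      have : (1 + r ^ 2 / 2)^2 ≤ Real.cosh r ^ 2 := by gcongr
      nlinarith [sq_nonneg (r^2 - 1)]
    have hth : 1 / 2 ≤ Real.tanh r := by
      refine le_trans ?_ hl
      rw [div_le_div_iff₀ (by norm_num) (by linarith)]; linarith
    have hd : 1 / 20 ≤ Real.tanh r - r * (1 - Real.tanh r ^ 2) := by linarith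
    calc r / (1600 * ((1 + r) ^ 2 * √(1 + r))) ≤ r / (1600 * ((r ^ 2) * √r)) := by
          have : 0 < √r := Real.sqrt_pos.2 hr
          gcongr <;> linarith
      _ = (1 / 20) ^ 2 / (4 * (r * 1) * √(r * 1)) := by
          have : 0 < √r := Real.sqrt_pos.2 hr
          simp only [mul_one]
          field_simp; norm_num
      _ ≤ (Real.tanh r - r * (1 - Real.tanh r ^ 2)) ^ 2 / (4 * (r * Real.tanh r) * √(r * Real.tanh r)) := by
          gcongr
      _ ≤ _ := by
          gcongr
          have : 0 ≤ 4 * r ^ 2 * Real.tanh r ^ 2 * (1 - Real.tanh r ^ 2) := by positivity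
          linarith

lemma mp_lower' {r N : ℝ} (hN : 0 < N) (h1 : N / 2 ≤ r) (h2 : r ≤ 2 * N) :
    1 / (4 * √(jap N)) ≤ mp r := by
  refine le_trans ?_ (mp_lower (by linarith))
  have := one_le_jap N
  have := le_jap hN.le
  have h0 : 0 < √(1 + r) := Real.sqrt_pos.2 (by linarith)
  apply one_div_le_one_div_of_le (by positivity)
  have : √(1 + r) ≤ 2 * √(jap N) := by
    rw [show (2:ℝ) = √4 by rw [show (4:ℝ) = 2^2 by norm_num]; simp, ← Real.sqrt_mul (by norm_num)]
    apply Real.sqrt_le_sqrt; linarith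
  linarith

lemma mpp_lower' {r N : ℝ} (hN : 0 < N) (h1 : N / 2 ≤ r) (h2 : r ≤ 2 * N) :
    N / (57600 * (jap N ^ 2 * √(jap N))) ≤ - mpp r := by
  refine le_trans ?_ (mpp_lower (by linarith))
  have hj := one_le_jap N
  have := le_jap hN.le
  have h0 : 0 < √(1 + r) := Real.sqrt_pos.2 (by linarith)
  have h3 : √(1 + r) ≤ 2 * √(jap N) := by
    rw [show (2:ℝ) = √4 by rw [show (4:ℝ) = 2^2 by norm_num]; simp, ← Real.sqrt_mul (by norm_num)]
    apply Real.sqrt_le_sqrt; linarith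
  calc N / (57600 * (jap N ^ 2 * √(jap N))) = (N/2) / (1600 * ((3 * jap N)^2 * (2 * √(jap N)))) := by
        field_simp; norm_num
    _ ≤ _ := by
        have : 0 < r := by linarith
        have : 1 + r ≤ 3 * jap N := by linarith
        gcongr

end part3

section part4
section radial
variable {μ lam τ y : ℝ}

def rph (μ τ : ℝ) (r : ℝ) : ℝ := τ / √μ * mr (√μ * r)

lemma rph_d (hμ : 0 < μ) {r : ℝ} (hr : 0 < r) :
    HasDerivAt (rph μ τ) (τ * mp (√μ * r)) r := by
  have hs : 0 < √μ := Real.sqrt_pos.2 hμ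
  have h1 : HasDerivAt (fun r => √μ * r) (√μ * 1) r := (hasDerivAt_id r).const_mul _
  have h2 := (mr_hasDeriv (r := √μ * r) (by positivity)).comp r h1
  refine (h2.const_mul (τ / √μ)).congr_deriv ?_
  field_simp

lemma rph_dd (hμ : 0 < μ) {r : ℝ} (hr : 0 < r) :
    HasDerivAt (fun r => τ * mp (√μ * r)) (τ * √μ * mpp (√μ * r)) r := by
  have hs : 0 < √μ := Real.sqrt_pos.2 hμ
  have h1 : HasDerivAt (fun r => √μ * r) (√μ * 1) r := (hasDerivAt_id r).const_mul _
  have h2 := (mp_hasDeriv (r := √μ * r) (by positivity)).comp r h1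
  refine (h2.const_mul τ).congr_deriv ?_
  ring

lemma rph_c (hμ : 0 < μ) {a b : ℝ} (ha : 0 < a) :
    ContinuousOn (fun r => τ * √μ * mpp (√μ * r)) (Set.Icc a b) := by
  have hs : 0 < √μ := Real.sqrt_pos.2 hμ
  apply ContinuousOn.mul continuousOn_const
  refine mpp_cont.comp (by fun_prop) ?_
  intro r hr
  have := hr.1
  exact Set.mem_Ioi.2 (mul_pos hs (by linarith))

def dK (μ lam : ℝ) : ℝ := jap (√μ * lam) * √(jap (√μ * lam)) / √μ

/-- The second derivative of the phase has a sign and a lower bound. -/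
lemma rph_sign (hμ : 0 < μ) (hl : 0 < lam) (hτ : τ ≠ 0) {ρ : ℝ}
    (hρ : ρ = |τ| * (√μ * ((√μ * lam) / (57600 * (jap (√μ * lam) ^ 2 * √(jap (√μ * lam))))))) :
    (∀ r ∈ Set.Icc (lam / 2) (2 * lam), ρ ≤ τ * √μ * mpp (√μ * r)) ∨
    (∀ r ∈ Set.Icc (lam / 2) (2 * lam), τ * √μ * mpp (√μ * r) ≤ -ρ) := by
  have hs : 0 < √μ := Real.sqrt_pos.2 hμ
  have key : ∀ r ∈ Set.Icc (lam / 2) (2 * lam), ρ ≤ |τ| * √μ * - mpp (√μ * r) := by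
    intro r hr
    rw [hρ, mul_assoc]
    have : (√μ * lam) / (57600 * (jap (√μ * lam) ^ 2 * √(jap (√μ * lam)))) ≤ - mpp (√μ * r) := by
      apply mpp_lower' (by positivity)
      · rw [mul_div_assoc]; exact mul_le_mul_of_nonneg_left hr.1 hs.le
      · rw [show 2 * (√μ * lam) = √μ * (2 * lam) by ring]; exact mul_le_mul_of_nonneg_left hr.2 hs.le
    gcongr
  rcases lt_or_gt_of_ne hτ with h | h
  · left
    intro r hr
    have := key r hr
    rw [abs_of_neg h] at this
    linarith
  · right
    intro r hr
    have := key r hr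
    rw [abs_of_pos h] at this
    linarith

lemma rph_low (hμ : 0 < μ) (hl : 0 < lam) :
    ∀ r ∈ Set.Icc (lam / 2) (2 * lam), |τ| * (1 / (4 * √(jap (√μ * lam)))) ≤ |τ * mp (√μ * r)| := by
  have hs : 0 < √μ := Real.sqrt_pos.2 hμ
  intro r hr
  have : 1 / (4 * √(jap (√μ * lam))) ≤ mp (√μ * r) := by
    apply mp_lower' (by positivity)
    · rw [mul_div_assoc]; exact mul_le_mul_of_nonneg_left hr.1 hs.le
    · rw [show 2 * (√μ * lam) = √μ * (2 * lam) by ring]; exact mul_le_mul_of_nonneg_left hr.2 hs.le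
  rw [abs_mul]
  gcongr
  exact this.trans (le_abs_self _)

lemma lam_le_dK (hμ : 0 < μ) (hl : 0 < lam) : lam * √(jap (√μ * lam)) ≤ dK μ lam := by
  have hs : 0 < √μ := Real.sqrt_pos.2 hμ
  unfold dK
  rw [le_div_iff₀ hs]
  have := le_jap (x := √μ * lam) (by positivity)
  have h2 : 0 ≤ √(jap (√μ * lam)) := Real.sqrt_nonneg _
  nlinarith

lemma nonstat_aux (hμ : 0 < μ) (hl : 0 < lam) (hτ : τ ≠ 0) {c : ℝ} (hc : 0 ≤ c) :
    c * lam / (|τ| * (1 / (4 * √(jap (√μ * lam))))) ≤ 4 * c * dK μ lam / |τ| := by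
  have hτ' : 0 < |τ| := abs_pos.2 hτ
  have hj : 0 < √(jap (√μ * lam)) := Real.sqrt_pos.2 (by linarith [one_le_jap (√μ * lam)])
  have h := lam_le_dK hμ hl
  rw [show c * lam / (|τ| * (1 / (4 * √(jap (√μ * lam))))) = 4 * c * (lam * √(jap (√μ * lam))) / |τ| by
    field_simp]
  gcongr

/-- small `y` -/
lemma rad_A (hμ : 0 < μ) (hl : 0 < lam) (hτ : τ ≠ 0) (hy : 0 ≤ y) (hly : lam * y ≤ 2) :
    ‖∫ r in (lam/2)..(2*lam), Complex.exp (Complex.I * (rph μ τ r : ℝ)) * ((r * bJ (r * y) : ℝ) : ℂ)‖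
      ≤ 480 * dK μ lam / |τ| := by
  have hτ' : 0 < |τ| := abs_pos.2 hτ
  have hs : 0 < √μ := Real.sqrt_pos.2 hμ
  have hj1 := one_le_jap (√μ * lam)
  have hj : 0 < √(jap (√μ * lam)) := Real.sqrt_pos.2 (by linarith)
  have h0 : Continuous bJ := continuous_iff_continuousAt.2 fun x => (bJ_hasDeriv x).continuousAt
  have h1 : Continuous bJ1 := continuous_iff_continuousAt.2 fun x => (bJ1_hasDeriv x).continuousAt
  have := vdc1' (φ := rph μ τ) (a := lam/2) (b := 2 * lam) (κ := |τ| * (1 / (4 * √(jap (√μ * lam)))))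
    (A := fun r => ((r * bJ (r * y) : ℝ) : ℂ))
    (A' := fun r => ((1 * bJ (r * y) + r * (bJ1 (r * y) * (1 * y)) : ℝ) : ℂ))
    (M := 14 * lam) (M' := 40)
    (by linarith) (by positivity)
    (fun r hr => rph_d hμ (by linarith [hr.1])) (fun r hr => rph_dd hμ (by linarith [hr.1]))
    (rph_c hμ (by linarith))
    (by
      have hρ : 0 ≤ |τ| * (√μ * ((√μ * lam) / (57600 * (jap (√μ * lam) ^ 2 * √(jap (√μ * lam)))))) := by
        positivity
      rcases rph_sign hμ hl hτ rfl with h | h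
      · left; intro r hr; exact hρ.trans (h r hr)
      · right; intro r hr; have := h r hr; linarith)
    (rph_low hμ hl)
    (fun r hr => HasDerivAt.ofReal_comp ((hasDerivAt_id r).mul
      (show HasDerivAt (fun r => bJ (r * y)) (bJ1 (r * y) * (1 * y)) r from
        HasDerivAt.comp (h₂ := bJ) (h := fun r => r * y) r (bJ_hasDeriv (r * y))
          ((hasDerivAt_id r).mul_const y))))
    (by apply Continuous.continuousOn; apply Complex.continuous_ofReal.comp; fun_prop)
    (fun r hr => by
      have : 0 < r := by linarith [hr.1]
      rw [Complex.norm_real, Real.norm_eq_abs, abs_mul, abs_of_pos this]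
      have := bJ_bd (r * y)
      have := hr.2
      nlinarith [abs_nonneg (bJ (r*y))])
    (fun r hr => by
      have h0 : 0 < r := by linarith [hr.1]
      rw [Complex.norm_real, Real.norm_eq_abs]
      have b0 := bJ_bd (r * y)
      have b1 := bJ1_bd (r * y)
      have h2 : r * y ≤ 4 := by have := hr.2; nlinarith
      have h3 : |r * (bJ1 (r * y) * (1 * y))| ≤ 28 := by
        rw [show r * (bJ1 (r * y) * (1 * y)) = (r * y) * bJ1 (r * y) by ring, abs_mul,
          abs_of_nonneg (by positivity)]
        have : 0 ≤ r * y := by positivity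
        nlinarith [abs_nonneg (bJ1 (r*y))]
      have := abs_add_le (1 * bJ (r * y)) (r * (bJ1 (r * y) * (1 * y)))
      rw [one_mul] at this ⊢
      linarith)
  refine this.trans ?_
  have e : 4 * (14 * lam) + 40 * (2 * lam - lam / 2) ≤ 120 * lam := by linarith
  refine (div_le_div_of_nonneg_right e (by positivity)).trans ?_
  refine (nonstat_aux hμ hl hτ (by norm_num)).trans (le_of_eq (by ring))

/-- large `y` -/
lemma rad_BC (hμ : 0 < μ) (hl : 0 < lam) (hτ : τ ≠ 0) (hly : 2 < lam * y)
    {ε : ℝ} (hε : |ε| = 1) {B B' : ℝ → ℂ} (hB : ∀ s, 0 < s → HasDerivAt B (B' s) s)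
    (hB'c : ContinuousOn B' (Set.Ioi 0)) (hb : ∀ s, 1 ≤ s → ‖B s‖ ≤ 25 / √s)
    (hb' : ∀ s, 1 ≤ s → ‖B' s‖ ≤ 15 / (s * √s)) :
    ‖∫ r in (lam/2)..(2*lam), Complex.exp (Complex.I * ((rph μ τ r + ε * y * r : ℝ) : ℂ)) *
        ((r : ℂ) * B (r * y))‖ ≤ 1200000 * dK μ lam / |τ| := by
  have hτ' : 0 < |τ| := abs_pos.2 hτ
  have hs : 0 < √μ := Real.sqrt_pos.2 hμ
  have hj1 := one_le_jap (√μ * lam)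
  have hj : 0 < √(jap (√μ * lam)) := Real.sqrt_pos.2 (by linarith)
  have hy : 0 < y := by
    by_contra h
    have : lam * y ≤ 0 := mul_nonpos_of_nonneg_of_nonpos hl.le (by linarith)
    linarith
  set g := 1 / √(lam * y / 2) with hg
  have hg0 : 0 < g := by positivity
  have hg1 : g ≤ 1 := by
    rw [hg, div_le_one (by positivity)]
    exact Real.one_le_sqrt.2 (by linarith)
  have hsge : ∀ r ∈ Set.Icc (lam / 2) (2 * lam), 1 ≤ r * y := fun r hr => by
    have := hr.1; nlinarith
  have hgr : ∀ r ∈ Set.Icc (lam / 2) (2 * lam), 1 / √(r * y) ≤ g := fun r hr => by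
    rw [hg]
    apply one_div_le_one_div_of_le (by positivity)
    apply Real.sqrt_le_sqrt
    have := hr.1; nlinarith
  have hA : ∀ r ∈ Set.Icc (lam / 2) (2 * lam), HasDerivAt (fun r : ℝ => (r : ℂ) * B (r * y))
      (1 * B (r * y) + r * ((1 * y) • B' (r * y))) r := fun r hr => by
    have hid : HasDerivAt (fun x : ℝ => (x : ℂ)) 1 r := Complex.ofRealCLM.hasDerivAt
    refine hid.mul ?_
    exact HasDerivAt.scomp r (hB (r * y) (by linarith [hsge r hr])) ((hasDerivAt_id r).mul_const y)
  have hBc : ContinuousOn B (Set.Ioi 0) := fun s hs => (hB s hs).continuousAt.continuousWithinAt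
  have hmaps : Set.MapsTo (fun r => r * y) (Set.Icc (lam / 2) (2 * lam)) (Set.Ioi 0) := fun r hr =>
    Set.mem_Ioi.2 (by linarith [hsge r hr])
  have hA'c : ContinuousOn (fun r : ℝ => 1 * B (r * y) + r * ((1 * y) • B' (r * y))) (Set.Icc (lam / 2) (2 * lam)) := by
    have c1 : ContinuousOn (fun r => B (r * y)) (Set.Icc (lam / 2) (2 * lam)) :=
      hBc.comp (f := fun r => r * y) (by fun_prop) hmaps
    have c2 : ContinuousOn (fun r => B' (r * y)) (Set.Icc (lam / 2) (2 * lam)) :=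
      hB'c.comp (f := fun r => r * y) (by fun_prop) hmaps
    exact (c1.const_mul 1).add (Complex.continuous_ofReal.continuousOn.mul (continuousOn_const.fun_smul c2))
  have hM : ∀ r ∈ Set.Icc (lam / 2) (2 * lam), ‖(r : ℂ) * B (r * y)‖ ≤ 50 * lam * g := fun r hr => by
    have h0 : 0 < r := by linarith [hr.1]
    rw [norm_mul, Complex.norm_real, Real.norm_eq_abs, abs_of_pos h0]
    have h1 := hb _ (hsge r hr)
    have h2 := hgr r hr
    have h3 : ‖B (r * y)‖ ≤ 25 * g := by
      refine h1.trans ?_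
      rw [div_eq_mul_one_div]; linarith
    have := hr.2
    calc r * ‖B (r * y)‖ ≤ (2 * lam) * (25 * g) := by gcongr
      _ = _ := by ring
  have hM' : ∀ r ∈ Set.Icc (lam / 2) (2 * lam),
      ‖1 * B (r * y) + r * ((1 * y) • B' (r * y))‖ ≤ 40 * g := fun r hr => by
    have h0 : 0 < r := by linarith [hr.1]
    have hry := hsge r hr
    have h1 := hb _ hry
    have h1' := hb' _ hry
    have h2 := hgr r hr
    have hsq : 0 < √(r * y) := Real.sqrt_pos.2 (by linarith)
    have h3 : ‖B (r * y)‖ ≤ 25 * g := by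
      refine h1.trans ?_
      rw [div_eq_mul_one_div]; linarith
    have h4 : ‖(r : ℂ) * ((1 * y) • B' (r * y))‖ ≤ 15 * g := by
      rw [norm_mul, norm_smul, Complex.norm_real, Real.norm_eq_abs, abs_of_pos h0, one_mul,
        Real.norm_eq_abs, abs_of_pos hy, ← mul_assoc]
      calc r * y * ‖B' (r * y)‖ ≤ r * y * (15 / (r * y * √(r * y))) := by gcongr
        _ = 15 * (1 / √(r * y)) := by field_simp
        _ ≤ 15 * g := by linarith
    refine (norm_add_le _ _).trans ?_
    rw [one_mul]; linarith
  have hd1 : ∀ r ∈ Set.Icc (lam / 2) (2 * lam), HasDerivAt (fun r => rph μ τ r + ε * y * r)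
      (τ * mp (√μ * r) + ε * y) r := fun r hr => by
    have := (rph_d (τ := τ) hμ (r := r) (by linarith [hr.1])).add ((hasDerivAt_id r).const_mul (ε * y))
    rw [mul_one] at this
    exact this
  have hd2 : ∀ r ∈ Set.Icc (lam / 2) (2 * lam), HasDerivAt (fun r => τ * mp (√μ * r) + ε * y)
      (τ * √μ * mpp (√μ * r)) r := fun r hr =>
    (rph_dd (τ := τ) hμ (r := r) (by linarith [hr.1])).add_const _
  set k := 1 / (4 * √(jap (√μ * lam))) with hk
  have hk0 : 0 < k := by positivity
  set ρ := |τ| * (√μ * ((√μ * lam) / (57600 * (jap (√μ * lam) ^ 2 * √(jap (√μ * lam)))))) with hρ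
  have hρ0 : 0 < ρ := by positivity
  rcases le_total y (|τ| * k / 2) with hcase | hcase
  · have := vdc1' (φ := fun r => rph μ τ r + ε * y * r) (κ := |τ| * k / 2) (by linarith) (by positivity)
      hd1 hd2 (rph_c hμ (by linarith))
      (by
        rcases rph_sign hμ hl hτ hρ with h | h
        · left; intro r hr; exact hρ0.le.trans (h r hr)
        · right; intro r hr; have := h r hr; linarith)
      (fun r hr => by
        have h1 := rph_low (τ := τ) hμ hl r hr
        rw [← hk] at h1
        have h2 : |ε * y| = y := by rw [abs_mul, hε, one_mul, abs_of_pos hy]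
        have h3 := abs_sub_abs_le_abs_sub (τ * mp (√μ * r)) (-(ε * y))
        rw [abs_neg, h2, sub_neg_eq_add] at h3
        linarith) hA hA'c hM hM'
    refine this.trans ?_
    have e : 4 * (50 * lam * g) + 40 * g * (2 * lam - lam / 2) ≤ 260 * lam := by nlinarith
    refine (div_le_div_of_nonneg_right e (by positivity)).trans ?_
    rw [show 260 * lam / (|τ| * k / 2) = 520 * lam / (|τ| * k) by field_simp; norm_num]
    refine (nonstat_aux hμ hl hτ (by norm_num)).trans ?_
    have : 0 ≤ dK μ lam := by unfold dK; positivity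
    gcongr
    norm_num
  · have := vdc2' (φ := fun r => rph μ τ r + ε * y * r) (ρ := ρ) (by linarith) hρ0
      hd1 hd2 (rph_c hμ (by linarith)) (rph_sign hμ hl hτ hρ) hA hA'c hM hM'
    refine this.trans ?_
    have e : 18 * (50 * lam * g) + 4 * (40 * g) * (2 * lam - lam / 2) = 1140 * lam * g := by ring
    rw [e]
    have hg2 : g ≤ 1 / √(lam * (|τ| * k) / 4) := by
      rw [hg]
      apply one_div_le_one_div_of_le (by positivity)
      apply Real.sqrt_le_sqrt
      nlinarith
    have hfin : √(lam * (|τ| * k) / 4) * √ρ = |τ| * lam * √μ / (960 * (jap (√μ * lam) * √(jap (√μ * lam)))) := by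
      rw [← Real.sqrt_mul (by positivity)]
      rw [Real.sqrt_eq_iff_mul_self_eq (by positivity) (by positivity)]
      rw [hρ, hk]
      have hJJ := Real.mul_self_sqrt (show 0 ≤ jap (√μ * lam) by linarith)
      set S := √(jap (√μ * lam))
      rw [← hJJ]
      field_simp
      ring
    calc 1140 * lam * g / √ρ ≤ 1140 * lam * (1 / √(lam * (|τ| * k) / 4)) / √ρ := by gcongr
      _ = 1140 * lam / (√(lam * (|τ| * k) / 4) * √ρ) := by field_simp
      _ = 1094400 * dK μ lam / |τ| := by
          rw [hfin]
          unfold dK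
          field_simp
          norm_num
          ring
      _ ≤ _ := by
          have : 0 ≤ dK μ lam := by unfold dK; positivity
          gcongr
          norm_num

lemma rad_main (hμ : 0 < μ) (hl : 0 < lam) (hτ : τ ≠ 0) (hy : 0 ≤ y) :
    ‖∫ r in (lam/2)..(2*lam), Complex.exp (Complex.I * (rph μ τ r : ℝ)) * ((r * bJ (r * y) : ℝ) : ℂ)‖
      ≤ 2400000 * dK μ lam / |τ| := by
  have hτ' : 0 < |τ| := abs_pos.2 hτ
  have hj1 := one_le_jap (√μ * lam)
  have hd : 0 ≤ dK μ lam := by unfold dK; positivity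
  rcases le_or_gt (lam * y) 2 with h | h
  · refine (rad_A hμ hl hτ hy h).trans ?_
    gcongr
    norm_num
  · have h1 := rad_BC (μ := μ) hμ hl hτ h (ε := 1) (by simp) (fun s hs => bB_hasDeriv hs) bB'_cont
      (fun s hs => (bB_bd hs).1) (fun s hs => (bB_bd hs).2)
    have h2 := rad_BC (μ := μ) hμ hl hτ h (ε := -1) (by simp) (B := fun s => (starRingEnd ℂ) (bB s))
      (B' := fun s => (starRingEnd ℂ) (bB' s))
      (fun s hs => (bB_hasDeriv hs).star) (Complex.continuous_conj.comp_continuousOn bB'_cont)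
      (fun s hs => by simpa using (bB_bd hs).1) (fun s hs => by simpa using (bB_bd hs).2)
    have hy' : 0 < y := by
      by_contra h
      have : lam * y ≤ 0 := mul_nonpos_of_nonneg_of_nonpos hl.le (by linarith)
      linarith
    have hBc : ContinuousOn (fun r => bB (r * y)) (Set.Icc (lam/2) (2*lam)) := fun r hr =>
      ((bB_hasDeriv (s := r * y) (mul_pos (by linarith [hr.1]) hy')).continuousAt.comp
        (f := fun r => r * y) (by fun_prop)).continuousWithinAt
    have hrc : ContinuousOn (rph μ τ) (Set.Icc (lam/2) (2*lam)) := fun r hr =>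
      (rph_d hμ (by linarith [hr.1])).continuousAt.continuousWithinAt
    have hexpc : ∀ ε : ℝ, ContinuousOn (fun r => Complex.exp (Complex.I * ((rph μ τ r + ε * y * r : ℝ) : ℂ)))
        (Set.Icc (lam/2) (2*lam)) := fun ε => by
      apply Continuous.comp_continuousOn (g := fun x : ℝ => Complex.exp (Complex.I * (x : ℂ)))
      · have := Complex.continuous_ofReal
        fun_prop
      · fun_prop
    have hsplit : ∫ r in (lam/2)..(2*lam), Complex.exp (Complex.I * (rph μ τ r : ℝ)) * ((r * bJ (r * y) : ℝ) : ℂ)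
      = (∫ r in (lam/2)..(2*lam), Complex.exp (Complex.I * ((rph μ τ r + 1 * y * r : ℝ) : ℂ)) *
        ((r : ℂ) * bB (r * y))) + ∫ r in (lam/2)..(2*lam), Complex.exp (Complex.I * ((rph μ τ r + (-1) * y * r : ℝ) : ℂ)) *
        ((r : ℂ) * (starRingEnd ℂ) (bB (r * y))) := by
      rw [← intervalIntegral.integral_add]
      · congr 1
        ext r
        rw [Complex.ofReal_mul, bJ_eq]
        have e1 : Complex.exp (Complex.I * ((rph μ τ r + 1 * y * r : ℝ) : ℂ)) =
          Complex.exp (Complex.I * (rph μ τ r : ℝ)) * Complex.exp (Complex.I * (r * y : ℝ)) := by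
          rw [← Complex.exp_add]; congr 1; push_cast; ring
        have e2 : Complex.exp (Complex.I * ((rph μ τ r + (-1) * y * r : ℝ) : ℂ)) =
          Complex.exp (Complex.I * (rph μ τ r : ℝ)) * Complex.exp (-(Complex.I * (r * y : ℝ))) := by
          rw [← Complex.exp_add]; congr 1; push_cast; ring
        rw [e1, e2]
        ring
      · apply ContinuousOn.intervalIntegrable
        rw [Set.uIcc_of_le (by linarith)]
        exact (hexpc 1).mul (Complex.continuous_ofReal.continuousOn.mul hBc)
      · apply ContinuousOn.intervalIntegrable
        rw [Set.uIcc_of_le (by linarith)]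
        exact (hexpc (-1)).mul (Complex.continuous_ofReal.continuousOn.mul (Complex.continuous_conj.comp_continuousOn hBc))
    rw [hsplit]
    refine (norm_add_le _ _).trans ?_
    have : 2400000 * dK μ lam / |τ| = 1200000 * dK μ lam / |τ| + 1200000 * dK μ lam / |τ| := by ring
    rw [this]
    exact add_le_add h1 h2

end radial

end part4

section part5

/-! ### The kernel in polar coordinates -/

lemma integral_E2_polar (F : E2 → ℂ) :
    ∫ ξ : E2, F ξ = ∫ p in Set.Ioi (0 : ℝ) ×ˢ Set.Ioo (-Real.pi) Real.pi,
      p.1 • F !₂[p.1 * Real.cos p.2, p.1 * Real.sin p.2] := by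
  have h1 := (((EuclideanSpace.volume_preserving_symm_measurableEquiv_toLp (Fin 2)).trans
    (volume_preserving_finTwoArrow ℝ)).symm).integral_comp' F
  rw [← h1, ← integral_comp_polarCoord_symm]
  rfl

/-- The annulus of frequencies. -/
def Om (lam : ℝ) : Set E2 := {ξ | lam / 2 ≤ ‖ξ‖ ∧ ‖ξ‖ ≤ 2 * lam}

lemma Om_meas (lam : ℝ) : MeasurableSet (Om lam) :=
  (measurableSet_le measurable_const measurable_norm).inter
    (measurableSet_le measurable_norm measurable_const)

lemma norm_polar {r θ : ℝ} (hr : 0 < r) : ‖(!₂[r * Real.cos θ, r * Real.sin θ] : E2)‖ = r := by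
  rw [EuclideanSpace.norm_eq]
  simp only [Fin.sum_univ_two]
  simp only [Real.norm_eq_abs, sq_abs]
  change √((r * Real.cos θ) ^ 2 + (r * Real.sin θ) ^ 2) = r
  have : (r * Real.cos θ) ^ 2 + (r * Real.sin θ) ^ 2 = r ^ 2 := by
    nlinarith [Real.sin_sq_add_cos_sq θ]
  rw [this, Real.sqrt_sq hr.le]

lemma E2_polar_form (z : E2) : ∃ α : ℝ, z.ofLp 0 = ‖z‖ * Real.cos α ∧ z.ofLp 1 = ‖z‖ * Real.sin α := by
  refine ⟨Complex.arg ⟨z.ofLp 0, z.ofLp 1⟩, ?_⟩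
  have hn : ‖z‖ = ‖(⟨z.ofLp 0, z.ofLp 1⟩ : ℂ)‖ := by
    rw [EuclideanSpace.norm_eq, Complex.norm_eq_sqrt_sq_add_sq]
    simp [Fin.sum_univ_two]
  rw [hn, Complex.norm_mul_cos_arg, Complex.norm_mul_sin_arg]
  exact ⟨rfl, rfl⟩

lemma ang_int (s α : ℝ) :
    ∫ θ in (-Real.pi)..Real.pi, Complex.exp (Complex.I * ((s * Real.cos (θ - α) : ℝ) : ℂ)) = bJ s := by
  rw [← bJ_cexp, intervalIntegral.integral_comp_sub_right
    (fun θ => Complex.exp (Complex.I * ((s * Real.cos θ : ℝ) : ℂ)))]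
  have hp : Function.Periodic (fun θ => Complex.exp (Complex.I * ((s * Real.cos θ : ℝ) : ℂ))) (2 * Real.pi) := by
    intro θ
    simp only [Real.cos_add_two_pi]
  have := hp.intervalIntegral_add_eq (-Real.pi - α) (-Real.pi)
  rw [show -Real.pi - α + 2 * Real.pi = Real.pi - α by ring,
    show -Real.pi + 2 * Real.pi = Real.pi by ring] at this
  exact this

lemma kernel_bd {μ lam τ : ℝ} (hμ : 0 < μ) (hl : 0 < lam) (hτ : τ ≠ 0) (z : E2) :
    ‖∫ ξ in Om lam, Complex.exp (Complex.I * ((2 * Real.pi * inner ℝ ξ z : ℝ) : ℂ)) *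
      Complex.exp (Complex.I * (rph μ τ ‖ξ‖ : ℝ))‖ ≤ 2400000 * dK μ lam / |τ| := by
  obtain ⟨α, h0, h1⟩ := E2_polar_form z
  have hl2 : lam / 2 ≤ 2 * lam := by linarith
  set G : ℝ × ℝ → ℂ := fun p =>
    p.1 • (Complex.exp (Complex.I * ((p.1 * (2 * Real.pi * ‖z‖) * Real.cos (p.2 - α) : ℝ) : ℂ)) *
      Complex.exp (Complex.I * (rph μ τ p.1 : ℝ))) with hG
  have hrc : Continuous (rph μ τ) := by
    unfold rph
    exact continuous_const.mul (mr_cont.comp (by fun_prop))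
  have hGc : Continuous G := by
    rw [hG]
    have : Continuous (fun p : ℝ × ℝ => rph μ τ p.1) := hrc.comp continuous_fst
    fun_prop
  have key : ∫ ξ in Om lam, Complex.exp (Complex.I * ((2 * Real.pi * inner ℝ ξ z : ℝ) : ℂ)) *
      Complex.exp (Complex.I * (rph μ τ ‖ξ‖ : ℝ)) =
      ∫ p in Set.Icc (lam / 2) (2 * lam) ×ˢ Set.Ioo (-Real.pi) Real.pi, G p := by
    rw [← integral_indicator (Om_meas lam), integral_E2_polar]
    have hsub : Set.Icc (lam / 2) (2 * lam) ×ˢ Set.Ioo (-Real.pi) Real.pi ⊆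
      Set.Ioi (0 : ℝ) ×ˢ Set.Ioo (-Real.pi) Real.pi :=
      Set.prod_mono (fun r hr => Set.mem_Ioi.2 (by linarith [hr.1])) le_rfl
    have hm : MeasurableSet (Set.Icc (lam / 2) (2 * lam) ×ˢ Set.Ioo (-Real.pi) Real.pi) :=
      measurableSet_Icc.prod measurableSet_Ioo
    have hm' : MeasurableSet (Set.Ioi (0 : ℝ) ×ˢ Set.Ioo (-Real.pi) Real.pi) :=
      measurableSet_Ioi.prod measurableSet_Ioo
    rw [← integral_indicator hm, ← integral_indicator hm']
    congr 1
    ext p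
    by_cases hp : p ∈ Set.Ioi (0 : ℝ) ×ˢ Set.Ioo (-Real.pi) Real.pi
    · rw [Set.indicator_of_mem hp]
      have hp0 : 0 < p.1 := hp.1
      by_cases hp2 : p ∈ Set.Icc (lam / 2) (2 * lam) ×ˢ Set.Ioo (-Real.pi) Real.pi
      · have : (!₂[p.1 * Real.cos p.2, p.1 * Real.sin p.2] : E2) ∈ Om lam := by
          unfold Om
          rw [Set.mem_ofPred_eq, norm_polar hp0]
          exact hp2.1
        rw [Set.indicator_of_mem hp2, Set.indicator_of_mem this, norm_polar hp0]
        have hin : inner ℝ (!₂[p.1 * Real.cos p.2, p.1 * Real.sin p.2] : E2) z =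
          p.1 * ‖z‖ * Real.cos (p.2 - α) := by
          rw [PiLp.inner_apply]
          simp only [Fin.sum_univ_two]
          rw [h0, h1, Real.cos_sub]
          simp
          ring
        rw [hin, hG]
        simp only
        congr 5
        ring_nf
      · have : (!₂[p.1 * Real.cos p.2, p.1 * Real.sin p.2] : E2) ∉ Om lam := by
          unfold Om
          rw [Set.mem_ofPred_eq, norm_polar hp0]
          exact fun h => hp2 ⟨h, hp.2⟩
        rw [Set.indicator_of_notMem hp2, Set.indicator_of_notMem this, smul_zero]
    · rw [Set.indicator_of_notMem hp, Set.indicator_of_notMem (fun h => hp (hsub h))]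
  have hintg : IntegrableOn G (Set.Icc (lam / 2) (2 * lam) ×ˢ Set.Ioo (-Real.pi) Real.pi)
      ((volume : Measure ℝ).prod volume) := by
    have : IntegrableOn G (Set.Icc (lam / 2) (2 * lam) ×ˢ Set.Icc (-Real.pi) Real.pi) volume :=
      hGc.continuousOn.integrableOn_compact (isCompact_Icc.prod isCompact_Icc)
    exact this.mono_set (Set.prod_mono le_rfl Set.Ioo_subset_Icc_self)
  rw [key, show (volume : Measure (ℝ × ℝ)) = (volume : Measure ℝ).prod volume from rfl,
    setIntegral_prod _ hintg, integral_Icc_eq_integral_Ioc, ← intervalIntegral.integral_of_le hl2]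
  refine le_trans (le_of_eq ?_) (rad_main hμ hl hτ (y := 2 * Real.pi * ‖z‖) (by positivity))
  congr 2
  ext r
  rw [← integral_Ioc_eq_integral_Ioo, ← intervalIntegral.integral_of_le (by linarith [Real.pi_pos])]
  rw [hG]
  simp only
  rw [intervalIntegral.integral_smul, intervalIntegral.integral_mul_const, ang_int,
    Complex.real_smul]
  push_cast
  ring

end part5

section part6

/-! ### Plancherel for `L¹ ∩ L²` -/

lemma fourier_cont {f : E2 → ℂ} (hf : Integrable f) : Continuous (𝓕 f) :=
  VectorFourier.fourierIntegral_continuous Real.continuous_fourierChar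
    (by exact continuous_inner) hf

lemma plancherel {f : E2 → ℂ} (h1 : Integrable f) (h2 : MemLp f 2) :
    eLpNorm (𝓕 f) 2 volume = eLpNorm f 2 volume := by
  set F : Lp ℂ 2 (volume : Measure E2) := h2.toLp f with hF
  have hae : ∀ᵐ x, 𝓕 f x = (𝓕 F : Lp ℂ 2 (volume : Measure E2)) x := by
    apply ae_eq_of_integral_contDiff_smul_eq
    · exact (fourier_cont h1).locallyIntegrable
    · exact (Lp.memLp (𝓕 F)).locallyIntegrable (by norm_num)
    intro g g_smooth g_cpt
    have hg₁ : HasCompactSupport (Complex.ofRealCLM ∘ g) := g_cpt.comp_left rfl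
    have hg₂ : ContDiff ℝ (⊤ : ℕ∞) (Complex.ofRealCLM ∘ g) := by fun_prop
    set G : 𝓢(E2, ℂ) := hg₁.toSchwartzMap hg₂ with hG
    have e0 := Lp.fourier_toTemperedDistribution_eq F
    have e1 : (𝓕 (Lp.toTemperedDistribution F)) G = (Lp.toTemperedDistribution (𝓕 F)) G := by rw [e0]
    rw [TemperedDistribution.fourier_apply, Lp.toTemperedDistribution_apply,
      Lp.toTemperedDistribution_apply] at e1
    have e2 : ∫ x, g x • (𝓕 F : Lp ℂ 2 (volume : Measure E2)) x = ∫ x, G x • (𝓕 F : Lp ℂ 2 (volume : Measure E2)) x := by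
      congr 1
    have e3 : ∫ x, g x • 𝓕 f x = ∫ x, G x • 𝓕 f x := by
      congr 1
    rw [e2, e3, ← e1]
    have e4 : ∫ x, (𝓕 G) x • F x = ∫ x, (𝓕 G) x • f x := by
      apply integral_congr_ae
      filter_upwards [h2.coeFn_toLp] with x hx
      rw [hF, hx]
    rw [e4]
    have := VectorFourier.integral_bilin_fourierIntegral_eq_flip (ContinuousLinearMap.lsmul ℂ ℂ)
      (L := innerₗ E2) Real.continuous_fourierChar continuous_inner (G.integrable (μ := volume)) h1
    simpa using! this.symm
  rw [eLpNorm_congr_ae hae, ← Lp.enorm_def, ← eLpNorm_congr_ae h2.coeFn_toLp, ← Lp.enorm_def]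
  rw [← ofReal_norm, ← ofReal_norm, Lp.norm_fourier_eq]

lemma plancherel_inv {f : E2 → ℂ} (h1 : Integrable f) (h2 : MemLp f 2) :
    eLpNorm (𝓕⁻ f) 2 volume = eLpNorm f 2 volume := by
  rw [← plancherel h1 h2]
  have : 𝓕⁻ f = 𝓕 f ∘ (Neg.neg) := by
    ext w
    exact Real.fourierInv_eq_fourier_neg f w
  rw [this]
  exact eLpNorm_comp_measurePreserving (fourier_cont h1).aestronglyMeasurable
    (Measure.measurePreserving_neg volume)

end part6

section part7

/-! ### Real interpolation -/

lemma lint_pow {s b : ℝ} (hs : -1 < s) (hb : 0 ≤ b) :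
    ∫⁻ t in Set.Ioc 0 b, ENNReal.ofReal (t ^ s) = ENNReal.ofReal (b ^ (s + 1) / (s + 1)) := by
  have hi := (intervalIntegral.intervalIntegrable_rpow' (a := 0) (b := b) hs)
  rw [intervalIntegrable_iff_integrableOn_Ioc_of_le hb] at hi
  rw [← ofReal_integral_eq_lintegral_ofReal hi]
  · rw [← intervalIntegral.integral_of_le hb, integral_rpow (Or.inl hs),
      Real.zero_rpow (by linarith), sub_zero]
  · filter_upwards [ae_restrict_mem measurableSet_Ioc] with t ht
    exact Real.rpow_nonneg ht.1.le _

section marc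
variable {X Y : Type*} [MeasurableSpace X] [MeasurableSpace Y] {ν : Measure X} {m : Measure Y}

lemma marc_weak {a : Y → ℝ} (ha : Measurable a) (ha0 : ∀ y, 0 ≤ a y) {N : X → ℝ}
    {D P κ α : ℝ} (hκ : 0 < κ) (hD : 0 < D) (hP : 0 < P) (hα : 0 < α)
    (hfin : ∫⁻ y, ENNReal.ofReal (a y ^ (1 + κ)) ∂m ≤ ENNReal.ofReal P)
    (hS : ∀ S : Set Y, MeasurableSet S → ∃ N2 : X → ℝ≥0∞, AEMeasurable N2 ν ∧
      (∀ x, ENNReal.ofReal (N x) ≤ ENNReal.ofReal D * (∫⁻ y in Sᶜ, ENNReal.ofReal (a y) ∂m) + N2 x) ∧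
      ∫⁻ x, N2 x ^ 2 ∂ν ≤ ∫⁻ y in S, ENNReal.ofReal (a y ^ 2) ∂m) :
    ν {x | α < N x / 2} ≤ ENNReal.ofReal (α ^ (-2 : ℝ)) *
      ∫⁻ y in {y | α * a y ^ κ ≤ D * P}, ENNReal.ofReal (a y ^ 2) ∂m := by
  set S : Set Y := {y | α * a y ^ κ ≤ D * P} with hSdef
  have hSm : MeasurableSet S := measurableSet_le (by fun_prop) measurable_const
  obtain ⟨N2, hN2, hb, h2⟩ := hS S hSm
  have hc : ∫⁻ y in Sᶜ, ENNReal.ofReal (a y) ∂m ≤ ENNReal.ofReal (α / D) := by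
    calc ∫⁻ y in Sᶜ, ENNReal.ofReal (a y) ∂m
        ≤ ∫⁻ y in Sᶜ, ENNReal.ofReal (α / (D * P)) * ENNReal.ofReal (a y ^ (1 + κ)) ∂m := by
          apply setLIntegral_mono' hSm.compl
          intro y hy
          rw [← ENNReal.ofReal_mul (by positivity)]
          apply ENNReal.ofReal_le_ofReal
          have hy' : D * P < α * a y ^ κ := by
            by_contra h
            exact hy (not_lt.1 h)
          have hapos : 0 < a y := by
            rcases (ha0 y).lt_or_eq with h | h
            · exact h
            · rw [← h, Real.zero_rpow hκ.ne'] at hy'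
              nlinarith [mul_pos hD hP]
          rw [Real.rpow_add hapos, Real.rpow_one, div_mul_eq_mul_div, le_div_iff₀ (by positivity)]
          nlinarith
      _ ≤ ∫⁻ y, ENNReal.ofReal (α / (D * P)) * ENNReal.ofReal (a y ^ (1 + κ)) ∂m :=
          setLIntegral_le_lintegral _ _
      _ = ENNReal.ofReal (α / (D * P)) * ∫⁻ y, ENNReal.ofReal (a y ^ (1 + κ)) ∂m :=
          lintegral_const_mul _ (by fun_prop)
      _ ≤ ENNReal.ofReal (α / (D * P)) * ENNReal.ofReal P := by gcongr
      _ = ENNReal.ofReal (α / D) := by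
          rw [← ENNReal.ofReal_mul (by positivity)]
          congr 1
          field_simp
  have hsub : {x | α < N x / 2} ⊆ {x | ENNReal.ofReal (α ^ 2) ≤ N2 x ^ 2} := by
    intro x hx
    have hx' : α < N x / 2 := hx
    have h3 : ENNReal.ofReal (N x) ≤ ENNReal.ofReal α + N2 x := by
      refine (hb x).trans ?_
      gcongr
      calc ENNReal.ofReal D * (∫⁻ y in Sᶜ, ENNReal.ofReal (a y) ∂m)
          ≤ ENNReal.ofReal D * ENNReal.ofReal (α / D) := by gcongr
        _ = ENNReal.ofReal α := by
          rw [← ENNReal.ofReal_mul hD.le]; congr 1; field_simp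
    have h4 : ENNReal.ofReal α + ENNReal.ofReal α ≤ ENNReal.ofReal α + N2 x := by
      refine le_trans ?_ h3
      rw [← ENNReal.ofReal_add hα.le hα.le]
      apply ENNReal.ofReal_le_ofReal
      linarith
    have h5 : ENNReal.ofReal α ≤ N2 x := (ENNReal.add_le_add_iff_left ENNReal.ofReal_ne_top).1 h4
    change ENNReal.ofReal (α ^ 2) ≤ N2 x ^ 2
    rw [ENNReal.ofReal_pow hα.le]
    gcongr
  calc ν {x | α < N x / 2} ≤ ν {x | ENNReal.ofReal (α ^ 2) ≤ N2 x ^ 2} := measure_mono hsub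
    _ ≤ (∫⁻ x, N2 x ^ 2 ∂ν) / ENNReal.ofReal (α ^ 2) :=
        meas_ge_le_lintegral_div (by fun_prop) (by simpa using hα.ne') ENNReal.ofReal_ne_top
    _ ≤ (∫⁻ y in S, ENNReal.ofReal (a y ^ 2) ∂m) / ENNReal.ofReal (α ^ 2) := by gcongr
    _ = _ := by
        rw [ENNReal.div_eq_inv_mul, ← ENNReal.ofReal_inv_of_pos (by positivity), Real.rpow_neg hα.le]
        norm_num

lemma marc [SFinite m] {a : Y → ℝ} (ha : Measurable a) (ha0 : ∀ y, 0 ≤ a y) {N : X → ℝ}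
    (hN : AEMeasurable N ν) (hN0 : ∀ x, 0 ≤ N x)
    {D P κ r : ℝ} (hr : 2 < r) (hκ : κ = 1 / (r - 1)) (hD : 0 < D) (hP : 0 < P)
    (hfin : ∫⁻ y, ENNReal.ofReal (a y ^ (1 + κ)) ∂m ≤ ENNReal.ofReal P)
    (hS : ∀ S : Set Y, MeasurableSet S → ∃ N2 : X → ℝ≥0∞, AEMeasurable N2 ν ∧
      (∀ x, ENNReal.ofReal (N x) ≤ ENNReal.ofReal D * (∫⁻ y in Sᶜ, ENNReal.ofReal (a y) ∂m) + N2 x) ∧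
      ∫⁻ x, N2 x ^ 2 ∂ν ≤ ∫⁻ y in S, ENNReal.ofReal (a y ^ 2) ∂m) :
    ∫⁻ x, ENNReal.ofReal (N x ^ r) ∂ν ≤
      ENNReal.ofReal (2 ^ r * (r / (r - 2)) * (D ^ (r - 2) * P ^ (r - 1))) := by
  have hκ0 : 0 < κ := by rw [hκ]; exact one_div_pos.2 (by linarith)
  have hDP : 0 < D * P := mul_pos hD hP
  have e1 : ∀ x, ENNReal.ofReal (N x ^ r) = ENNReal.ofReal (2 ^ r) * ENNReal.ofReal ((N x / 2) ^ r) := by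
    intro x
    rw [← ENNReal.ofReal_mul (by positivity), ← Real.mul_rpow (by norm_num) (by linarith [hN0 x])]
    congr 2
    ring
  simp_rw [e1]
  rw [lintegral_const_mul' _ _ ENNReal.ofReal_ne_top,
    lintegral_rpow_eq_lintegral_meas_lt_mul ν (Filter.Eventually.of_forall fun x => by
      have := hN0 x; simp only [Pi.zero_apply]; positivity) (by fun_prop) (by linarith)]
  have hmain : ∫⁻ t in Set.Ioi (0 : ℝ), ν {x | t < N x / 2} * ENNReal.ofReal (t ^ (r - 1)) ≤
      ENNReal.ofReal (1 / (r - 2) * (D * P) ^ (r - 2) * P) := by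
    have hmS : MeasurableSet {z : ℝ × Y | z.1 * a z.2 ^ κ ≤ D * P} :=
      measurableSet_le (by fun_prop) measurable_const
    calc ∫⁻ t in Set.Ioi (0 : ℝ), ν {x | t < N x / 2} * ENNReal.ofReal (t ^ (r - 1))
        ≤ ∫⁻ t in Set.Ioi (0 : ℝ), ∫⁻ y, Set.indicator {z : ℝ × Y | z.1 * a z.2 ^ κ ≤ D * P}
            (fun z => ENNReal.ofReal (z.1 ^ (r - 3)) * ENNReal.ofReal (a z.2 ^ 2)) (t, y) ∂m := by
          apply setLIntegral_mono' measurableSet_Ioi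
          intro t ht
          have ht0 : 0 < t := ht
          have hmt : MeasurableSet {y | t * a y ^ κ ≤ D * P} :=
            measurableSet_le (by fun_prop) measurable_const
          refine (mul_le_mul_left (marc_weak ha ha0 hκ0 hD hP ht0 hfin hS) _).trans (le_of_eq ?_)
          rw [mul_right_comm, ← ENNReal.ofReal_mul (by positivity), ← Real.rpow_add ht0,
            ← lintegral_indicator hmt, ← lintegral_const_mul' _ _ ENNReal.ofReal_ne_top]
          congr 1
          ext y
          by_cases hy : t * a y ^ κ ≤ D * P
          · rw [Set.indicator_of_mem (by exact hy), Set.indicator_of_mem (by exact hy)]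
            congr 3
            ring
          · rw [Set.indicator_of_notMem (by exact hy), Set.indicator_of_notMem (by exact hy), mul_zero]
      _ = ∫⁻ y, (∫⁻ t in Set.Ioi (0 : ℝ), Set.indicator {z : ℝ × Y | z.1 * a z.2 ^ κ ≤ D * P}
            (fun z => ENNReal.ofReal (z.1 ^ (r - 3)) * ENNReal.ofReal (a z.2 ^ 2)) (t, y)) ∂m := by
          rw [lintegral_lintegral_swap]
          refine Measurable.aemeasurable ?_
          apply Measurable.indicator _ hmS
          fun_prop
      _ ≤ ∫⁻ y, ENNReal.ofReal (1 / (r - 2) * (D * P) ^ (r - 2)) * ENNReal.ofReal (a y ^ (1 + κ)) ∂m := by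
          apply lintegral_mono
          intro y
          rcases (ha0 y).lt_or_eq with hy | hy
          · set b : ℝ := D * P / a y ^ κ with hb
            have hapos : 0 < a y ^ κ := Real.rpow_pos_of_pos hy _
            have hb0 : 0 < b := by positivity
            have : ∀ t ∈ Set.Ioi (0 : ℝ), Set.indicator {z : ℝ × Y | z.1 * a z.2 ^ κ ≤ D * P}
              (fun z => ENNReal.ofReal (z.1 ^ (r - 3)) * ENNReal.ofReal (a z.2 ^ 2)) (t, y) =
              (Set.Ioc 0 b).indicator (fun t => ENNReal.ofReal (t ^ (r - 3)) * ENNReal.ofReal (a y ^ 2)) t := by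
              intro t ht
              by_cases h : t * a y ^ κ ≤ D * P
              · rw [Set.indicator_of_mem (by exact h), Set.indicator_of_mem]
                exact ⟨ht, by rw [hb, le_div_iff₀ hapos]; exact h⟩
              · rw [Set.indicator_of_notMem (by exact h), Set.indicator_of_notMem]
                rintro ⟨_, h2⟩
                rw [hb, le_div_iff₀ hapos] at h2
                exact h h2
            simp only
            rw [setLIntegral_congr_fun measurableSet_Ioi this,
              setLIntegral_indicator measurableSet_Ioc,
              Set.inter_eq_self_of_subset_left (fun t ht => ht.1),
              lintegral_mul_const' _ _ ENNReal.ofReal_ne_top, lint_pow (by linarith) hb0.le,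
              ← ENNReal.ofReal_mul (by
                have : 0 < r - 3 + 1 := by linarith
                positivity),
              ← ENNReal.ofReal_mul (by
                have : 0 < r - 2 := by linarith
                positivity)]
            apply le_of_eq
            congr 1
            rw [hb, Real.div_rpow hDP.le hapos.le, ← Real.rpow_mul hy.le,
              show r - 3 + 1 = r - 2 by ring]
            have : a y ^ (1 + κ) * a y ^ (κ * (r - 2)) = a y ^ 2 := by
              rw [← Real.rpow_add hy, ← Real.rpow_natCast]
              congr 1
              rw [hκ]
              have : r - 1 ≠ 0 := by linarith
              field_simp
              push_cast
              ring
            have hpos : 0 < a y ^ (κ * (r - 2)) := Real.rpow_pos_of_pos hy _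
            rw [← this]
            have : r - 2 ≠ 0 := by linarith
            field_simp
          · have : ∀ t : ℝ, Set.indicator {z : ℝ × Y | z.1 * a z.2 ^ κ ≤ D * P}
              (fun z => ENNReal.ofReal (z.1 ^ (r - 3)) * ENNReal.ofReal (a z.2 ^ 2)) (t, y) = 0 := by
              intro t
              apply Set.indicator_apply_eq_zero.2
              intro _
              simp [← hy]
            simp [this]
      _ = ENNReal.ofReal (1 / (r - 2) * (D * P) ^ (r - 2)) * ∫⁻ y, ENNReal.ofReal (a y ^ (1 + κ)) ∂m :=
          lintegral_const_mul' _ _ ENNReal.ofReal_ne_top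
      _ ≤ ENNReal.ofReal (1 / (r - 2) * (D * P) ^ (r - 2)) * ENNReal.ofReal P := by gcongr
      _ = _ := by
          rw [← ENNReal.ofReal_mul]
          have : 0 < r - 2 := by linarith
          positivity
  calc _ ≤ ENNReal.ofReal (2 ^ r) * (ENNReal.ofReal r * ENNReal.ofReal (1 / (r - 2) * (D * P) ^ (r - 2) * P)) := by
        gcongr
    _ = _ := by
        rw [← ENNReal.ofReal_mul (by linarith), ← ENNReal.ofReal_mul (by positivity)]
        congr 1
        rw [Real.mul_rpow hD.le hP.le, show r - 1 = (r - 2) + 1 by ring, Real.rpow_add hP, Real.rpow_one]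
        ring

end marc

end part7

section part8

/-! ### Hardy–Littlewood–Sobolev, the symmetric case in dimension one -/

lemma lint_abs (g : ℝ → ℝ≥0∞) : ∫⁻ u : ℝ, g |u| = 2 * ∫⁻ u in Set.Ioi (0 : ℝ), g u := by
  rw [← lintegral_add_compl (fun u => g |u|) (measurableSet_Ioi (a := (0 : ℝ))), Set.compl_Ioi, two_mul]
  congr 1
  · apply setLIntegral_congr_fun measurableSet_Ioi
    intro u hu
    simp only [abs_of_pos (Set.mem_Ioi.1 hu)]
  · have h1 : ∫⁻ u in Set.Iic (0 : ℝ), g |u| = ∫⁻ u in Set.Ici (0 : ℝ), g |u| := by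
      rw [← lintegral_indicator measurableSet_Iic, ← lintegral_indicator measurableSet_Ici,
        ← lintegral_neg_eq_self]
      congr 1
      ext u
      by_cases hu : 0 ≤ u
      · rw [Set.indicator_of_mem (by simpa using hu), Set.indicator_of_mem (by simpa using hu), abs_neg]
      · rw [Set.indicator_of_notMem (by simpa using hu), Set.indicator_of_notMem (by simpa using hu)]
    rw [h1, setLIntegral_congr Ioi_ae_eq_Ici.symm]
    apply setLIntegral_congr_fun measurableSet_Ioi
    intro u hu
    simp only [abs_of_pos (Set.mem_Ioi.1 hu)]

lemma lint_near {a δ : ℝ} (ha : a < 1) (hδ : 0 < δ) :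
    ∫⁻ u : ℝ, (Set.Iic δ).indicator (fun v => ENNReal.ofReal (v ^ (-a))) |u| =
      ENNReal.ofReal (2 * (δ ^ (1 - a) / (1 - a))) := by
  rw [lint_abs, setLIntegral_indicator measurableSet_Iic]
  have : Set.Iic δ ∩ Set.Ioi 0 = Set.Ioc 0 δ := by ext; simp [and_comm]
  rw [this, lint_pow (by linarith) hδ.le, ENNReal.ofReal_mul (by norm_num)]
  simp only [ENNReal.ofReal_ofNat]
  congr 3 <;> ring_nf

lemma lint_far {δ : ℝ} (hδ : 0 < δ) :
    ∫⁻ u : ℝ, (Set.Ioi δ).indicator (fun v => ENNReal.ofReal (v ^ (-2 : ℝ))) |u| =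
      ENNReal.ofReal (2 * δ⁻¹) := by
  rw [lint_abs, setLIntegral_indicator measurableSet_Ioi]
  have : Set.Ioi δ ∩ Set.Ioi 0 = Set.Ioi δ := by
    apply Set.inter_eq_self_of_subset_left
    intro x hx
    exact hδ.trans hx
  have hlt : (-2 : ℝ) < -1 := by norm_num
  rw [this, ← ofReal_integral_eq_lintegral_ofReal (integrableOn_Ioi_rpow_of_lt hlt hδ),
    integral_Ioi_rpow_of_lt hlt hδ, ENNReal.ofReal_mul (by norm_num)]
  · simp only [ENNReal.ofReal_ofNat]
    congr 2
    norm_num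
    rw [Real.rpow_neg_one]
  · filter_upwards [ae_restrict_mem measurableSet_Ioi] with t ht
    exact Real.rpow_nonneg (hδ.trans ht).le _

lemma hls_inner {F : ℝ → ℝ} (hF : Measurable F) (hF0 : ∀ t, 0 ≤ F t) {p q P α : ℝ} (hq : 2 < q)
    (hp : p.HolderConjugate q) (hP : 0 < P) (hα : 0 < α)
    (hfin : ∫⁻ t, ENNReal.ofReal (F t ^ p) ≤ ENNReal.ofReal P) (t : ℝ) :
    ∫⁻ s, ENNReal.ofReal (min (F s) α) * ENNReal.ofReal (|t - s| ^ (-(2 / q))) ≤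
      ENNReal.ofReal ((2 / (1 - 2 / q) + 3) * (P ^ (1 - 2 / q) * α ^ (p - 1))) := by
  have hp1 : 1 < p := hp.lt
  have hpq := hp.inv_add_inv_eq_one
  have hq0 : 0 < q := by linarith
  have hp0 : 0 < p := by linarith
  have ha1 : 0 < 1 - 2 / q := by rw [sub_pos, div_lt_one hq0]; exact hq
  set δ : ℝ := P * α ^ (-p) with hδ
  have hδ0 : 0 < δ := by positivity
  set k : ℝ := P ^ (-(2 / q) / p) * α ^ ((p - 1) / p) with hk
  have hk0 : 0 < k := by positivity
  have pt : ∀ s, ENNReal.ofReal (min (F s) α) * ENNReal.ofReal (|t - s| ^ (-(2 / q))) ≤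
      ENNReal.ofReal α * (Set.Iic δ).indicator (fun v => ENNReal.ofReal (v ^ (-(2 / q)))) |t - s| +
      (ENNReal.ofReal (k ^ p) * ENNReal.ofReal (F s ^ p) +
      ENNReal.ofReal (k ^ (-q)) * (Set.Ioi δ).indicator (fun v => ENNReal.ofReal (v ^ (-2 : ℝ))) |t - s|) := by
    intro s
    by_cases hs : |t - s| ≤ δ
    · rw [Set.indicator_of_mem (by exact hs)]
      refine le_trans ?_ le_self_add
      gcongr
      exact min_le_right _ _
    · rw [Set.indicator_of_mem (s := Set.Ioi δ) (by exact not_le.1 hs)]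
      refine le_trans ?_ le_add_self
      have hu : 0 < |t - s| := hδ0.trans (not_le.1 hs)
      rw [← ENNReal.ofReal_mul (le_min (hF0 s) hα.le), ← ENNReal.ofReal_mul (by positivity),
        ← ENNReal.ofReal_mul (by positivity),
        ← ENNReal.ofReal_add (mul_nonneg (by positivity) (Real.rpow_nonneg (hF0 s) _)) (by positivity)]
      apply ENNReal.ofReal_le_ofReal
      have hy := Real.young_inequality_of_nonneg (mul_nonneg hk0.le (hF0 s))
        (show 0 ≤ k⁻¹ * |t - s| ^ (-(2 / q)) by positivity) hp
      have e1 : (k * F s) ^ p / p ≤ k ^ p * F s ^ p := by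
        rw [← Real.mul_rpow hk0.le (hF0 s)]
        exact div_le_self (Real.rpow_nonneg (mul_nonneg hk0.le (hF0 s)) _) hp1.le
      have e2 : (k⁻¹ * |t - s| ^ (-(2 / q))) ^ q / q ≤ k ^ (-q) * |t - s| ^ (-2 : ℝ) := by
        refine (div_le_self (by positivity) (by linarith)).trans (le_of_eq ?_)
        rw [Real.mul_rpow (by positivity) (by positivity), ← Real.rpow_mul hu.le, Real.inv_rpow hk0.le,
          Real.rpow_neg hk0.le]
        congr 2
        field_simp
      have e3 : k * F s * (k⁻¹ * |t - s| ^ (-(2 / q))) = F s * |t - s| ^ (-(2 / q)) := by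
        field_simp
      have e4 : min (F s) α * |t - s| ^ (-(2 / q)) ≤ F s * |t - s| ^ (-(2 / q)) := by
        gcongr
        exact min_le_left _ _
      linarith
  have hm1 : Measurable (fun s => ENNReal.ofReal α * (Set.Iic δ).indicator
      (fun v => ENNReal.ofReal (v ^ (-(2 / q)))) |t - s|) := by
    apply Measurable.const_mul
    exact (Measurable.indicator (by fun_prop) measurableSet_Iic).comp (by fun_prop)
  have hm2 : Measurable (fun s => ENNReal.ofReal (k ^ p) * ENNReal.ofReal (F s ^ p)) := by fun_prop
  refine (lintegral_mono pt).trans ?_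
  rw [lintegral_add_left hm1, lintegral_add_left hm2, lintegral_const_mul' _ _ ENNReal.ofReal_ne_top,
    lintegral_const_mul' _ _ ENNReal.ofReal_ne_top, lintegral_const_mul' _ _ ENNReal.ofReal_ne_top,
    lintegral_sub_left_eq_self (fun u => (Set.Iic δ).indicator
      (fun v => ENNReal.ofReal (v ^ (-(2 / q)))) |u|) t,
    lintegral_sub_left_eq_self (fun u => (Set.Ioi δ).indicator
      (fun v => ENNReal.ofReal (v ^ (-2 : ℝ))) |u|) t, lint_near (by linarith) hδ0, lint_far hδ0]
  refine (add_le_add_right (add_le_add_left (mul_le_mul_right hfin _) _) _).trans (le_of_eq ?_)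
  rw [← ENNReal.ofReal_mul (by positivity), ← ENNReal.ofReal_mul (by positivity),
    ← ENNReal.ofReal_mul (by positivity), ← ENNReal.ofReal_add (by positivity) (by positivity),
    ← ENNReal.ofReal_add (by positivity) (by positivity)]
  congr 1
  have hqp : q = p / (p - 1) := hp.conjugate_eq
  have hpm : 0 < p - 1 := by linarith
  set X := P ^ (1 - 2 / q) * α ^ (p - 1) with hX
  have t1 : α * δ ^ (1 - 2 / q) = X := by
    rw [hδ, Real.mul_rpow hP.le (by positivity), ← Real.rpow_mul hα.le, hX]
    have : α ^ (p - 1) = α * α ^ (-p * (1 - 2 / q)) := by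
      nth_rewrite 2 [← Real.rpow_one α]
      rw [← Real.rpow_add hα]
      congr 1
      rw [hqp]
      field_simp
      ring
    rw [this]
    ring
  have t2 : k ^ p * P = X := by
    rw [hk, Real.mul_rpow (by positivity) (by positivity), ← Real.rpow_mul hα.le, ← Real.rpow_mul hP.le, hX,
      div_mul_cancel₀ _ hp0.ne', div_mul_cancel₀ _ hp0.ne', show 1 - 2 / q = -(2/q) + 1 by ring,
      Real.rpow_add hP, Real.rpow_one]
    ring
  have t3 : k ^ (-q) * δ⁻¹ = X := by
    rw [hk, Real.mul_rpow (by positivity) (by positivity), ← Real.rpow_mul hα.le, ← Real.rpow_mul hP.le, hX,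
      hδ, mul_inv, ← Real.rpow_neg hα.le, ← Real.rpow_neg_one P, mul_mul_mul_comm, ← Real.rpow_add hα,
      ← Real.rpow_add hP]
    congr 2
    · rw [hqp]
      field_simp
      ring
    · rw [hqp]
      field_simp
      ring
  calc _ = 2 / (1 - 2 / q) * (α * δ ^ (1 - 2 / q)) + (k ^ p * P + 2 * (k ^ (-q) * δ⁻¹)) := by ring
    _ = _ := by rw [t1, t2, t3]; ring

lemma hls {F : ℝ → ℝ} (hF : Measurable F) (hF0 : ∀ t, 0 ≤ F t) {p q P : ℝ} (hq : 2 < q)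
    (hp : p.HolderConjugate q) (hP : 0 < P)
    (hfin : ∫⁻ t, ENNReal.ofReal (F t ^ p) ≤ ENNReal.ofReal P) :
    ∫⁻ t, ∫⁻ s, ENNReal.ofReal (F t) * ENNReal.ofReal (F s) * ENNReal.ofReal (|t - s| ^ (-(2 / q))) ≤
      ENNReal.ofReal (2 * (2 / (1 - 2 / q) + 3) * P ^ (2 - 2 / q)) := by
  have hp1 : 1 < p := hp.lt
  have hq0 : 0 < q := by linarith
  have ha1 : 0 < 1 - 2 / q := by rw [sub_pos, div_lt_one hq0]; exact hq
  set Q : ℝ → ℝ → ℝ≥0∞ := fun t s => ENNReal.ofReal (F t) *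
    (ENNReal.ofReal (min (F s) (F t)) * ENNReal.ofReal (|t - s| ^ (-(2 / q)))) with hQ
  have hQm : Measurable (Function.uncurry Q) := by
    rw [hQ]
    unfold Function.uncurry
    simp only
    have m1 : Measurable (fun z : ℝ × ℝ => F z.1) := hF.comp measurable_fst
    have m2 : Measurable (fun z : ℝ × ℝ => F z.2) := hF.comp measurable_snd
    fun_prop
  have h1 : ∀ t s, ENNReal.ofReal (F t) * ENNReal.ofReal (F s) * ENNReal.ofReal (|t - s| ^ (-(2 / q)))
      ≤ Q t s + Q s t := by
    intro t s
    rcases le_total (F s) (F t) with h | h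
    · refine le_trans (le_of_eq ?_) le_self_add
      simp only [hQ, min_eq_left h]
      ring
    · refine le_trans (le_of_eq ?_) le_add_self
      simp only [hQ, min_eq_left h, abs_sub_comm s t]
      ring
  have h2 : ∫⁻ t, ∫⁻ s, Q t s ≤ ENNReal.ofReal ((2 / (1 - 2 / q) + 3) * P ^ (2 - 2 / q)) := by
    calc ∫⁻ t, ∫⁻ s, Q t s ≤ ∫⁻ t, ENNReal.ofReal ((2 / (1 - 2 / q) + 3) * P ^ (1 - 2 / q)) *
          ENNReal.ofReal (F t ^ p) := by
          apply lintegral_mono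
          intro t
          simp only [hQ]
          rw [lintegral_const_mul' _ _ ENNReal.ofReal_ne_top]
          rcases (hF0 t).lt_or_eq with h | h
          · refine (mul_le_mul_right (hls_inner hF hF0 hq hp hP h hfin t) _).trans (le_of_eq ?_)
            rw [← ENNReal.ofReal_mul h.le, ← ENNReal.ofReal_mul (by positivity)]
            congr 1
            have : F t ^ p = F t * F t ^ (p - 1) := by
              nth_rewrite 2 [← Real.rpow_one (F t)]
              rw [← Real.rpow_add h]
              congr 1; ring
            rw [this]; ring
          · simp [← h]
      _ = ENNReal.ofReal ((2 / (1 - 2 / q) + 3) * P ^ (1 - 2 / q)) * ∫⁻ t, ENNReal.ofReal (F t ^ p) :=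
          lintegral_const_mul' _ _ ENNReal.ofReal_ne_top
      _ ≤ ENNReal.ofReal ((2 / (1 - 2 / q) + 3) * P ^ (1 - 2 / q)) * ENNReal.ofReal P := by gcongr
      _ = _ := by
          rw [← ENNReal.ofReal_mul (by positivity)]
          congr 1
          rw [show 2 - 2 / q = (1 - 2 / q) + 1 by ring, Real.rpow_add hP (1 - 2 / q), Real.rpow_one]
          ring
  have hsw : ∫⁻ t, ∫⁻ s, Q s t = ∫⁻ t, ∫⁻ s, Q t s := (lintegral_lintegral_swap hQm.aemeasurable).symm
  calc _ ≤ ∫⁻ t, ∫⁻ s, (Q t s + Q s t) := lintegral_mono fun t => lintegral_mono fun s => h1 t s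
    _ = ∫⁻ t, ((∫⁻ s, Q t s) + ∫⁻ s, Q s t) := by
        congr 1; ext t
        exact lintegral_add_left (hQm.comp measurable_prodMk_left) _
    _ = (∫⁻ t, ∫⁻ s, Q t s) + ∫⁻ t, ∫⁻ s, Q s t := lintegral_add_left hQm.lintegral_prod_right _
    _ ≤ _ := by
        rw [hsw, show 2 * (2 / (1 - 2 / q) + 3) * P ^ (2 - 2 / q) =
          (2 / (1 - 2 / q) + 3) * P ^ (2 - 2 / q) + (2 / (1 - 2 / q) + 3) * P ^ (2 - 2 / q) by ring,
          ENNReal.ofReal_add (by positivity) (by positivity)]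
        exact add_le_add h2 h2

end part8

section part9

/-! ### The frequency localized propagator and its dispersive estimates -/

lemma fou_add {f g : E2 → ℂ} (hf : Integrable f) (hg : Integrable g) : 𝓕 (f + g) = 𝓕 f + 𝓕 g := by
  have := VectorFourier.fourierIntegral_add (L := innerₗ E2) Real.continuous_fourierChar
    continuous_inner hf hg
  exact this

lemma finv_add {f g : E2 → ℂ} (hf : Integrable f) (hg : Integrable g) : 𝓕⁻ (f + g) = 𝓕⁻ f + 𝓕⁻ g := by
  ext w
  simp only [Pi.add_apply, Real.fourierInv_eq_fourier_neg, fou_add hf hg]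

lemma finv_cont {f : E2 → ℂ} (hf : Integrable f) : Continuous (𝓕⁻ f) := by
  have : 𝓕⁻ f = 𝓕 f ∘ (Neg.neg) := by
    ext w
    exact Real.fourierInv_eq_fourier_neg f w
  rw [this]
  exact (fourier_cont hf).comp continuous_neg

lemma fou_norm_le (f : E2 → ℂ) (ξ : E2) : ‖𝓕 f ξ‖ ≤ ∫ x, ‖f x‖ :=
  VectorFourier.norm_fourierIntegral_le_integral_norm _ _ _ _ _

lemma fou_flip {f g : E2 → ℂ} (hf : Integrable f) (hg : Integrable g) :
    ∫ ξ, 𝓕 f ξ * g ξ = ∫ x, f x * 𝓕 g x := by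
  have := VectorFourier.integral_bilin_fourierIntegral_eq_flip (ContinuousLinearMap.mul ℂ ℂ)
      (L := innerₗ E2) Real.continuous_fourierChar continuous_inner hf hg
  simpa using! this

lemma finv_flip {f g : E2 → ℂ} (hf : Integrable f) (hg : Integrable g) :
    ∫ ξ, 𝓕⁻ f ξ * g ξ = ∫ x, f x * 𝓕⁻ g x := by
  have hg' : Integrable (fun x => g (-x)) := hg.comp_neg
  have h := fou_flip hf hg'
  have e1 : ∫ ξ, 𝓕⁻ f ξ * g ξ = ∫ ξ, 𝓕 f ξ * g (-ξ) := by
    rw [← integral_neg_eq_self]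
    simp only [Real.fourierInv_eq_fourier_neg, neg_neg]
  rw [e1, h]
  congr 1
  ext x
  rw [Real.fourierInv_eq_fourier_comp_neg]

lemma conj_fou (g : E2 → ℂ) (ξ : E2) :
    (starRingEnd ℂ) (𝓕 g ξ) = 𝓕⁻ (fun x => (starRingEnd ℂ) (g x)) ξ := by
  rw [Real.fourier_eq', Real.fourierInv_eq', ← integral_conj]
  congr 1
  ext x
  rw [smul_eq_mul, smul_eq_mul, map_mul, ← Complex.exp_conj]
  congr 2
  simp
  left
  exact map_ofNat (starRingEnd ℂ) 2

lemma integrable_conj {f : E2 → ℂ} (hf : Integrable f) : Integrable (fun x => (starRingEnd ℂ) (f x)) := by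
  refine hf.congr' (Complex.continuous_conj.comp_aestronglyMeasurable hf.1) ?_
  filter_upwards with x
  simp

lemma sesq {f g : E2 → ℂ} (hf : Integrable f) (hg : Integrable g) :
    ∫ x, 𝓕⁻ f x * (starRingEnd ℂ) (g x) = ∫ ξ, f ξ * (starRingEnd ℂ) (𝓕 g ξ) := by
  simp_rw [conj_fou]
  exact finv_flip hf (integrable_conj hg)

section TTdef
variable (Ω : Set E2) (φ : E2 → ℝ)

/-- The symbol `1_Ω e^{iτφ} f̂`. -/
def TTs (τ : ℝ) (f : E2 → ℂ) : E2 → ℂ :=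
  Ω.indicator (fun ξ => Complex.exp (Complex.I * ((τ * φ ξ : ℝ) : ℂ)) * 𝓕 f ξ)

/-- The operator with symbol `1_Ω e^{iτφ}`. -/
def TT (τ : ℝ) (f : E2 → ℂ) : E2 → ℂ := 𝓕⁻ (TTs Ω φ τ f)

variable {Ω φ}

lemma norm_cis (x : ℝ) : ‖Complex.exp (Complex.I * (x : ℂ))‖ = 1 := by
  rw [mul_comm]; exact Complex.norm_exp_ofReal_mul_I x

lemma TTs_aux (hφ : Continuous φ) {τ : ℝ} {f : E2 → ℂ} (hf : Integrable f) :
    Continuous (fun ξ => Complex.exp (Complex.I * ((τ * φ ξ : ℝ) : ℂ)) * 𝓕 f ξ) := by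
  have := fourier_cont hf
  fun_prop

lemma TTs_memLp (hΩ : MeasurableSet Ω) (hΩf : volume Ω ≠ ∞) (hφ : Continuous φ) {τ : ℝ} {f : E2 → ℂ}
    (hf : Integrable f) (p : ℝ≥0∞) : MemLp (TTs Ω φ τ f) p := by
  unfold TTs
  rw [memLp_indicator_iff_restrict hΩ]
  have : IsFiniteMeasure (volume.restrict Ω) := ⟨by rw [Measure.restrict_apply_univ]; exact hΩf.lt_top⟩
  refine MemLp.of_bound (TTs_aux hφ hf).aestronglyMeasurable (∫ x, ‖f x‖) (Filter.Eventually.of_forall fun ξ => ?_)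
  rw [norm_mul, norm_cis, one_mul]
  exact fou_norm_le f ξ

lemma TTs_int (hΩ : MeasurableSet Ω) (hΩf : volume Ω ≠ ∞) (hφ : Continuous φ) {τ : ℝ} {f : E2 → ℂ}
    (hf : Integrable f) : Integrable (TTs Ω φ τ f) :=
  memLp_one_iff_integrable.1 (TTs_memLp hΩ hΩf hφ hf 1)

lemma lint_sq (f : E2 → ℂ) : ∫⁻ x, ‖f x‖ₑ ^ 2 = eLpNorm f 2 volume ^ 2 := by
  have := eLpNorm_nnreal_pow_eq_lintegral (f := f) (μ := volume) (p := 2) (by norm_num)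
  simpa using this.symm

lemma TT_L2 (hΩ : MeasurableSet Ω) (hΩf : volume Ω ≠ ∞) (hφ : Continuous φ) {τ : ℝ} {f : E2 → ℂ}
    (hf : Integrable f) (hf2 : MemLp f 2) : ∫⁻ x, ‖TT Ω φ τ f x‖ₑ ^ 2 ≤ ∫⁻ x, ‖f x‖ₑ ^ 2 := by
  rw [lint_sq, lint_sq, ← plancherel hf hf2]
  unfold TT
  rw [plancherel_inv (TTs_int hΩ hΩf hφ hf) (TTs_memLp hΩ hΩf hφ hf 2)]
  gcongr
  refine (eLpNorm_indicator_le _).trans (le_of_eq ?_)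
  apply eLpNorm_congr_norm_ae
  filter_upwards with ξ
  rw [norm_mul, norm_cis, one_mul]

lemma TT_sup (hΩ : MeasurableSet Ω) (hΩf : volume Ω ≠ ∞) (hφ : Continuous φ) {τ B : ℝ} (hB : 0 ≤ B)
    (hK : ∀ z : E2, ‖∫ ξ in Ω, Complex.exp (Complex.I * ((2 * Real.pi * inner ℝ ξ z : ℝ) : ℂ)) *
      Complex.exp (Complex.I * ((τ * φ ξ : ℝ) : ℂ))‖ ≤ B) {f : E2 → ℂ}
    (hf : Integrable f) (x : E2) : ‖TT Ω φ τ f x‖ₑ ≤ ENNReal.ofReal B * ∫⁻ y, ‖f y‖ₑ := by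
  set k : E2 → ℂ := Ω.indicator (fun ξ => Complex.exp (Complex.I * ((2 * Real.pi * inner ℝ ξ x : ℝ) : ℂ)) *
      Complex.exp (Complex.I * ((τ * φ ξ : ℝ) : ℂ))) with hk
  have hkc : Continuous (fun ξ => Complex.exp (Complex.I * ((2 * Real.pi * inner ℝ ξ x : ℝ) : ℂ)) *
      Complex.exp (Complex.I * ((τ * φ ξ : ℝ) : ℂ))) := by fun_prop
  have hki : Integrable k := by
    rw [hk, integrable_indicator_iff hΩ]
    refine Measure.integrableOn_of_bounded (M := 1) hΩf hkc.aestronglyMeasurable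
      (Filter.Eventually.of_forall fun ξ => ?_)
    rw [norm_mul, norm_cis, norm_cis, one_mul]
  have e1 : TT Ω φ τ f x = ∫ y, 𝓕 k y * f y := by
    rw [fou_flip hki hf]
    unfold TT
    rw [Real.fourierInv_eq']
    congr 1
    ext ξ
    simp only [TTs, hk]
    by_cases h : ξ ∈ Ω
    · rw [Set.indicator_of_mem h, Set.indicator_of_mem h, smul_eq_mul, ← mul_assoc]
      congr 2
      rw [mul_comm]
    · rw [Set.indicator_of_notMem h, Set.indicator_of_notMem h, smul_zero, zero_mul]
  have e2 : ∀ y, ‖𝓕 k y‖ ≤ B := by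
    intro y
    refine le_trans (le_of_eq ?_) (hK (x - y))
    rw [Real.fourier_eq', ← integral_indicator hΩ]
    congr 2
    ext ξ
    simp only [hk]
    by_cases h : ξ ∈ Ω
    · rw [Set.indicator_of_mem h, Set.indicator_of_mem h, smul_eq_mul, ← mul_assoc, ← Complex.exp_add]
      congr 2
      rw [inner_sub_right]
      push_cast
      ring
    · rw [Set.indicator_of_notMem h, Set.indicator_of_notMem h, smul_zero]
  rw [e1]
  refine (enorm_integral_le_lintegral_enorm _).trans ?_
  rw [← lintegral_const_mul' _ _ ENNReal.ofReal_ne_top]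
  apply lintegral_mono
  intro y
  simp only [enorm_mul]
  gcongr
  rw [← ofReal_norm]
  exact ENNReal.ofReal_le_ofReal (e2 y)

lemma TT_add (hΩ : MeasurableSet Ω) (hΩf : volume Ω ≠ ∞) (hφ : Continuous φ) {τ : ℝ} {f g : E2 → ℂ}
    (hf : Integrable f) (hg : Integrable g) : TT Ω φ τ (f + g) = TT Ω φ τ f + TT Ω φ τ g := by
  unfold TT
  rw [← finv_add (TTs_int hΩ hΩf hφ hf) (TTs_int hΩ hΩf hφ hg)]
  congr 1
  ext ξ
  simp only [TTs, fou_add hf hg, Pi.add_apply]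
  by_cases h : ξ ∈ Ω
  · simp only [Set.indicator_of_mem h]
    ring
  · simp only [Set.indicator_of_notMem h, add_zero]

lemma TT_cont (hΩ : MeasurableSet Ω) (hΩf : volume Ω ≠ ∞) (hφ : Continuous φ) {τ : ℝ} {f : E2 → ℂ}
    (hf : Integrable f) : Continuous (TT Ω φ τ f) := finv_cont (TTs_int hΩ hΩf hφ hf)

lemma TT_interp (hΩ : MeasurableSet Ω) (hΩf : volume Ω ≠ ∞) (hφ : Continuous φ) {τ B : ℝ} (hB : 0 < B)
    (hK : ∀ z : E2, ‖∫ ξ in Ω, Complex.exp (Complex.I * ((2 * Real.pi * inner ℝ ξ z : ℝ) : ℂ)) *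
      Complex.exp (Complex.I * ((τ * φ ξ : ℝ) : ℂ))‖ ≤ B) {f : E2 → ℂ} (hfm : Measurable f)
    (hf : Integrable f) (hf2 : MemLp f 2) {r P : ℝ} (hr : 2 < r) (hP : 0 < P)
    (hfin : ∫⁻ y, ENNReal.ofReal (‖f y‖ ^ (1 + 1 / (r - 1))) ≤ ENNReal.ofReal P) :
    ∫⁻ x, ENNReal.ofReal (‖TT Ω φ τ f x‖ ^ r) ≤
      ENNReal.ofReal (2 ^ r * (r / (r - 2)) * (B ^ (r - 2) * P ^ (r - 1))) := by
  refine marc (a := fun y => ‖f y‖) hfm.norm (fun y => norm_nonneg _)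
    (TT_cont hΩ hΩf hφ hf).norm.aemeasurable (fun x => norm_nonneg _) hr rfl hB hP hfin ?_
  intro S hS
  have h1 : Integrable (S.indicator f) := hf.indicator hS
  have h2 : Integrable (Sᶜ.indicator f) := hf.indicator hS.compl
  refine ⟨fun x => ‖TT Ω φ τ (S.indicator f) x‖ₑ, (TT_cont hΩ hΩf hφ h1).aemeasurable.enorm, ?_, ?_⟩
  · intro x
    rw [ofReal_norm]
    have : TT Ω φ τ f x = TT Ω φ τ (Sᶜ.indicator f) x + TT Ω φ τ (S.indicator f) x := by
      rw [← Pi.add_apply, ← TT_add hΩ hΩf hφ h2 h1, Set.indicator_compl_add_self]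
    rw [this]
    refine (enorm_add_le _ _).trans ?_
    gcongr
    refine (TT_sup hΩ hΩf hφ hB.le hK h2 x).trans (le_of_eq ?_)
    congr 1
    rw [← lintegral_indicator hS.compl]
    congr 1
    ext y
    simp only [ofReal_norm]
    rw [enorm_indicator_eq_indicator_enorm]
  · refine (TT_L2 hΩ hΩf hφ h1 (hf2.indicator hS)).trans (le_of_eq ?_)
    rw [← lintegral_indicator hS]
    congr 1
    ext y
    by_cases h : y ∈ S
    · rw [Set.indicator_of_mem h, Set.indicator_of_mem h, ENNReal.ofReal_pow (norm_nonneg _), ofReal_norm]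
    · rw [Set.indicator_of_notMem h, Set.indicator_of_notMem h]
      simp

end TTdef

end part9

section part10

/-! ### The bilinear estimate behind the `T T^*` argument -/

section bil
variable {Ω : Set E2} {φ : E2 → ℝ}

/-- The interpolation constant. -/
def Cr (r : ℝ) : ℝ := (2 ^ r * (r / (r - 2))) ^ (1 / r)

lemma Cr_pos {r : ℝ} (hr : 2 < r) : 0 < Cr r := by
  unfold Cr
  have : 0 < r - 2 := by linarith
  positivity

lemma conj_exp {r : ℝ} (hr : 2 < r) : r.HolderConjugate (1 + 1 / (r - 1)) := by
  rw [Real.holderConjugate_iff]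
  refine ⟨by linarith, ?_⟩
  have : r - 1 ≠ 0 := by linarith
  have h2 : r ≠ 0 := by linarith
  have h3 : (1 + 1 / (r - 1)) = r / (r - 1) := by field_simp; ring
  rw [h3]
  field_simp
  ring

lemma bil_pos (hΩ : MeasurableSet Ω) (hΩf : volume Ω ≠ ∞) (hφ : Continuous φ) {τ K : ℝ} (hK0 : 0 < K)
    (hK : ∀ z : E2, ‖∫ ξ in Ω, Complex.exp (Complex.I * ((2 * Real.pi * inner ℝ ξ z : ℝ) : ℂ)) *
      Complex.exp (Complex.I * ((τ * φ ξ : ℝ) : ℂ))‖ ≤ K) {f g : E2 → ℂ} (hfm : Measurable f)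
    (hf : Integrable f) (hf2 : MemLp f 2) (hgm : Measurable g) {r A B : ℝ} (hr : 2 < r) (hA : 0 < A)
    (hB : 0 ≤ B)
    (hfA : ∫⁻ y, ENNReal.ofReal (‖f y‖ ^ (1 + 1 / (r - 1))) ≤ ENNReal.ofReal (A ^ (1 + 1 / (r - 1))))
    (hgB : ∫⁻ y, ENNReal.ofReal (‖g y‖ ^ (1 + 1 / (r - 1))) ≤ ENNReal.ofReal (B ^ (1 + 1 / (r - 1)))) :
    ‖∫ x, TT Ω φ τ f x * (starRingEnd ℂ) (g x)‖ₑ ≤ ENNReal.ofReal (Cr r * K ^ (1 - 2 / r) * A * B) := by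
  have hc := conj_exp hr
  have hr0 : 0 < r := by linarith
  have hr1 : 0 < r - 1 := by linarith
  have hr2 : 0 < r - 2 := by linarith
  have hp0 : 0 < 1 + 1 / (r - 1) := by positivity
  have h1 := TT_interp hΩ hΩf hφ hK0 hK hfm hf hf2 hr (P := A ^ (1 + 1 / (r - 1))) (by positivity) hfA
  have hpow : ∀ (u : E2 → ℂ) {s : ℝ}, 0 < s → ∫⁻ x, ENNReal.ofReal (‖u x‖ ^ s) = ∫⁻ x, ‖u x‖ₑ ^ s := by
    intro u s hs
    congr 1
    ext x
    rw [← ENNReal.ofReal_rpow_of_nonneg (norm_nonneg _) hs.le, ofReal_norm]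
  rw [hpow _ hr0] at h1
  rw [hpow _ hp0] at hgB
  refine (enorm_integral_le_lintegral_enorm _).trans ?_
  have h2 := ENNReal.lintegral_mul_le_Lp_mul_Lq volume hc
    (TT_cont hΩ hΩf hφ (τ := τ) hf).aemeasurable.enorm hgm.aemeasurable.enorm
  have h3 : ∫⁻ x, ‖TT Ω φ τ f x * (starRingEnd ℂ) (g x)‖ₑ =
      ∫⁻ x, ((fun x => ‖TT Ω φ τ f x‖ₑ) * (fun x => ‖g x‖ₑ)) x := by
    congr 1
    ext x
    rw [enorm_mul, RCLike.enorm_conj, Pi.mul_apply]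
  rw [h3]
  refine h2.trans ?_
  calc _ ≤ (ENNReal.ofReal (2 ^ r * (r / (r - 2)) * (K ^ (r - 2) * (A ^ (1 + 1 / (r - 1))) ^ (r - 1)))) ^ (1 / r)
        * (ENNReal.ofReal (B ^ (1 + 1 / (r - 1)))) ^ (1 / (1 + 1 / (r - 1))) := by
        gcongr
    _ = _ := by
      rw [ENNReal.ofReal_rpow_of_nonneg (by positivity) (by positivity),
        ENNReal.ofReal_rpow_of_nonneg (by positivity) (by positivity),
        ← ENNReal.ofReal_mul (by positivity)]
      congr 1
      rw [Real.mul_rpow (x := 2 ^ r * (r / (r - 2))) (by positivity) (by positivity),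
        Real.mul_rpow (x := K ^ (r - 2)) (by positivity) (by positivity),
        ← Real.rpow_mul hK0.le, ← Real.rpow_mul hA.le, ← Real.rpow_mul hA.le, ← Real.rpow_mul hB]
      have e1 : (r - 2) * (1 / r) = 1 - 2 / r := by field_simp
      have e2 : (1 + 1 / (r - 1)) * (r - 1) * (1 / r) = 1 := by field_simp; ring
      have e3 : (1 + 1 / (r - 1)) * (1 / (1 + 1 / (r - 1))) = 1 := by
        rw [mul_one_div, div_self hp0.ne']
      rw [e1, e2, e3, Real.rpow_one, Real.rpow_one]
      unfold Cr
      ring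

lemma bil (hΩ : MeasurableSet Ω) (hΩf : volume Ω ≠ ∞) (hφ : Continuous φ) {τ K : ℝ} (hK0 : 0 < K)
    (hK : ∀ z : E2, ‖∫ ξ in Ω, Complex.exp (Complex.I * ((2 * Real.pi * inner ℝ ξ z : ℝ) : ℂ)) *
      Complex.exp (Complex.I * ((τ * φ ξ : ℝ) : ℂ))‖ ≤ K) {f g : E2 → ℂ} (hfm : Measurable f)
    (hf : Integrable f) (hf2 : MemLp f 2) (hgm : Measurable g) {r A B : ℝ} (hr : 2 < r) (hA : 0 ≤ A)
    (hB : 0 ≤ B)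
    (hfA : ∫⁻ y, ENNReal.ofReal (‖f y‖ ^ (1 + 1 / (r - 1))) ≤ ENNReal.ofReal (A ^ (1 + 1 / (r - 1))))
    (hgB : ∫⁻ y, ENNReal.ofReal (‖g y‖ ^ (1 + 1 / (r - 1))) ≤ ENNReal.ofReal (B ^ (1 + 1 / (r - 1)))) :
    ‖∫ x, TT Ω φ τ f x * (starRingEnd ℂ) (g x)‖ₑ ≤ ENNReal.ofReal (Cr r * K ^ (1 - 2 / r) * A * B) := by
  have hr1 : 0 < r - 1 := by linarith
  have hp0 : 0 < 1 + 1 / (r - 1) := by positivity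
  have hcont : Continuous (fun A' : ℝ => ENNReal.ofReal (Cr r * K ^ (1 - 2 / r) * A' * B)) :=
    ENNReal.continuous_ofReal.comp (by fun_prop)
  have ht : Filter.Tendsto (fun A' : ℝ => ENNReal.ofReal (Cr r * K ^ (1 - 2 / r) * A' * B))
      (nhdsWithin A (Set.Ioi A)) (nhds (ENNReal.ofReal (Cr r * K ^ (1 - 2 / r) * A * B))) :=
    (hcont.tendsto A).mono_left nhdsWithin_le_nhds
  refine ge_of_tendsto ht ?_
  filter_upwards [self_mem_nhdsWithin] with A' hA'
  have hA' : A < A' := hA'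
  refine bil_pos hΩ hΩf hφ hK0 hK hfm hf hf2 hgm hr (by linarith) hB (hfA.trans ?_) hgB
  apply ENNReal.ofReal_le_ofReal
  gcongr

end bil

/-- Expanding the square of a time integral. -/
lemma quad (ν : Measure E2) [IsFiniteMeasure ν] {a : ℝ → E2 → ℂ} (ha : Measurable (Function.uncurry a))
    {h : ℝ → ℝ} (hh : Integrable h) (hah : ∀ t ξ, ‖a t ξ‖ ≤ h t) :
    ∫⁻ ξ, ‖∫ t, a t ξ‖ₑ ^ 2 ∂ν ≤ ∫⁻ t, ∫⁻ s, ‖∫ ξ, a t ξ * (starRingEnd ℂ) (a s ξ) ∂ν‖ₑ := by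
  set W : E2 → ℂ := fun ξ => ∫ t, a t ξ with hW
  have hm : Measurable (fun z : E2 × (ℝ × ℝ) => a z.2.1 z.1 * (starRingEnd ℂ) (a z.2.2 z.1)) := by
    have h1 : Measurable (fun z : E2 × (ℝ × ℝ) => a z.2.1 z.1) :=
      ha.comp (g := Function.uncurry a) (f := fun z : E2 × (ℝ × ℝ) => (z.2.1, z.1)) (by fun_prop)
    have h2 : Measurable (fun z : E2 × (ℝ × ℝ) => a z.2.2 z.1) :=
      ha.comp (g := Function.uncurry a) (f := fun z : E2 × (ℝ × ℝ) => (z.2.2, z.1)) (by fun_prop)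
    exact h1.mul (Complex.continuous_conj.measurable.comp h2)
  have hH : Integrable (fun p : ℝ × ℝ => h p.1 * h p.2) (volume.prod volume) := hh.mul_prod hh
  have hI : Integrable (fun z : E2 × (ℝ × ℝ) => a z.2.1 z.1 * (starRingEnd ℂ) (a z.2.2 z.1))
      (ν.prod (volume.prod volume)) := by
    have h1 : Integrable (fun z : E2 × (ℝ × ℝ) => (fun _ => (1 : ℝ)) z.1 * (fun p : ℝ × ℝ => h p.1 * h p.2) z.2)
      (ν.prod (volume.prod volume)) := (integrable_const (1 : ℝ)).mul_prod hH
    refine h1.mono' hm.aestronglyMeasurable (Filter.Eventually.of_forall fun z => ?_)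
    rw [norm_mul, RCLike.norm_conj, one_mul]
    exact mul_le_mul (hah _ _) (hah _ _) (norm_nonneg _) ((norm_nonneg _).trans (hah z.2.1 z.1))
  have hWW : ∀ ξ, ∫ p : ℝ × ℝ, a p.1 ξ * (starRingEnd ℂ) (a p.2 ξ) ∂(volume.prod volume) =
      W ξ * (starRingEnd ℂ) (W ξ) := by
    intro ξ
    have := integral_prod_mul (μ := (volume : Measure ℝ)) (ν := (volume : Measure ℝ))
      (fun t => a t ξ) (fun s => (starRingEnd ℂ) (a s ξ))
    rw [this, integral_conj]
  have hsw := integral_integral_swap (μ := ν) (ν := (volume : Measure ℝ).prod volume)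
    (f := fun ξ p => a p.1 ξ * (starRingEnd ℂ) (a p.2 ξ)) hI
  simp only [hWW] at hsw
  have hWi : Integrable (fun ξ => W ξ * (starRingEnd ℂ) (W ξ)) ν := by
    have := hI.integral_prod_left
    simpa only [hWW] using this
  have hWi' : Integrable (fun ξ => ‖W ξ‖ ^ 2) ν := by
    refine hWi.norm.congr (Filter.Eventually.of_forall fun ξ => ?_)
    simp only [norm_mul, RCLike.norm_conj, sq]
  have e1 : ∫⁻ ξ, ‖W ξ‖ₑ ^ 2 ∂ν = ‖∫ ξ, W ξ * (starRingEnd ℂ) (W ξ) ∂ν‖ₑ := by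
    have e2 : ∫ ξ, W ξ * (starRingEnd ℂ) (W ξ) ∂ν = ((∫ ξ, ‖W ξ‖ ^ 2 ∂ν : ℝ) : ℂ) := by
      rw [← integral_complex_ofReal]
      congr 1
      ext ξ
      rw [Complex.mul_conj, Complex.normSq_eq_norm_sq]
    rw [e2, ← ofReal_norm, Complex.norm_real, Real.norm_of_nonneg (integral_nonneg fun ξ => by positivity),
      ofReal_integral_eq_lintegral_ofReal hWi' (Filter.Eventually.of_forall fun ξ => by positivity)]
    congr 1
    ext ξ
    rw [ENNReal.ofReal_pow (norm_nonneg _), ofReal_norm]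
  rw [e1, hsw]
  refine (enorm_integral_le_lintegral_enorm _).trans ?_
  have hsm : AEMeasurable (fun p : ℝ × ℝ => ‖∫ ξ, a p.1 ξ * (starRingEnd ℂ) (a p.2 ξ) ∂ν‖ₑ) (volume.prod volume) := by
    exact hI.integral_prod_right.1.enorm
  rw [lintegral_prod _ hsm]

end part10

section part11

/-! ### The space-time duality estimate -/

section dual
variable {Ω : Set E2} {φ : E2 → ℝ} {G : ℝ → E2 → ℂ} {k : ℝ → ℝ} {b : E2 → ℝ}

lemma G_meas (hG : Measurable (Function.uncurry G)) (t : ℝ) : Measurable (G t) :=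
  hG.comp (g := Function.uncurry G) (f := fun x => (t, x)) (by fun_prop)

lemma G_int (hG : Measurable (Function.uncurry G)) (hb : Integrable b)
    (hGb : ∀ t x, ‖G t x‖ ≤ k t * b x) (t : ℝ) : Integrable (G t) :=
  (hb.const_mul (k t)).mono' (G_meas hG t).aestronglyMeasurable (Filter.Eventually.of_forall (hGb t))

lemma G_L2 (hG : Measurable (Function.uncurry G)) (hb : MemLp b 2)
    (hGb : ∀ t x, ‖G t x‖ ≤ k t * b x) (t : ℝ) : MemLp (G t) 2 :=
  (hb.const_mul (k t)).mono (G_meas hG t).aestronglyMeasurable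
    (Filter.Eventually.of_forall fun x => (hGb t x).trans (le_abs_self _))

lemma fouG_meas (hG : Measurable (Function.uncurry G)) :
    Measurable (Function.uncurry fun t ξ => 𝓕 (G t) ξ) := by
  have h1 : Measurable (fun z : (ℝ × E2) × E2 =>
      Complex.exp (((-2 * Real.pi * inner ℝ z.2 z.1.2 : ℝ) : ℂ) * Complex.I) * G z.1.1 z.2) := by
    have h2 : Measurable (fun z : (ℝ × E2) × E2 => G z.1.1 z.2) :=
      hG.comp (g := Function.uncurry G) (f := fun z : (ℝ × E2) × E2 => (z.1.1, z.2)) (by fun_prop)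
    have h3 : Continuous (fun z : (ℝ × E2) × E2 =>
      Complex.exp (((-2 * Real.pi * inner ℝ z.2 z.1.2 : ℝ) : ℂ) * Complex.I)) := by fun_prop
    exact h3.measurable.mul h2
  have h4 := h1.stronglyMeasurable.integral_prod_right' (ν := (volume : Measure E2))
  convert h4.measurable using 1
  ext z
  rw [Function.uncurry, Real.fourier_eq']
  rfl

/-- The phase-rotated Fourier transform of the test function. -/
def aG (φ : E2 → ℝ) (G : ℝ → E2 → ℂ) (t : ℝ) (ξ : E2) : ℂ :=
  Complex.exp (Complex.I * ((-t * φ ξ : ℝ) : ℂ)) * 𝓕 (G t) ξ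

lemma aG_meas (hφ : Continuous φ) (hG : Measurable (Function.uncurry G)) :
    Measurable (Function.uncurry (aG φ G)) := by
  have h3 : Continuous (fun z : ℝ × E2 => Complex.exp (Complex.I * ((-z.1 * φ z.2 : ℝ) : ℂ))) := by
    fun_prop
  exact h3.measurable.mul (fouG_meas hG)

lemma aG_le (hb : Integrable b) (hGb : ∀ t x, ‖G t x‖ ≤ k t * b x) (t : ℝ) (ξ : E2) :
    ‖aG φ G t ξ‖ ≤ k t * ∫ x, b x := by
  unfold aG
  rw [norm_mul, norm_cis, one_mul, ← integral_const_mul]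
  refine (fou_norm_le _ _).trans ?_
  refine integral_mono_of_nonneg (Filter.Eventually.of_forall fun x => norm_nonneg _) (hb.const_mul _)
    (Filter.Eventually.of_forall (hGb t))

lemma propA (hΩ : MeasurableSet Ω) (hΩf : volume Ω ≠ ∞) (hφ : Continuous φ) {D : ℝ} (hD : 0 < D)
    (hK : ∀ τ : ℝ, τ ≠ 0 → ∀ z : E2,
      ‖∫ ξ in Ω, Complex.exp (Complex.I * ((2 * Real.pi * inner ℝ ξ z : ℝ) : ℂ)) *
      Complex.exp (Complex.I * ((τ * φ ξ : ℝ) : ℂ))‖ ≤ D / |τ|)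
    (hG : Measurable (Function.uncurry G)) (hk : Integrable k) (hb : Integrable b) (hb2 : MemLp b 2)
    (hGb : ∀ t x, ‖G t x‖ ≤ k t * b x) {F : ℝ → ℝ} (hF : Measurable F) (hF0 : ∀ t, 0 ≤ F t)
    {p q r P : ℝ} (hr : 2 < r) (hq : 2 < q) (hqr : 1 - 2 / r = 2 / q) (hp : p.HolderConjugate q)
    (hP : 0 < P)
    (hFG : ∀ t, ∫⁻ x, ENNReal.ofReal (‖G t x‖ ^ (1 + 1 / (r - 1))) ≤
      ENNReal.ofReal (F t ^ (1 + 1 / (r - 1))))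
    (hFP : ∫⁻ t, ENNReal.ofReal (F t ^ p) ≤ ENNReal.ofReal P) :
    ∫⁻ ξ in Ω, ‖∫ t, aG φ G t ξ‖ₑ ^ 2 ≤
      ENNReal.ofReal (Cr r * D ^ (2 / q) * (2 * (2 / (1 - 2 / q) + 3) * P ^ (2 - 2 / q))) := by
  have : IsFiniteMeasure (volume.restrict Ω) := ⟨by rw [Measure.restrict_apply_univ]; exact hΩf.lt_top⟩
  refine (quad (volume.restrict Ω) (aG_meas hφ hG) (hk.mul_const (∫ x, b x)) (aG_le hb hGb)).trans ?_
  have hC := Cr_pos hr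
  have hne : ∀ t : ℝ, ∀ᵐ s : ℝ, s ≠ t := fun t => by
    simp [ae_iff]
  have key : ∀ t s : ℝ, s ≠ t → ‖∫ ξ in Ω, aG φ G t ξ * (starRingEnd ℂ) (aG φ G s ξ)‖ₑ ≤
      ENNReal.ofReal (Cr r * D ^ (2 / q)) *
        (ENNReal.ofReal (F t) * ENNReal.ofReal (F s) * ENNReal.ofReal (|t - s| ^ (-(2 / q)))) := by
    intro t s hts
    have hst : s - t ≠ 0 := sub_ne_zero.2 hts
    have h0 : 0 < |s - t| := abs_pos.2 hst
    have e1 : ∫ ξ in Ω, aG φ G t ξ * (starRingEnd ℂ) (aG φ G s ξ) =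
        ∫ x, TT Ω φ (s - t) (G t) x * (starRingEnd ℂ) (G s x) := by
      unfold TT
      rw [sesq (TTs_int hΩ hΩf hφ (G_int hG hb hGb t)) (G_int hG hb hGb s), ← integral_indicator hΩ]
      congr 1
      ext ξ
      unfold TTs
      by_cases h : ξ ∈ Ω
      · rw [Set.indicator_of_mem h, Set.indicator_of_mem h]
        unfold aG
        rw [map_mul, ← Complex.exp_conj, map_mul, Complex.conj_I, Complex.conj_ofReal]
        have : Complex.exp (Complex.I * (((s - t) * φ ξ : ℝ) : ℂ)) =
          Complex.exp (Complex.I * ((-t * φ ξ : ℝ) : ℂ)) * Complex.exp (-Complex.I * ((-s * φ ξ : ℝ) : ℂ)) := by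
          rw [← Complex.exp_add]
          congr 1
          push_cast
          ring
        rw [this]
        ring
      · rw [Set.indicator_of_notMem h, Set.indicator_of_notMem h, zero_mul]
    rw [e1]
    refine (bil hΩ hΩf hφ (by positivity) (hK _ hst) (G_meas hG t) (G_int hG hb hGb t)
      (G_L2 hG hb2 hGb t) (G_meas hG s) hr (hF0 t) (hF0 s) (hFG t) (hFG s)).trans (le_of_eq ?_)
    rw [← ENNReal.ofReal_mul (hF0 t), ← ENNReal.ofReal_mul (mul_nonneg (hF0 t) (hF0 s)),
      ← ENNReal.ofReal_mul (by positivity), hqr, Real.div_rpow hD.le h0.le, abs_sub_comm t s,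
      Real.rpow_neg h0.le]
    congr 1
    ring
  calc _ ≤ ∫⁻ t, ∫⁻ s, ENNReal.ofReal (Cr r * D ^ (2 / q)) *
        (ENNReal.ofReal (F t) * ENNReal.ofReal (F s) * ENNReal.ofReal (|t - s| ^ (-(2 / q)))) := by
        apply lintegral_mono
        intro t
        apply lintegral_mono_ae
        filter_upwards [hne t] with s hs
        exact key t s hs
    _ = ENNReal.ofReal (Cr r * D ^ (2 / q)) * ∫⁻ t, ∫⁻ s,
        (ENNReal.ofReal (F t) * ENNReal.ofReal (F s) * ENNReal.ofReal (|t - s| ^ (-(2 / q)))) := by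
        rw [← lintegral_const_mul' _ _ ENNReal.ofReal_ne_top]
        congr 1
        ext t
        rw [← lintegral_const_mul' _ _ ENNReal.ofReal_ne_top]
    _ ≤ ENNReal.ofReal (Cr r * D ^ (2 / q)) * ENNReal.ofReal (2 * (2 / (1 - 2 / q) + 3) * P ^ (2 - 2 / q)) := by
        gcongr
        exact hls hF hF0 hq hp hP hFP
    _ = _ := by
        rw [← ENNReal.ofReal_mul (by positivity)]

lemma dual_pair (hΩ : MeasurableSet Ω) (hφ : Continuous φ)
    (hG : Measurable (Function.uncurry G)) (hk : Integrable k) (hb : Integrable b)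
    (hGb : ∀ t x, ‖G t x‖ ≤ k t * b x) {h : E2 → ℂ} (hh : Measurable h) (hhi : Integrable h)
    (hh0 : ∀ ξ, ξ ∉ Ω → h ξ = 0) :
    ‖∫ t, ∫ x, 𝓕⁻ (fun ξ => Complex.exp (Complex.I * ((t * φ ξ : ℝ) : ℂ)) * h ξ) x *
      (starRingEnd ℂ) (G t x)‖ₑ ≤
      (∫⁻ ξ, ‖h ξ‖ₑ ^ 2) ^ (1 / 2 : ℝ) * (∫⁻ ξ in Ω, ‖∫ t, aG φ G t ξ‖ₑ ^ 2) ^ (1 / 2 : ℝ) := by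
  set W : E2 → ℂ := fun ξ => ∫ t, aG φ G t ξ with hW
  have hWm : Measurable W := by
    have h1 := (aG_meas hφ hG).comp (measurable_swap (α := E2) (β := ℝ))
    exact (h1.stronglyMeasurable.integral_prod_right' (ν := (volume : Measure ℝ))).measurable
  have hI : Integrable (fun z : ℝ × E2 => h z.2 * (starRingEnd ℂ) (aG φ G z.1 z.2)) (volume.prod volume) := by
    have h1 : Integrable (fun z : ℝ × E2 => (k z.1 * ∫ x, b x) * ‖h z.2‖) (volume.prod volume) :=
      (hk.mul_const _).mul_prod hhi.norm
    refine h1.mono' ?_ (Filter.Eventually.of_forall fun z => ?_)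
    · exact ((hh.comp measurable_snd).mul
        (Complex.continuous_conj.measurable.comp (aG_meas hφ hG))).aestronglyMeasurable
    · rw [norm_mul, RCLike.norm_conj, mul_comm]
      gcongr
      exact aG_le hb hGb _ _
  have e1 : ∀ t, ∫ x, 𝓕⁻ (fun ξ => Complex.exp (Complex.I * ((t * φ ξ : ℝ) : ℂ)) * h ξ) x *
      (starRingEnd ℂ) (G t x) = ∫ ξ, h ξ * (starRingEnd ℂ) (aG φ G t ξ) := by
    intro t
    have hc : Continuous (fun ξ => Complex.exp (Complex.I * ((t * φ ξ : ℝ) : ℂ))) := by fun_prop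
    have hi : Integrable (fun ξ => Complex.exp (Complex.I * ((t * φ ξ : ℝ) : ℂ)) * h ξ) := by
      refine hhi.congr' (hc.measurable.mul hh).aestronglyMeasurable (Filter.Eventually.of_forall fun ξ => ?_)
      rw [norm_mul, norm_cis, one_mul]
    rw [sesq hi (G_int hG hb hGb t)]
    congr 1
    ext ξ
    unfold aG
    rw [map_mul, ← Complex.exp_conj, map_mul, Complex.conj_I, Complex.conj_ofReal]
    have : Complex.exp (Complex.I * ((t * φ ξ : ℝ) : ℂ)) =
      Complex.exp (-Complex.I * ((-t * φ ξ : ℝ) : ℂ)) := by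
      congr 1
      push_cast
      ring
    rw [this]
    ring
  simp_rw [e1]
  rw [integral_integral_swap (f := fun t ξ => h ξ * (starRingEnd ℂ) (aG φ G t ξ)) hI]
  have e2 : ∀ ξ, ∫ t, h ξ * (starRingEnd ℂ) (aG φ G t ξ) = h ξ * (starRingEnd ℂ) (W ξ) := by
    intro ξ
    rw [integral_const_mul, integral_conj]
  simp_rw [e2]
  refine (enorm_integral_le_lintegral_enorm _).trans ?_
  have e3 : ∫⁻ ξ, ‖h ξ * (starRingEnd ℂ) (W ξ)‖ₑ =
      ∫⁻ ξ in Ω, ((fun ξ => ‖h ξ‖ₑ) * (fun ξ => ‖W ξ‖ₑ)) ξ := by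
    rw [← lintegral_indicator hΩ]
    congr 1
    ext ξ
    by_cases hξ : ξ ∈ Ω
    · rw [Set.indicator_of_mem hξ, enorm_mul, RCLike.enorm_conj, Pi.mul_apply]
    · rw [Set.indicator_of_notMem hξ, hh0 ξ hξ, zero_mul, enorm_zero]
  rw [e3]
  refine (ENNReal.lintegral_mul_le_Lp_mul_Lq (volume.restrict Ω) (p := 2) (q := 2)
    Real.HolderConjugate.two_two hh.enorm.aemeasurable hWm.enorm.aemeasurable).trans ?_
  simp only [ENNReal.rpow_two]
  gcongr
  exact Measure.restrict_le_self

end dual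

end part11

section part12

/-! ### The truncated `T T^*` argument -/

section trunc

/-- Truncated spatial mass. -/
def Nn (r : ℝ) (u : ℝ → E2 → ℂ) (R t : ℝ) : ℝ := ∫ x in Metric.closedBall (0 : E2) R, ‖u t x‖ ^ r

/-- Set of admissible times. -/
def En (r : ℝ) (u : ℝ → E2 → ℂ) (R : ℝ) : Set ℝ := {t | |t| ≤ R ∧ 1 / R ≤ Nn r u R t}

/-- The extremal test function. -/
def Gn (q r : ℝ) (u : ℝ → E2 → ℂ) (R t : ℝ) (x : E2) : ℂ :=
  (((En r u R).indicator (fun t => Nn r u R t ^ ((q - r) / r)) t *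
    (Metric.closedBall (0 : E2) R).indicator (fun x => ‖u t x‖ ^ (r - 2)) x : ℝ) : ℂ) * u t x

variable {q r R U : ℝ} {u : ℝ → E2 → ℂ}

lemma Nn_nonneg (t : ℝ) : 0 ≤ Nn r u R t := integral_nonneg fun x => by positivity

lemma Nn_meas (hu : Measurable (Function.uncurry u)) : Measurable (Nn r u R) := by
  have h1 : Measurable (fun z : ℝ × E2 => ‖u z.1 z.2‖ ^ r) := (hu.norm.pow_const r)
  exact (h1.stronglyMeasurable.integral_prod_right'
    (ν := (volume.restrict (Metric.closedBall (0 : E2) R)))).measurable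

lemma En_meas (hu : Measurable (Function.uncurry u)) : MeasurableSet (En r u R) := by
  refine MeasurableSet.inter ?_ ?_
  · exact measurableSet_le measurable_norm measurable_const
  · exact measurableSet_le measurable_const (Nn_meas hu)

lemma Gn_meas (hu : Measurable (Function.uncurry u)) : Measurable (Function.uncurry (Gn q r u R)) := by
  have h1 : Measurable (fun z : ℝ × E2 => (En r u R).indicator (fun t => Nn r u R t ^ ((q - r) / r)) z.1) :=
    (((Nn_meas hu).pow_const _).indicator (En_meas hu)).comp measurable_fst
  have h2 : Measurable (fun z : ℝ × E2 =>
      (Metric.closedBall (0 : E2) R).indicator (fun x => ‖u z.1 x‖ ^ (r - 2)) z.2) := by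
    have : (fun z : ℝ × E2 =>
      (Metric.closedBall (0 : E2) R).indicator (fun x => ‖u z.1 x‖ ^ (r - 2)) z.2) =
      (Prod.snd ⁻¹' (Metric.closedBall (0 : E2) R)).indicator (fun z : ℝ × E2 => ‖u z.1 z.2‖ ^ (r - 2)) := by
      ext z
      rfl
    rw [this]
    exact (hu.norm.pow_const _).indicator (measurable_snd Metric.isClosed_closedBall.measurableSet)
  exact (Complex.measurable_ofReal.comp (h1.mul h2)).mul hu

lemma u_int (hu : Measurable (Function.uncurry u)) (hU : ∀ t x, ‖u t x‖ ≤ U) (hr : 2 < r) (t : ℝ) :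
    IntegrableOn (fun x => ‖u t x‖ ^ r) (Metric.closedBall (0 : E2) R) := by
  refine Measure.integrableOn_of_bounded (M := U ^ r) measure_closedBall_lt_top.ne
    ((G_meas hu t).norm.pow_const r).aestronglyMeasurable (Filter.Eventually.of_forall fun x => ?_)
  rw [Real.norm_of_nonneg (by positivity)]
  have := hU t x
  gcongr

lemma Nn_le (hu : Measurable (Function.uncurry u)) (hU : ∀ t x, ‖u t x‖ ≤ U) (hr : 2 < r) (t : ℝ) :
    Nn r u R t ≤ U ^ r * volume.real (Metric.closedBall (0 : E2) R) := by
  unfold Nn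
  refine (setIntegral_mono_on (u_int hu hU hr t) (integrableOn_const measure_closedBall_lt_top.ne)
    Metric.isClosed_closedBall.measurableSet (g := fun _ => U ^ r) fun x _ => ?_).trans (le_of_eq ?_)
  · have := hU t x
    gcongr
  · rw [setIntegral_const, smul_eq_mul, mul_comm]

lemma rpow_le_ends {m V x s : ℝ} (hm : 0 < m) (h1 : m ≤ x) (h2 : x ≤ V) : x ^ s ≤ m ^ s + V ^ s := by
  have hx : 0 < x := hm.trans_le h1
  have hV : 0 < V := hx.trans_le h2
  have a1 : 0 ≤ m ^ s := by positivity
  have a2 : 0 ≤ V ^ s := by positivity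
  rcases le_total 0 s with hs | hs
  · have := Real.rpow_le_rpow hx.le h2 hs
    linarith
  · have := Real.rpow_le_rpow_of_nonpos hm h1 hs
    linarith

lemma Nn_pow_le (hu : Measurable (Function.uncurry u)) (hU : ∀ t x, ‖u t x‖ ≤ U) (hr : 2 < r)
    (hR : 0 < R) (s : ℝ) : ∃ M : ℝ, 0 ≤ M ∧ ∀ t ∈ En r u R, Nn r u R t ^ s ≤ M := by
  have hU0 : 0 ≤ U := (norm_nonneg _).trans (hU 0 0)
  refine ⟨(1 / R) ^ s + (U ^ r * volume.real (Metric.closedBall (0 : E2) R)) ^ s, by positivity, fun t ht => ?_⟩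
  exact rpow_le_ends (by positivity) ht.2 (Nn_le hu hU hr t)

lemma En_sub : En r u R ⊆ Set.Icc (-R) R := fun _ ht => abs_le.1 ht.1

lemma Gn_bd (hu : Measurable (Function.uncurry u)) (hU : ∀ t x, ‖u t x‖ ≤ U) (hr : 2 < r)
    (hR : 0 < R) : ∃ M : ℝ, ∀ t x, ‖Gn q r u R t x‖ ≤ (Set.Icc (-R) R).indicator (fun _ => M) t *
      (Metric.closedBall (0 : E2) R).indicator (fun _ => U ^ (r - 2) * U) x := by
  have hU0 : 0 ≤ U := (norm_nonneg _).trans (hU 0 0)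
  obtain ⟨M, hM0, hM⟩ := Nn_pow_le hu hU hr hR ((q - r) / r)
  refine ⟨M, fun t x => ?_⟩
  unfold Gn
  have hr2 : 0 < r - 2 := by linarith
  by_cases ht : t ∈ En r u R
  · by_cases hx : x ∈ Metric.closedBall (0 : E2) R
    · rw [Set.indicator_of_mem ht, Set.indicator_of_mem hx, Set.indicator_of_mem hx,
        Set.indicator_of_mem (En_sub ht), norm_mul, Complex.norm_real, norm_mul,
        Real.norm_of_nonneg (Real.rpow_nonneg (Nn_nonneg t) _), Real.norm_of_nonneg (by positivity), mul_assoc]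
      have h1 := hU t x
      have h2 := hM t ht
      gcongr
    · rw [Set.indicator_of_notMem hx, Set.indicator_of_notMem hx]
      simp
  · rw [Set.indicator_of_notMem ht]
    simp only [zero_mul, Complex.ofReal_zero, norm_zero]
    refine mul_nonneg (Set.indicator_nonneg (fun _ _ => hM0) _) (Set.indicator_nonneg (fun _ _ => by positivity) _)

lemma Gn_mass (hu : Measurable (Function.uncurry u)) (hU : ∀ t x, ‖u t x‖ ≤ U) (hr : 2 < r) (hq : 2 < q)
    (hR : 0 < R) (t : ℝ) :
    ∫⁻ x, ENNReal.ofReal (‖Gn q r u R t x‖ ^ (1 + 1 / (r - 1))) ≤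
      ENNReal.ofReal ((En r u R).indicator (fun t => Nn r u R t ^ ((q - 1) / r)) t ^ (1 + 1 / (r - 1))) := by
  have hr1 : 0 < r - 1 := by linarith
  have hr0 : 0 < r := by linarith
  have hp0 : 0 < 1 + 1 / (r - 1) := by positivity
  by_cases ht : t ∈ En r u R
  · have hN : 0 < Nn r u R t := lt_of_lt_of_le (by positivity) ht.2
    rw [Set.indicator_of_mem ht]
    have e : ∀ x, ENNReal.ofReal (‖Gn q r u R t x‖ ^ (1 + 1 / (r - 1))) =
        (Metric.closedBall (0 : E2) R).indicator (fun x =>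
          ENNReal.ofReal ((Nn r u R t ^ ((q - r) / r)) ^ (1 + 1 / (r - 1))) * ENNReal.ofReal (‖u t x‖ ^ r)) x := by
      intro x
      unfold Gn
      rw [Set.indicator_of_mem ht]
      by_cases hx : x ∈ Metric.closedBall (0 : E2) R
      · rw [Set.indicator_of_mem hx, Set.indicator_of_mem hx, ← ENNReal.ofReal_mul (by positivity)]
        congr 1
        rw [norm_mul, Complex.norm_real, norm_mul,
          Real.norm_of_nonneg (Real.rpow_nonneg (Nn_nonneg t) _), Real.norm_of_nonneg (by positivity), mul_assoc,
          Real.mul_rpow (by positivity) (by positivity)]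
        congr 1
        rcases (norm_nonneg (u t x)).eq_or_lt with h0 | h0
        · rw [← h0, mul_zero, Real.zero_rpow hp0.ne', Real.zero_rpow hr0.ne']
        · rw [← Real.rpow_add_one h0.ne', ← Real.rpow_mul h0.le]
          congr 1
          field_simp
          ring
      · rw [Set.indicator_of_notMem hx, Set.indicator_of_notMem hx]
        rw [mul_zero, Complex.ofReal_zero, zero_mul, norm_zero, Real.zero_rpow hp0.ne', ENNReal.ofReal_zero]
    simp_rw [e]
    rw [lintegral_indicator Metric.isClosed_closedBall.measurableSet,
      lintegral_const_mul' _ _ ENNReal.ofReal_ne_top,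
      ← ofReal_integral_eq_lintegral_ofReal (u_int hu hU hr t)
        (Filter.Eventually.of_forall fun x => by positivity), ← ENNReal.ofReal_mul (by positivity)]
    apply le_of_eq
    congr 1
    change _ * Nn r u R t = _
    rw [← Real.rpow_mul hN.le, ← Real.rpow_mul hN.le, ← Real.rpow_add_one hN.ne']
    congr 1
    field_simp
    ring
  · have e : ∀ x, ENNReal.ofReal (‖Gn q r u R t x‖ ^ (1 + 1 / (r - 1))) = 0 := by
      intro x
      unfold Gn
      rw [Set.indicator_of_notMem ht]
      rw [zero_mul, Complex.ofReal_zero, zero_mul, norm_zero, Real.zero_rpow hp0.ne', ENNReal.ofReal_zero]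
    simp_rw [e]
    rw [lintegral_zero]
    exact zero_le

lemma Gn_pair (hr : 2 < r) (hR : 0 < R) (t : ℝ) :
    ∫ x, u t x * (starRingEnd ℂ) (Gn q r u R t x) =
      (((En r u R).indicator (fun t => Nn r u R t ^ (q / r)) t : ℝ) : ℂ) := by
  have hr0 : 0 < r := by linarith
  by_cases ht : t ∈ En r u R
  · have hN : 0 < Nn r u R t := lt_of_lt_of_le (by positivity) ht.2
    have e : ∀ x, u t x * (starRingEnd ℂ) (Gn q r u R t x) =
        ((Nn r u R t ^ ((q - r) / r) * (Metric.closedBall (0 : E2) R).indicator (fun x => ‖u t x‖ ^ r) x : ℝ) : ℂ) := by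
      intro x
      unfold Gn
      rw [Set.indicator_of_mem ht, map_mul, Complex.conj_ofReal]
      have : u t x * (starRingEnd ℂ) (u t x) = ((‖u t x‖ ^ 2 : ℝ) : ℂ) := by
        rw [Complex.mul_conj, Complex.normSq_eq_norm_sq]
      rw [mul_left_comm, this, ← Complex.ofReal_mul]
      congr 1
      rw [mul_assoc]
      congr 1
      by_cases hx : x ∈ Metric.closedBall (0 : E2) R
      · rw [Set.indicator_of_mem hx, Set.indicator_of_mem hx]
        rcases (norm_nonneg (u t x)).eq_or_lt with h0 | h0
        · rw [← h0, Real.zero_rpow hr0.ne']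
          simp
        · rw [← Real.rpow_two, ← Real.rpow_add h0]
          congr 1
          ring
      · rw [Set.indicator_of_notMem hx, Set.indicator_of_notMem hx, zero_mul]
    simp_rw [e]
    rw [integral_complex_ofReal, integral_const_mul, integral_indicator Metric.isClosed_closedBall.measurableSet,
      Set.indicator_of_mem ht]
    congr 1
    change _ * Nn r u R t = _
    rw [← Real.rpow_add_one hN.ne']
    congr 1
    field_simp
    ring
  · have e : ∀ x, u t x * (starRingEnd ℂ) (Gn q r u R t x) = 0 := by
      intro x
      unfold Gn
      rw [Set.indicator_of_notMem ht]
      simp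
    simp [e, Set.indicator_of_notMem ht]

lemma Z_int (hu : Measurable (Function.uncurry u)) (hU : ∀ t x, ‖u t x‖ ≤ U) (hr : 2 < r)
    (hR : 0 < R) (s : ℝ) : Integrable ((En r u R).indicator (fun t => Nn r u R t ^ s)) := by
  obtain ⟨M, hM0, hM⟩ := Nn_pow_le hu hU hr hR s
  rw [integrable_indicator_iff (En_meas hu)]
  refine IntegrableOn.of_bound ((measure_mono En_sub).trans_lt measure_Icc_lt_top)
    ((Nn_meas hu).pow_const s).aestronglyMeasurable M ?_
  filter_upwards [ae_restrict_mem (En_meas hu)] with t ht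
  rw [Real.norm_of_nonneg (Real.rpow_nonneg (Nn_nonneg t) _)]
  exact hM t ht

end trunc

end part12

section part13

/-! ### Abstract Strichartz estimate -/

section strich
variable {Ω : Set E2} {φ : E2 → ℝ}

/-- The evolution with symbol `e^{itφ}` and frequency data `h`. -/
def uu (φ : E2 → ℝ) (h : E2 → ℂ) (t : ℝ) : E2 → ℂ :=
  𝓕⁻ (fun ξ => Complex.exp (Complex.I * ((t * φ ξ : ℝ) : ℂ)) * h ξ)

/-- The constant of the Strichartz estimate (squared). -/
def K1 (q r : ℝ) : ℝ := Cr r * (2 * (2 / (1 - 2 / q) + 3))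

lemma K1_pos {q r : ℝ} (hq : 2 < q) (hr : 2 < r) : 0 < K1 q r := by
  unfold K1
  have h1 := Cr_pos hr
  have h2 : 0 < 1 - 2 / q := by
    rw [sub_pos, div_lt_one (by linarith)]
    exact hq
  positivity

lemma uu_meas (hφ : Continuous φ) {h : E2 → ℂ} (hh : Measurable h) :
    Measurable (Function.uncurry (uu φ h)) := by
  have h1 : Measurable (fun z : (ℝ × E2) × E2 =>
      Complex.exp (((2 * Real.pi * inner ℝ z.2 z.1.2 : ℝ) : ℂ) * Complex.I) *
        (Complex.exp (Complex.I * ((z.1.1 * φ z.2 : ℝ) : ℂ)) * h z.2)) := by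
    have h2 : Measurable (fun z : (ℝ × E2) × E2 => h z.2) := hh.comp measurable_snd
    have h3 : Continuous (fun z : (ℝ × E2) × E2 =>
      Complex.exp (((2 * Real.pi * inner ℝ z.2 z.1.2 : ℝ) : ℂ) * Complex.I)) := by fun_prop
    have h4 : Continuous (fun z : (ℝ × E2) × E2 =>
      Complex.exp (Complex.I * ((z.1.1 * φ z.2 : ℝ) : ℂ))) := by fun_prop
    exact h3.measurable.mul (h4.measurable.mul h2)
  have h4 := h1.stronglyMeasurable.integral_prod_right' (ν := (volume : Measure E2))
  convert h4.measurable using 1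
  ext z
  rw [Function.uncurry, uu, Real.fourierInv_eq']
  rfl

lemma uu_le (h : E2 → ℂ) (t : ℝ) (x : E2) : ‖uu φ h t x‖ ≤ ∫ ξ, ‖h ξ‖ := by
  unfold uu
  rw [Real.fourierInv_eq_fourier_neg]
  refine (fou_norm_le _ _).trans (le_of_eq ?_)
  congr 1
  ext ξ
  rw [norm_mul, norm_cis, one_mul]

lemma final_alg {Z H K q : ℝ} (hq : 2 < q) (hZ : 0 < Z) (hH : 0 ≤ H) (hK : 0 ≤ K)
    (h : Z ≤ H ^ (1 / 2 : ℝ) * (K * Z ^ (2 - 2 / q)) ^ (1 / 2 : ℝ)) : Z ≤ (K * H) ^ (q / 2) := by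
  have h1 : Z ^ (2 : ℝ) ≤ H * (K * Z ^ (2 - 2 / q)) := by
    have h2 := Real.rpow_le_rpow hZ.le h (by norm_num : (0 : ℝ) ≤ 2)
    rw [Real.mul_rpow (by positivity) (by positivity), ← Real.rpow_mul hH,
      ← Real.rpow_mul (by positivity)] at h2
    norm_num at h2
    simpa using h2
  have h3 : Z ^ (2 / q) ≤ K * H := by
    have hpos : 0 < Z ^ (2 - 2 / q) := by positivity
    have e : Z ^ (2 : ℝ) = Z ^ (2 / q) * Z ^ (2 - 2 / q) := by
      rw [← Real.rpow_add hZ]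
      congr 1
      ring
    rw [e] at h1
    refine le_of_mul_le_mul_right (h1.trans (le_of_eq ?_)) hpos
    ring
  have h4 := Real.rpow_le_rpow (by positivity) h3 (by positivity : 0 ≤ q / 2)
  rw [← Real.rpow_mul hZ.le] at h4
  have : 2 / q * (q / 2) = 1 := by field_simp
  rwa [this, Real.rpow_one] at h4

lemma strich_trunc (hΩ : MeasurableSet Ω) (hΩf : volume Ω ≠ ∞) (hφ : Continuous φ) {D : ℝ} (hD : 0 < D)
    (hK : ∀ τ : ℝ, τ ≠ 0 → ∀ z : E2,
      ‖∫ ξ in Ω, Complex.exp (Complex.I * ((2 * Real.pi * inner ℝ ξ z : ℝ) : ℂ)) *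
      Complex.exp (Complex.I * ((τ * φ ξ : ℝ) : ℂ))‖ ≤ D / |τ|)
    {q r : ℝ} (hr : 2 < r) (hq : 2 < q) (hqr : 1 - 2 / r = 2 / q)
    {h : E2 → ℂ} (hh : Measurable h) (hhi : Integrable h)
    (hh0 : ∀ ξ, ξ ∉ Ω → h ξ = 0) {H : ℝ} (hH : 0 ≤ H) (hhH : ∫⁻ ξ, ‖h ξ‖ₑ ^ 2 = ENNReal.ofReal H)
    {R : ℝ} (hR : 0 < R) :
    ∫⁻ t, (En r (uu φ h) R).indicator (fun t => ENNReal.ofReal (Nn r (uu φ h) R t ^ (q / r))) t ≤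
      ENNReal.ofReal ((K1 q r * D ^ (2 / q) * H) ^ (q / 2)) := by
  set u := uu φ h with hu_def
  have hr0 : 0 < r := by linarith
  have hq0 : 0 < q := by linarith
  have hq1 : 0 < q - 1 := by linarith
  have hu : Measurable (Function.uncurry u) := uu_meas hφ hh
  have hU : ∀ t x, ‖u t x‖ ≤ ∫ ξ, ‖h ξ‖ := uu_le h
  set Z : ℝ := ∫ t, (En r u R).indicator (fun t => Nn r u R t ^ (q / r)) t with hZdef
  have hind0 : ∀ s t : ℝ, 0 ≤ (En r u R).indicator (fun t => Nn r u R t ^ s) t := by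
    intro s t
    apply Set.indicator_nonneg
    intro t _
    exact Real.rpow_nonneg (Nn_nonneg t) _
  have hZ0 : 0 ≤ Z := integral_nonneg (hind0 _)
  have hZl : ∫⁻ t, ENNReal.ofReal ((En r u R).indicator (fun t => Nn r u R t ^ (q / r)) t) = ENNReal.ofReal Z :=
    (ofReal_integral_eq_lintegral_ofReal (Z_int hu hU hr hR _) (Filter.Eventually.of_forall (hind0 _))).symm
  have hlhs : ∫⁻ t, (En r u R).indicator (fun t => ENNReal.ofReal (Nn r u R t ^ (q / r))) t = ENNReal.ofReal Z := by
    rw [← hZl]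
    congr 1
    ext t
    by_cases ht : t ∈ En r u R
    · rw [Set.indicator_of_mem ht, Set.indicator_of_mem ht]
    · rw [Set.indicator_of_notMem ht, Set.indicator_of_notMem ht, ENNReal.ofReal_zero]
  rw [hlhs]
  rcases hZ0.eq_or_lt with hz | hZ
  · rw [← hz, ENNReal.ofReal_zero]
    exact zero_le
  apply ENNReal.ofReal_le_ofReal
  have hKp := K1_pos hq hr
  refine final_alg hq hZ hH (by positivity) ?_
  obtain ⟨M, hM⟩ := Gn_bd (q := q) hu hU hr hR
  set k : ℝ → ℝ := (Set.Icc (-R) R).indicator (fun _ => M) with hk_def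
  set b : E2 → ℝ := (Metric.closedBall (0 : E2) R).indicator
    (fun _ => (∫ ξ, ‖h ξ‖) ^ (r - 2) * ∫ ξ, ‖h ξ‖) with hb_def
  have hk : Integrable k := by
    rw [hk_def, integrable_indicator_iff measurableSet_Icc]
    exact integrableOn_const measure_Icc_lt_top.ne
  have hbp : ∀ p, MemLp b p := fun p =>
    memLp_indicator_const p Metric.isClosed_closedBall.measurableSet _ (Or.inr measure_closedBall_lt_top.ne)
  have hb : Integrable b := memLp_one_iff_integrable.1 (hbp 1)
  have hp : (q / (q - 1)).HolderConjugate q := by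
    rw [Real.holderConjugate_comm]
    exact Real.HolderConjugate.conjExponent (by linarith)
  have hFP : ∫⁻ t, ENNReal.ofReal ((En r u R).indicator (fun t => Nn r u R t ^ ((q - 1) / r)) t ^ (q / (q - 1))) ≤
      ENNReal.ofReal Z := by
    rw [← hZl]
    apply lintegral_mono
    intro t
    apply ENNReal.ofReal_le_ofReal
    by_cases ht : t ∈ En r u R
    · rw [Set.indicator_of_mem ht, Set.indicator_of_mem ht, ← Real.rpow_mul (Nn_nonneg t)]
      apply le_of_eq
      congr 1
      field_simp
    · rw [Set.indicator_of_notMem ht, Set.indicator_of_notMem ht, Real.zero_rpow (by positivity)]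
  have hA := propA hΩ hΩf hφ hD hK (Gn_meas (q := q) hu) hk hb (hbp 2) hM
    (F := (En r u R).indicator (fun t => Nn r u R t ^ ((q - 1) / r)))
    (((Nn_meas hu).pow_const _).indicator (En_meas hu)) (hind0 _) hr hq hqr hp hZ
    (Gn_mass hu hU hr hq hR) hFP
  have hB := dual_pair hΩ hφ (Gn_meas (q := q) (r := r) (R := R) hu) hk hb hM hh hhi hh0
  have e1 : ∫ t, ∫ x, 𝓕⁻ (fun ξ => Complex.exp (Complex.I * ((t * φ ξ : ℝ) : ℂ)) * h ξ) x *
      (starRingEnd ℂ) (Gn q r u R t x) = (Z : ℂ) := by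
    rw [hZdef, ← integral_complex_ofReal]
    congr 1
    ext t
    exact Gn_pair (q := q) (u := u) hr hR t
  rw [e1, hhH, ← ofReal_norm, Complex.norm_real, Real.norm_of_nonneg hZ0] at hB
  have hC : ENNReal.ofReal Z ≤ ENNReal.ofReal H ^ (1 / 2 : ℝ) *
      ENNReal.ofReal (K1 q r * D ^ (2 / q) * Z ^ (2 - 2 / q)) ^ (1 / 2 : ℝ) := by
    refine hB.trans ?_
    gcongr
    refine hA.trans (le_of_eq ?_)
    congr 1
    unfold K1
    ring
  rw [ENNReal.ofReal_rpow_of_nonneg hH (by norm_num),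
    ENNReal.ofReal_rpow_of_nonneg (by positivity) (by norm_num), ← ENNReal.ofReal_mul (by positivity)] at hC
  exact (ENNReal.ofReal_le_ofReal_iff (by positivity)).1 hC

lemma strich (hΩ : MeasurableSet Ω) (hΩf : volume Ω ≠ ∞) (hφ : Continuous φ) {D : ℝ} (hD : 0 < D)
    (hK : ∀ τ : ℝ, τ ≠ 0 → ∀ z : E2,
      ‖∫ ξ in Ω, Complex.exp (Complex.I * ((2 * Real.pi * inner ℝ ξ z : ℝ) : ℂ)) *
      Complex.exp (Complex.I * ((τ * φ ξ : ℝ) : ℂ))‖ ≤ D / |τ|)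
    {q r : ℝ} (hr : 2 < r) (hq : 2 < q) (hqr : 1 - 2 / r = 2 / q)
    {h : E2 → ℂ} (hh : Measurable h) (hhi : Integrable h)
    (hh0 : ∀ ξ, ξ ∉ Ω → h ξ = 0) {H : ℝ} (hH : 0 ≤ H) (hhH : ∫⁻ ξ, ‖h ξ‖ₑ ^ 2 = ENNReal.ofReal H) :
    ∫⁻ t, (∫⁻ x, ‖uu φ h t x‖ₑ ^ r) ^ (q / r) ≤ ENNReal.ofReal ((K1 q r * D ^ (2 / q) * H) ^ (q / 2)) := by
  set u := uu φ h with hu_def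
  have hr0 : 0 < r := by linarith
  have hq0 : 0 < q := by linarith
  have hqr0 : 0 < q / r := by positivity
  have hu : Measurable (Function.uncurry u) := uu_meas hφ hh
  have hU : ∀ t x, ‖u t x‖ ≤ ∫ ξ, ‖h ξ‖ := uu_le h
  set Fn : ℕ → ℝ → ℝ≥0∞ := fun n =>
    (En r u (n + 1)).indicator (fun t => ENNReal.ofReal (Nn r u (n + 1) t ^ (q / r))) with hFn
  have hFm : ∀ n, Measurable (Fn n) := fun n =>
    (((Nn_meas hu).pow_const _).ennreal_ofReal).indicator (En_meas hu)
  have hbd : ∀ n, ∫⁻ t, Fn n t ≤ ENNReal.ofReal ((K1 q r * D ^ (2 / q) * H) ^ (q / 2)) := fun n =>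
    strich_trunc hΩ hΩf hφ hD hK hr hq hqr hh hhi hh0 hH hhH (by positivity)
  have hlim : ∀ t, (∫⁻ x, ‖u t x‖ₑ ^ r) ^ (q / r) ≤ Filter.liminf (fun n => Fn n t) Filter.atTop := by
    intro t
    rcases eq_or_ne (∫⁻ x, ‖u t x‖ₑ ^ r) 0 with h0 | h0
    · rw [h0, ENNReal.zero_rpow_of_pos hqr0]
      exact zero_le
    have hNe : ∀ n : ℕ, ∫⁻ x in Metric.closedBall (0 : E2) ((n : ℝ) + 1), ‖u t x‖ₑ ^ r =
        ENNReal.ofReal (Nn r u (n + 1) t) := by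
      intro n
      unfold Nn
      rw [ofReal_integral_eq_lintegral_ofReal (u_int hu hU hr t)
        (Filter.Eventually.of_forall fun x => by positivity)]
      congr 1
      ext x
      rw [← ENNReal.ofReal_rpow_of_nonneg (norm_nonneg _) hr0.le, ofReal_norm]
    have htop : Filter.Tendsto (fun n : ℕ => (n : ℝ) + 1) Filter.atTop Filter.atTop :=
      Filter.tendsto_atTop_add_const_right _ _ tendsto_natCast_atTop_atTop
    have hN : Filter.Tendsto (fun n : ℕ => ENNReal.ofReal (Nn r u (n + 1) t)) Filter.atTop
        (nhds (∫⁻ x, ‖u t x‖ₑ ^ r)) := by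
      have h1 := (aecover_closedBall (μ := (volume : Measure E2)) (x := 0) htop).lintegral_tendsto_of_countably_generated
        (f := fun x => ‖u t x‖ₑ ^ r) ((G_meas hu t).enorm.pow_const r).aemeasurable
      simpa only [hNe] using h1
    have hinv : Filter.Tendsto (fun n : ℕ => ENNReal.ofReal (1 / ((n : ℝ) + 1))) Filter.atTop (nhds 0) := by
      have := ENNReal.tendsto_ofReal (tendsto_one_div_add_atTop_nhds_zero_nat (𝕜 := ℝ))
      simpa using this
    have hlt := hinv.eventually_lt hN (pos_iff_ne_zero.2 h0)
    have hev : ∀ᶠ n : ℕ in Filter.atTop, t ∈ En r u (n + 1) := by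
      filter_upwards [hlt, htop.eventually_ge_atTop |t|] with n h1 h2
      exact ⟨h2, (ENNReal.ofReal_lt_ofReal_iff'.1 h1).1.le⟩
    have hT : Filter.Tendsto (fun n => Fn n t) Filter.atTop (nhds ((∫⁻ x, ‖u t x‖ₑ ^ r) ^ (q / r))) := by
      refine (hN.ennrpow_const (q / r)).congr' ?_
      filter_upwards [hev] with n hn
      simp only [hFn]
      rw [Set.indicator_of_mem hn, ENNReal.ofReal_rpow_of_nonneg (Nn_nonneg t) hqr0.le]
    rw [hT.liminf_eq]
  calc _ ≤ ∫⁻ t, Filter.liminf (fun n => Fn n t) Filter.atTop := lintegral_mono hlim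
    _ ≤ Filter.liminf (fun n => ∫⁻ t, Fn n t) Filter.atTop := lintegral_liminf_le hFm
    _ ≤ Filter.liminf (fun _ : ℕ => ENNReal.ofReal ((K1 q r * D ^ (2 / q) * H) ^ (q / 2))) Filter.atTop :=
        Filter.liminf_le_liminf (Filter.Eventually.of_forall hbd)
    _ = _ := Filter.liminf_const _

end strich

end part13

section part14

/-! ### Application to the water-wave propagator -/

/-- The phase per unit time. -/
def phi (μ : ℝ) (ξ : E2) : ℝ := mr (√μ * ‖ξ‖) / √μ

lemma phi_cont (μ : ℝ) : Continuous (phi μ) := by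
  have := mr_cont
  unfold phi
  fun_prop

lemma phi_rph (μ τ : ℝ) (ξ : E2) : τ * phi μ ξ = rph μ τ ‖ξ‖ := by
  unfold phi rph
  ring

lemma phi_m2 (μ τ : ℝ) (ξ : E2) : τ / √μ * m2 (√μ • ξ) = τ * phi μ ξ := by
  rw [phi_rph, m2_eq, norm_smul, Real.norm_of_nonneg (Real.sqrt_nonneg _), rph]

lemma dK_pos {μ lam : ℝ} (hμ : 0 < μ) : 0 < dK μ lam := by
  have := one_le_jap (√μ * lam)
  have h2 : 0 < jap (√μ * lam) := by linarith
  unfold dK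
  positivity

lemma dK_eq {μ lam : ℝ} (hμ : 0 < μ) :
    μ ^ (-(1 : ℝ) / 2) * jap (Real.sqrt μ * lam) ^ ((3 : ℝ) / 2) = dK μ lam := by
  have := one_le_jap (√μ * lam)
  have h2 : 0 < jap (√μ * lam) := by linarith
  unfold dK
  have e1 : μ ^ (-(1 : ℝ) / 2) = (√μ)⁻¹ := by
    rw [Real.sqrt_eq_rpow, ← Real.rpow_neg hμ.le]
    congr 1
    ring
  have e2 : jap (√μ * lam) ^ ((3 : ℝ) / 2) = jap (√μ * lam) * √(jap (√μ * lam)) := by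
    rw [Real.sqrt_eq_rpow (jap (√μ * lam)), ← Real.rpow_one_add' h2.le (by norm_num)]
    norm_num
  rw [e1, e2]
  field_simp

lemma Om_fin (lam : ℝ) : volume (Om lam) ≠ ∞ := by
  refine ((measure_mono (t := Metric.closedBall (0 : E2) (2 * lam)) fun ξ hξ => ?_).trans_lt
    measure_closedBall_lt_top).ne
  rw [mem_closedBall_zero_iff]
  exact hξ.2

/-- The frequency localized data. -/
def hh (χ : ℝ → ℝ) (lam : ℝ) (f : E2 → ℂ) : E2 → ℂ :=
  fun ξ : E2 => ((χ (‖ξ‖ / lam) - χ (2 * ‖ξ‖ / lam) : ℝ) : ℂ) * 𝓕 f ξ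

section data
variable {χ : ℝ → ℝ} {lam : ℝ}

lemma hh_cont (hχ : Continuous χ) {f : E2 → ℂ} (hf : Integrable f) : Continuous (hh χ lam f) := by
  have := fourier_cont hf
  unfold hh
  fun_prop

lemma hh_zero (hl : 0 < lam) (hsupp : Function.support χ ⊆ Set.Ioo (-2 : ℝ) 2)
    (hone : ∀ s ∈ Set.Icc (-1 : ℝ) 1, χ s = 1) (f : E2 → ℂ) {ξ : E2} (hξ : ξ ∉ Om lam) : hh χ lam f ξ = 0 := by
  have hn := norm_nonneg ξ
  have hz : ∀ s : ℝ, 2 ≤ s → χ s = 0 := by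
    intro s hs
    by_contra h
    have := (hsupp h).2
    linarith
  have : χ (‖ξ‖ / lam) - χ (2 * ‖ξ‖ / lam) = 0 := by
    rcases lt_or_ge ‖ξ‖ (lam / 2) with h1 | h1
    · rw [hone, hone, sub_self]
      · refine ⟨by have : 0 ≤ 2 * ‖ξ‖ / lam := by positivity
                   linarith, ?_⟩
        rw [div_le_one hl]
        linarith
      · refine ⟨by have : 0 ≤ ‖ξ‖ / lam := by positivity
                   linarith, ?_⟩
        rw [div_le_one hl]
        linarith
    · have h2 : 2 * lam < ‖ξ‖ := by
        by_contra h
        exact hξ ⟨h1, not_lt.1 h⟩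
      rw [hz, hz, sub_self]
      · rw [le_div_iff₀ hl]
        linarith
      · rw [le_div_iff₀ hl]
        linarith
  unfold hh
  rw [this, Complex.ofReal_zero, zero_mul]

lemma hh_memLp (hl : 0 < lam) (hχ : Continuous χ) (hsupp : Function.support χ ⊆ Set.Ioo (-2 : ℝ) 2)
    (hone : ∀ s ∈ Set.Icc (-1 : ℝ) 1, χ s = 1) {f : E2 → ℂ} (hf : Integrable f) (p : ℝ≥0∞) :
    MemLp (hh χ lam f) p := by
  refine (hh_cont hχ hf).memLp_of_hasCompactSupport ?_
  refine HasCompactSupport.of_support_subset_isCompact (isCompact_closedBall (0 : E2) (2 * lam)) fun ξ hξ => ?_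
  rw [mem_closedBall_zero_iff]
  by_contra h
  exact hξ (hh_zero hl hsupp hone f fun h2 => h h2.2)

lemma prop_le (hl : 0 < lam) (hχ : Continuous χ) (hsupp : Function.support χ ⊆ Set.Ioo (-2 : ℝ) 2)
    (hone : ∀ s ∈ Set.Icc (-1 : ℝ) 1, χ s = 1) {f : E2 → ℂ} (hf : Integrable f) (p : ℝ≥0∞) (μ t : ℝ) :
    eLpNorm (prop2 μ t (proj2 χ lam f)) p volume ≤ eLpNorm (uu (phi μ) (hh χ lam f) t) p volume := by
  have hi : Integrable (hh χ lam f) := memLp_one_iff_integrable.1 (hh_memLp hl hχ hsupp hone hf 1)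
  have hg : proj2 χ lam f = 𝓕⁻ (hh χ lam f) := rfl
  unfold prop2
  simp_rw [phi_m2]
  by_cases h : Integrable (proj2 χ lam f)
  · have e : 𝓕 (proj2 χ lam f) = hh χ lam f := by
      rw [hg]
      refine (hh_cont hχ hf).fourier_fourierInv_eq hi ?_
      have e2 : 𝓕 (hh χ lam f) = fun ξ => 𝓕⁻ (hh χ lam f) (-ξ) := by
        ext ξ
        rw [Real.fourierInv_eq_fourier_neg, neg_neg]
      rw [e2]
      rw [hg] at h
      exact h.comp_neg
    rw [e]
    exact le_rfl
  · have e : ∀ ξ, 𝓕 (proj2 χ lam f) ξ = 0 := by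
      intro ξ
      rw [Real.fourier_eq']
      apply integral_undef
      intro h2
      apply h
      have hm : AEStronglyMeasurable (proj2 χ lam f) volume := by
        rw [hg]
        exact (finv_cont hi).aestronglyMeasurable
      refine h2.congr' hm (Filter.Eventually.of_forall fun x => ?_)
      rw [norm_smul, Complex.norm_exp_ofReal_mul_I, one_mul]
    simp_rw [e, mul_zero]
    have e2 : 𝓕⁻ (fun _ : E2 => (0 : ℂ)) = fun _ => 0 := by
      ext x
      rw [Real.fourierInv_eq']
      simp
    rw [e2]
    simp

lemma uu_L2 (hl : 0 < lam) (hχ : Continuous χ) (hsupp : Function.support χ ⊆ Set.Ioo (-2 : ℝ) 2)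
    (hone : ∀ s ∈ Set.Icc (-1 : ℝ) 1, χ s = 1) {f : E2 → ℂ} (hf : Integrable f) (μ t : ℝ) :
    eLpNorm (uu (phi μ) (hh χ lam f) t) 2 volume = eLpNorm (hh χ lam f) 2 volume := by
  have hc := phi_cont μ
  have hc2 := hh_cont (lam := lam) hχ hf
  have hm : ∀ p, MemLp (fun ξ => Complex.exp (Complex.I * ((t * phi μ ξ : ℝ) : ℂ)) * hh χ lam f ξ) p := by
    intro p
    refine (hh_memLp hl hχ hsupp hone hf p).congr_norm ?_ ?_
    · exact Continuous.aestronglyMeasurable (by fun_prop)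
    · filter_upwards with ξ
      rw [norm_mul, norm_cis, one_mul]
  unfold uu
  rw [plancherel_inv (memLp_one_iff_integrable.1 (hm 1)) (hm 2)]
  apply eLpNorm_congr_norm_ae
  filter_upwards with ξ
  rw [norm_mul, norm_cis, one_mul]

lemma proj_L2 (hl : 0 < lam) (hχ : Continuous χ) (hsupp : Function.support χ ⊆ Set.Ioo (-2 : ℝ) 2)
    (hone : ∀ s ∈ Set.Icc (-1 : ℝ) 1, χ s = 1) {f : E2 → ℂ} (hf : Integrable f) :
    eLpNorm (proj2 χ lam f) 2 volume = eLpNorm (hh χ lam f) 2 volume :=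
  plancherel_inv (memLp_one_iff_integrable.1 (hh_memLp hl hχ hsupp hone hf 1)) (hh_memLp hl hχ hsupp hone hf 2)

lemma main_fin (hχ : Continuous χ) (hsupp : Function.support χ ⊆ Set.Ioo (-2 : ℝ) 2)
    (hone : ∀ s ∈ Set.Icc (-1 : ℝ) 1, χ s = 1) {q r : ℝ} (hr : 2 < r) (hq : 2 < q)
    (hqr : 1 - 2 / r = 2 / q) {μ : ℝ} (hμ : 0 < μ) (hl : 0 < lam) {f : E2 → ℂ} (hf : Integrable f) :
    (∫⁻ t, eLpNorm (prop2 μ t (proj2 χ lam f)) (ENNReal.ofReal r) volume ^ q) ^ (1 / q) ≤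
      ENNReal.ofReal ((K1 q r ^ (1 / 2 : ℝ) * 2400000 ^ (1 / q)) * dK μ lam ^ (1 / q)) *
        eLpNorm (proj2 χ lam f) 2 volume := by
  have hr0 : 0 < r := by linarith
  have hq0 : 0 < q := by linarith
  have hdK := dK_pos (lam := lam) hμ
  have hKp := K1_pos hq hr
  have hm := hh_memLp hl hχ hsupp hone hf
  rw [proj_L2 hl hχ hsupp hone hf]
  set h := hh χ lam f with hdef
  set N : ℝ := (eLpNorm h 2 volume).toReal with hN
  have hN0 : 0 ≤ N := ENNReal.toReal_nonneg
  have hNe : eLpNorm h 2 volume = ENNReal.ofReal N := (ENNReal.ofReal_toReal (hm 2).2.ne).symm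
  have hS := strich (Om_meas lam) (Om_fin lam) (phi_cont μ) (D := 2400000 * dK μ lam) (by positivity)
    (fun τ hτ z => by simp_rw [phi_rph]; exact kernel_bd hμ hl hτ z) hr hq hqr
    (h := h) (hh_cont hχ hf).measurable (memLp_one_iff_integrable.1 (hm 1))
    (fun ξ hξ => hh_zero hl hsupp hone f hξ) (H := N ^ 2) (by positivity)
    (by rw [lint_sq, hNe, ENNReal.ofReal_pow hN0])
  have h1 : ∫⁻ t, eLpNorm (prop2 μ t (proj2 χ lam f)) (ENNReal.ofReal r) volume ^ q ≤
      ∫⁻ t, (∫⁻ x, ‖uu (phi μ) h t x‖ₑ ^ r) ^ (q / r) := by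
    apply lintegral_mono
    intro t
    have h2 := prop_le hl hχ hsupp hone hf (ENNReal.ofReal r) μ t
    have h3 := ENNReal.rpow_le_rpow h2 hq0.le
    refine h3.trans (le_of_eq ?_)
    rw [eLpNorm_eq_lintegral_rpow_enorm_toReal (by simpa using hr0) ENNReal.ofReal_ne_top,
      ENNReal.toReal_ofReal hr0.le, ← ENNReal.rpow_mul]
    congr 1
    field_simp
  rw [hNe, ← ENNReal.ofReal_mul (by positivity)]
  refine (ENNReal.rpow_le_rpow (h1.trans hS) (by positivity)).trans (le_of_eq ?_)
  rw [ENNReal.ofReal_rpow_of_nonneg (by positivity) (by positivity), ← Real.rpow_mul (by positivity)]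
  congr 1
  have e1 : q / 2 * (1 / q) = 1 / 2 := by field_simp
  rw [e1, Real.mul_rpow (by positivity) (by positivity), Real.mul_rpow (by positivity) (by positivity),
    ← Real.rpow_mul (by positivity), ← Real.rpow_natCast N 2, ← Real.rpow_mul hN0]
  have e2 : 2 / q * (1 / 2) = 1 / q := by field_simp
  have e3 : ((2 : ℕ) : ℝ) * (1 / 2) = 1 := by norm_num
  rw [e2, e3, Real.rpow_one, Real.mul_rpow (by norm_num) hdK.le]
  ring

end data

lemma adm_real {q r : ℝ≥0∞} (hq : 2 < q) (hqt : q ≠ ∞) (hr2 : 2 ≤ r)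
    (hadm : 2 / q = 2 * (1 / 2 - 1 / r)) : r ≠ ∞ ∧ 2 < r.toReal ∧ 2 < q.toReal ∧
      1 - 2 / r.toReal = 2 / q.toReal := by
  have hQ : 2 < q.toReal := by
    have := (ENNReal.toReal_lt_toReal (by norm_num) hqt).2 hq
    simpa using this
  have hle : 1 / r ≤ 1 / 2 := by
    simpa using ENNReal.inv_le_inv.2 hr2
  have h := congrArg ENNReal.toReal hadm
  rw [ENNReal.toReal_div, ENNReal.toReal_mul, ENNReal.toReal_sub_of_le hle (by simp),
    ENNReal.toReal_div, ENNReal.toReal_div] at h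
  simp only [ENNReal.toReal_ofNat, ENNReal.toReal_one] at h
  have hrt : r ≠ ∞ := by
    rintro rfl
    simp at h
    rw [div_eq_iff (by linarith)] at h
    linarith
  have hR : 2 ≤ r.toReal := by
    have := (ENNReal.toReal_le_toReal (by norm_num) hrt).2 hr2
    simpa using this
  have h2 : 1 - 2 / r.toReal = 2 / q.toReal := by
    rw [h]
    ring
  refine ⟨hrt, lt_of_le_of_ne hR ?_, hQ, h2⟩
  intro h3
  rw [← h3] at h2
  have : 0 < 2 / q.toReal := by positivity
  linarith

lemma adm_top {r : ℝ≥0∞} (hr2 : 2 ≤ r) (hadm : 2 / ∞ = 2 * (1 / 2 - 1 / r)) : r = 2 := by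
  refine le_antisymm ?_ hr2
  rw [ENNReal.div_top] at hadm
  have h1 : 1 / 2 - 1 / r = 0 := by
    rcases mul_eq_zero.1 hadm.symm with h | h
    · norm_num at h
    · exact h
  have h2 : 1 / 2 ≤ 1 / r := tsub_eq_zero_iff_le.1 h1
  simpa using h2


end part14

theorem strichartz_2d (χ : ℝ → ℝ) (hχ : ContDiff ℝ (⊤ : ℕ∞) χ)
    (hsupp : Function.support χ ⊆ Set.Ioo (-2 : ℝ) 2)
    (hone : ∀ s ∈ Set.Icc (-1 : ℝ) 1, χ s = 1)
    (q r : ℝ≥0∞) (hq : 2 < q) (hr2 : 2 ≤ r)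
    (hadm : 2 / q = 2 * (1 / 2 - 1 / r)) :
    ∃ C : ℝ, 0 < C ∧
      ∀ μ : ℝ, 0 < μ → μ ≤ 1 → ∀ lam : ℝ, 0 < lam → ∀ f : 𝓢(E2, ℂ),
        timeNorm q (fun t => eLpNorm (prop2 μ t (proj2 χ lam ⇑f)) r volume)
          ≤ ENNReal.ofReal
              (C * (μ ^ (-(1 : ℝ) / 2) *
                  jap (Real.sqrt μ * lam) ^ ((3 : ℝ) / 2)) ^ ((1 : ℝ) / 2 - 1 / r.toReal)) *
            eLpNorm (proj2 χ lam ⇑f) 2 volume := by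
  have hχc : Continuous χ := hχ.continuous
  rcases eq_or_ne q ∞ with rfl | hqt
  · obtain rfl := adm_top hr2 hadm
    refine ⟨1, one_pos, fun μ hμ _ lam hl f => ?_⟩
    have hf : Integrable (⇑f) := f.integrable
    unfold timeNorm
    rw [if_pos rfl]
    have e : (1 : ℝ) / 2 - 1 / (2 : ℝ≥0∞).toReal = 0 := by norm_num
    rw [e, Real.rpow_zero, mul_one, ENNReal.ofReal_one, one_mul]
    refine essSup_le_of_ae_le _ (Filter.Eventually.of_forall fun t => ?_)
    refine (prop_le hl hχc hsupp hone hf 2 μ t).trans (le_of_eq ?_)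
    rw [uu_L2 hl hχc hsupp hone hf, proj_L2 hl hχc hsupp hone hf]
  · obtain ⟨hrt, hr, hq2, hqr⟩ := adm_real hq hqt hr2 hadm
    have hKp := K1_pos hq2 hr
    refine ⟨K1 q.toReal r.toReal ^ (1 / 2 : ℝ) * 2400000 ^ (1 / q.toReal), by positivity,
      fun μ hμ _ lam hl f => ?_⟩
    have hf : Integrable (⇑f) := f.integrable
    have h := main_fin hχc hsupp hone hr hq2 hqr hμ hl hf
    rw [ENNReal.ofReal_toReal hrt] at h
    unfold timeNorm
    rw [if_neg hqt, dK_eq hμ]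
    have e : (1 : ℝ) / 2 - 1 / r.toReal = 1 / q.toReal := by
      have e2 : (1 : ℝ) / 2 - 1 / r.toReal = (1 - 2 / r.toReal) / 2 := by ring
      rw [e2, hqr]
      ring
    rw [e]
    exact h
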